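/- (Main result: 3D reflection equation) The pair (𝒮, 𝒥) satisfies the Isaev–Kulish 3D reflection equation: on F^{⊗9}, 𝒮₄₅₆ 𝒮₄₈₉ 𝒥₃₅₇₉ 𝒮₂₆₉ 𝒮₂₅₈ 𝒥₁₆₇₈ 𝒥₁₂₃₄ = 𝒥₁₂₃₄ 𝒥₁₆₇₈ 𝒮₂₅₈ 𝒮₂₆₉ 𝒥₃₅₇₉ 𝒮₄₈₉ 𝒮₄₅₆, where 𝒮_{abc} denotes the operator 𝒮 acting on the tensor factors in positions a,b,c and 𝒥_{abcd} denotes the operator 𝒥 acting on the tensor factors in positions a,b,c,d, each acting as the identity on the remaining factors. -/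

import Mathlib

open TensorProduct

noncomputable section

abbrev Fq : Type := RatFunc ℚ

def q : Fq := RatFunc.X

abbrev F : Type := ℕ →₀ Fq

def ket (m : ℕ) : F := Finsupp.single m 1

/-- Linear operator on the Fock space from its action on the basis. -/
def opOf (v : ℕ → F) : F →ₗ[Fq] F := Finsupp.lift F Fq ℕ v

/-- q²-oscillator K -/
def K2 : F →ₗ[Fq] F := opOf fun m => q ^ (2 * m) • ket m
/-- q²-oscillator A⁺ -/
def Ap : F →ₗ[Fq] F := opOf fun m => ket (m + 1)
/-- q²-oscillator A⁻ -/
def Am : F →ₗ[Fq] F := opOf fun m => (1 - q ^ (4 * m)) • ket (m - 1)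
/-- q-oscillator k -/
def kk : F →ₗ[Fq] F := opOf fun m => q ^ m • ket m
/-- q-oscillator a⁺ -/
def ap : F →ₗ[Fq] F := opOf fun m => ket (m + 1)
/-- q-oscillator a⁻ -/
def am : F →ₗ[Fq] F := opOf fun m => (1 - q ^ (2 * m)) • ket (m - 1)

def pi1 (α β μ ν κ σ : Fq) : Matrix (Fin 7) (Fin 7) (F →ₗ[Fq] F) :=
  !![μ • Am, α • K2, 0, 0, 0, 0, 0;
     β • K2, ν • Ap, 0, 0, 0, 0, 0;
     0, 0, κ • LinearMap.id, 0, 0, 0, 0;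
     0, 0, 0, σ • LinearMap.id, 0, 0, 0;
     0, 0, 0, 0, κ⁻¹ • LinearMap.id, 0, 0;
     0, 0, 0, 0, 0, ν⁻¹ • Am, (q ^ 2 * β⁻¹) • K2;
     0, 0, 0, 0, 0, (q ^ 2 * α⁻¹) • K2, μ⁻¹ • Ap]

def pi2 (α β μ ν κ σ : Fq) : Matrix (Fin 7) (Fin 7) (F →ₗ[Fq] F) :=
  !![κ • LinearMap.id, 0, 0, 0, 0, 0, 0;
     0, μ • Am, α • K2, 0, 0, 0, 0;
     0, β • K2, ν • Ap, 0, 0, 0, 0;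
     0, 0, 0, σ • LinearMap.id, 0, 0, 0;
     0, 0, 0, 0, ν⁻¹ • Am, (q ^ 2 * β⁻¹) • K2, 0;
     0, 0, 0, 0, (q ^ 2 * α⁻¹) • K2, μ⁻¹ • Ap, 0;
     0, 0, 0, 0, 0, 0, κ⁻¹ • LinearMap.id]

def pi3 (α μ κa κb : Fq) : Matrix (Fin 7) (Fin 7) (F →ₗ[Fq] F) :=
  !![κa • LinearMap.id, 0, 0, 0, 0, 0, 0;
     0, κb • LinearMap.id, 0, 0, 0, 0, 0;
     0, 0, μ • (am ∘ₗ am), α • (kk ∘ₗ am), (-((1 + q ^ 2) * μ)⁻¹ * α ^ 2) • (kk ∘ₗ kk), 0, 0;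
     0, 0, (-(1 + q ^ 2) * α⁻¹ * μ) • (am ∘ₗ kk), am ∘ₗ ap - kk ∘ₗ kk, (-(q * μ)⁻¹ * α) • (kk ∘ₗ ap), 0, 0;
     0, 0, (-(1 + q ^ 2) * q ^ 2 * α⁻¹ ^ 2 * μ) • (kk ∘ₗ kk), ((1 + q ^ 2) * α⁻¹) • (kk ∘ₗ ap), μ⁻¹ • (ap ∘ₗ ap), 0, 0;
     0, 0, 0, 0, 0, κb⁻¹ • LinearMap.id, 0;
     0, 0, 0, 0, 0, 0, κa⁻¹ • LinearMap.id]

def rhoB : Fin 7 → ℤ := ![5, 3, 1, 0, -1, -3, -5]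

def CB : Matrix (Fin 7) (Fin 7) Fq := fun i j => if (i : ℕ) + (j : ℕ) = 6 then q ^ rhoB j else 0

/-- `(p)_n` for an integer `n`: `∏_{l=1}^{n}(1-p^l)` if `n ≥ 0`, and `0` if `n < 0`
(the latter convention makes the q-multinomial bracket below vanish, via multiplication
for a numerator index and via division by zero for a denominator index, whenever some
index is negative, as required). -/
def qfac (p : Fq) (n : ℤ) : Fq :=
  if 0 ≤ n then ∏ l ∈ Finset.range n.toNat, (1 - p ^ (l + 1)) else 0

/-- The matrix element 𝒮^{abc}_{ijk} (with λ = b - μ in the sum over λ + μ = b). -/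
def Scoef (a b c i j k : ℕ) : Fq :=
  (if i + j = a + b then 1 else 0) * (if j + k = b + c then 1 else 0) *
    ∑ μ ∈ Finset.range (b + 1),
      (-1 : Fq) ^ (b - μ) *
        q ^ (2 * (i : ℤ) * ((c : ℤ) - (j : ℤ)) + 2 * ((k : ℤ) + 1) * ((b : ℤ) - (μ : ℤ))
          + 2 * (μ : ℤ) * ((μ : ℤ) - (k : ℤ))) *
        ((qfac (q ^ 4) (i : ℤ) * qfac (q ^ 4) (j : ℤ) * qfac (q ^ 4) ((c : ℤ) + (μ : ℤ))) /
          (qfac (q ^ 4) (μ : ℤ) * qfac (q ^ 4) ((b : ℤ) - (μ : ℤ)) *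
            qfac (q ^ 4) ((i : ℤ) - (μ : ℤ)) * qfac (q ^ 4) ((j : ℤ) - ((b : ℤ) - (μ : ℤ))) *
            qfac (q ^ 4) (c : ℤ)))

/-- STATEMENT SETUP (fixed parameter choice κ₂ = σ₂ = 1, μ₂ = ν₂ = 1, α₂β₂ = -q²,
κ₃₁ = κ₃₂ = 1, μ₃ = 1): the hypotheses on the normalized bijective intertwiner Ξ. -/
def IsNormalizedIntertwiner (α₂ β₂ α₃ : Fq)
    (Ξ : F ⊗[Fq] (F ⊗[Fq] (F ⊗[Fq] F)) →ₗ[Fq] F ⊗[Fq] (F ⊗[Fq] (F ⊗[Fq] F))) : Prop :=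
  Function.Bijective Ξ ∧
  Ξ (ket 0 ⊗ₜ[Fq] (ket 0 ⊗ₜ[Fq] (ket 0 ⊗ₜ[Fq] ket 0)))
    = ket 0 ⊗ₜ[Fq] (ket 0 ⊗ₜ[Fq] (ket 0 ⊗ₜ[Fq] ket 0)) ∧
  ∀ I J : Fin 7,
    (∑ K : Fin 7, ∑ L : Fin 7, ∑ M : Fin 7,
        TensorProduct.map (pi3 α₃ 1 1 1 I K)
          (TensorProduct.map (pi2 α₂ β₂ 1 1 1 1 K L)
            (TensorProduct.map (pi3 α₃ 1 1 1 L M) (pi2 α₂ β₂ 1 1 1 1 M J)))) ∘ₗ Ξ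
      = Ξ ∘ₗ (∑ K : Fin 7, ∑ L : Fin 7, ∑ M : Fin 7,
          TensorProduct.map (pi2 α₂ β₂ 1 1 1 1 I K)
            (TensorProduct.map (pi3 α₃ 1 1 1 K L)
              (TensorProduct.map (pi2 α₂ β₂ 1 1 1 1 L M) (pi3 α₃ 1 1 1 M J))))

/-- F^{⊗9}, identified with `(Fin 9 → ℕ) →₀ Fq` via its standard basis
|m₁⟩⊗⋯⊗|m₉⟩ ↔ single (m₁,…,m₉). -/
abbrev W9 : Type := (Fin 9 → ℕ) →₀ Fq

def upd3' (f : Fin 9 → ℕ) (p1 p2 p3 : Fin 9) (a b c : ℕ) : Fin 9 → ℕ :=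
  Function.update (Function.update (Function.update f p1 a) p2 b) p3 c

def upd4' (f : Fin 9 → ℕ) (p1 p2 p3 p4 : Fin 9) (a b c d : ℕ) : Fin 9 → ℕ :=
  Function.update (Function.update (Function.update (Function.update f p1 a) p2 b) p3 c) p4 d

/-- The operator 𝒮 acting on the tensor factors in positions p1, p2, p3 of F^{⊗9}
and as the identity on the other factors. -/
def S9 (p1 p2 p3 : Fin 9) : W9 →ₗ[Fq] W9 :=
  Finsupp.lift W9 Fq (Fin 9 → ℕ) fun f =>
    ∑ᶠ a : ℕ, ∑ᶠ b : ℕ, ∑ᶠ c : ℕ,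
      Scoef a b c (f p1) (f p2) (f p3) • Finsupp.single (upd3' f p1 p2 p3 a b c) 1

/-- The operator 𝒥 (with matrix elements Jc) acting on the tensor factors in positions
p1, p2, p3, p4 of F^{⊗9} and as the identity on the other factors. -/
def J9 (Jc : ℕ → ℕ → ℕ → ℕ → ℕ → ℕ → ℕ → ℕ → Fq) (p1 p2 p3 p4 : Fin 9) : W9 →ₗ[Fq] W9 :=
  Finsupp.lift W9 Fq (Fin 9 → ℕ) fun f =>
    ∑ᶠ a : ℕ, ∑ᶠ b : ℕ, ∑ᶠ c : ℕ, ∑ᶠ d : ℕ,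
      Jc a b c d (f p1) (f p2) (f p3) (f p4) • Finsupp.single (upd4' f p1 p2 p3 p4 a b c d) 1

set_option linter.unusedSimpArgs false

instance (priority := 10000) natAlgFq : Algebra ℕ Fq := Semiring.toNatAlgebra
instance (priority := 10000) intAlgFq : Algebra ℤ Fq := Ring.toIntAlgebra _

/-- Fock space over an index set. -/
abbrev WW (n : ℕ) : Type := (Fin n → ℕ) →₀ Fq

/-- basis vector -/
abbrev bs {n : ℕ} (f : Fin n → ℕ) : WW n := Finsupp.single f 1

theorem ext_bs {n : ℕ} {X Y : Module.End Fq (WW n)} (h : ∀ f, X (bs f) = Y (bs f)) : X = Y := by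
  apply Finsupp.lhom_ext'
  intro f
  apply LinearMap.ext_ring
  simpa using h f

theorem ext_ket {M : Type*} [AddCommMonoid M] [Module Fq M] {X Y : F →ₗ[Fq] M}
    (h : ∀ m, X (ket m) = Y (ket m)) : X = Y := by
  apply Finsupp.lhom_ext'
  intro f
  apply LinearMap.ext_ring
  simpa [ket] using h f

/-- one-site embedding -/
def emb {n : ℕ} (p : Fin n) (f : Fin n → ℕ) : F →ₗ[Fq] WW n :=
  Finsupp.lmapDomain Fq Fq (fun m => Function.update f p m)

theorem emb_ket {n : ℕ} (p : Fin n) (f : Fin n → ℕ) (m : ℕ) :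
    emb p f (ket m) = bs (Function.update f p m) := by
  simp [emb, ket, bs]

/-- one-site operator -/
def atp {n : ℕ} (p : Fin n) (X : F →ₗ[Fq] F) : Module.End Fq (WW n) :=
  Finsupp.lift (WW n) Fq (Fin n → ℕ) fun f => emb p f (X (ket (f p)))

theorem atp_bs {n : ℕ} (p : Fin n) (X : F →ₗ[Fq] F) (f : Fin n → ℕ) :
    atp p X (bs f) = emb p f (X (ket (f p))) := by
  simp [atp, bs]

theorem emb_update {n : ℕ} (p : Fin n) (f : Fin n → ℕ) (m : ℕ) :
    emb p (Function.update f p m) = emb p f := by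
  apply ext_ket
  intro k
  simp [emb_ket]

theorem atp_emb {n : ℕ} (p : Fin n) (X : F →ₗ[Fq] F) (f : Fin n → ℕ) (v : F) :
    atp p X (emb p f v) = emb p f (X v) := by
  have : (atp p X) ∘ₗ (emb p f) = (emb p f) ∘ₗ X := by
    apply ext_ket
    intro m
    simp [emb_ket, atp_bs, emb_update]
  exact LinearMap.congr_fun this v

theorem atp_mul {n : ℕ} (p : Fin n) (X Y : F →ₗ[Fq] F) :
    atp p (X ∘ₗ Y) = atp p X * atp p Y := by
  apply ext_bs; intro f
  simp [Module.End.mul_apply, atp_bs, atp_emb]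

theorem atp_one {n : ℕ} (p : Fin n) : atp p (LinearMap.id : F →ₗ[Fq] F) = 1 := by
  apply ext_bs; intro f
  simp [atp_bs, emb_ket]

theorem atp_zero {n : ℕ} (p : Fin n) : atp p (0 : F →ₗ[Fq] F) = 0 := by
  apply ext_bs; intro f
  simp [atp_bs]

theorem atp_add {n : ℕ} (p : Fin n) (X Y : F →ₗ[Fq] F) :
    atp p (X + Y) = atp p X + atp p Y := by
  apply ext_bs; intro f
  simp [atp_bs]

theorem atp_sub {n : ℕ} (p : Fin n) (X Y : F →ₗ[Fq] F) :
    atp p (X - Y) = atp p X - atp p Y := by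
  apply ext_bs; intro f
  simp [atp_bs]

theorem atp_smul {n : ℕ} (p : Fin n) (c : Fq) (X : F →ₗ[Fq] F) :
    atp p (c • X) = c • atp p X := by
  apply ext_bs; intro f
  simp [atp_bs]

/-- bundled version of `atp` -/
def atpL {n : ℕ} (p : Fin n) : (F →ₗ[Fq] F) →+ Module.End Fq (WW n) where
  toFun := atp p
  map_zero' := atp_zero p
  map_add' := atp_add p

theorem atp_sum {n : ℕ} (p : Fin n) {ι : Type*} (s : Finset ι) (X : ι → (F →ₗ[Fq] F)) :
    atp p (∑ i ∈ s, X i) = ∑ i ∈ s, atp p (X i) :=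
  map_sum (atpL p) X s

theorem swap_sum {α β γ : Type*} (u : α →₀ Fq) (w : β →₀ Fq) (φ : α → β → γ) :
    u.sum (fun a x => x • (w.sum fun b y => y • (Finsupp.single (φ a b) (1 : Fq))))
    = w.sum (fun b y => y • (u.sum fun a x => x • (Finsupp.single (φ a b) (1 : Fq)))) := by
  simp only [Finsupp.sum, Finset.smul_sum]
  rw [Finset.sum_comm]
  refine Finset.sum_congr rfl fun b _ => Finset.sum_congr rfl fun a _ => ?_
  rw [smul_comm]

theorem lift_expand {α : Type*} {M : Type*} [AddCommMonoid M] [Module Fq M]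
    (L : (α →₀ Fq) →ₗ[Fq] M) (u : α →₀ Fq) :
    L u = u.sum (fun a x => x • L (Finsupp.single a 1)) := by
  conv_lhs => rw [← Finsupp.sum_single u]
  rw [Finsupp.sum, map_sum]
  refine Finset.sum_congr rfl fun a _ => ?_
  change L _ = u a • L _
  rw [← map_smul]; simp

/-- multi-site operator -/
def Op {m n : ℕ} (e : Fin m → Fin n) (Θ : Module.End Fq (WW m)) : Module.End Fq (WW n) :=
  Finsupp.lift (WW n) Fq (Fin n → ℕ) fun f =>
    Finsupp.lmapDomain Fq Fq (fun g => Function.extend e g f) (Θ (bs (f ∘ e)))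

theorem Op_bs {m n : ℕ} (e : Fin m → Fin n) (Θ : Module.End Fq (WW m)) (f : Fin n → ℕ) :
    Op e Θ (bs f) = Finsupp.lmapDomain Fq Fq (fun g => Function.extend e g f) (Θ (bs (f ∘ e))) := by
  simp [Op, bs]

theorem extend_extend {m n : ℕ} {e : Fin m → Fin n} (he : Function.Injective e)
    (h g : Fin m → ℕ) (f : Fin n → ℕ) :
    Function.extend e h (Function.extend e g f) = Function.extend e h f := by
  funext p
  by_cases hp : ∃ a, e a = p
  · obtain ⟨a, rfl⟩ := hp
    simp [he.extend_apply]
  · rw [Function.extend_apply' _ _ _ hp, Function.extend_apply' _ _ _ hp,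
      Function.extend_apply' _ _ _ hp]

theorem extend_update_out {m n : ℕ} {e : Fin m → Fin n} (he : Function.Injective e)
    (g : Fin m → ℕ) (f : Fin n → ℕ) (p : Fin n) (hp : ∀ a, e a ≠ p) (k : ℕ) :
    Function.extend e g (Function.update f p k) = Function.update (Function.extend e g f) p k := by
  funext r
  by_cases hr : ∃ a, e a = r
  · obtain ⟨a, rfl⟩ := hr
    simp [he.extend_apply, Function.update_of_ne (hp a)]
  · rw [Function.extend_apply' _ _ _ hr]
    by_cases h : r = p
    · subst h; simp
    · rw [Function.update_of_ne h, Function.update_of_ne h, Function.extend_apply' _ _ _ hr]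

theorem extend_update_in {m n : ℕ} {e : Fin m → Fin n} (he : Function.Injective e)
    (f : Fin n → ℕ) (i : Fin m) (k : ℕ) :
    Function.extend e (Function.update (f ∘ e) i k) f = Function.update f (e i) k := by
  funext r
  by_cases hr : ∃ a, e a = r
  · obtain ⟨a, rfl⟩ := hr
    rw [he.extend_apply]
    by_cases h : a = i
    · subst h; simp
    · rw [Function.update_of_ne h, Function.update_of_ne (fun h' => h (he h'))]; rfl
  · rw [Function.extend_apply' _ _ _ hr, Function.update_of_ne]
    rintro rfl; exact hr ⟨i, rfl⟩

theorem Op_emb {m n : ℕ} {e : Fin m → Fin n} (he : Function.Injective e)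
    (Θ : Module.End Fq (WW m)) (f : Fin n → ℕ) (v : WW m) :
    Op e Θ (Finsupp.lmapDomain Fq Fq (fun g => Function.extend e g f) v)
      = Finsupp.lmapDomain Fq Fq (fun g => Function.extend e g f) (Θ v) := by
  have : (Op e Θ) ∘ₗ (Finsupp.lmapDomain Fq Fq (fun g => Function.extend e g f))
      = (Finsupp.lmapDomain Fq Fq (fun g => Function.extend e g f)) ∘ₗ Θ := by
    apply Finsupp.lhom_ext'
    intro g
    apply LinearMap.ext_ring
    have h1 : (Finsupp.lmapDomain Fq Fq (fun g => Function.extend e g f)) (bs g)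
      = bs (Function.extend e g f) := by simp [bs]
    have h2 : (Function.extend e g f) ∘ e = g := by funext a; simp [he.extend_apply]
    change Op e Θ (Finsupp.lmapDomain Fq Fq (fun g => Function.extend e g f) (bs g)) = _
    rw [h1, Op_bs, h2]
    simp only [extend_extend he]
    rfl
  exact LinearMap.congr_fun this v

theorem Op_mul {m n : ℕ} {e : Fin m → Fin n} (he : Function.Injective e)
    (Θ Θ' : Module.End Fq (WW m)) : Op e (Θ * Θ') = Op e Θ * Op e Θ' := by
  apply ext_bs; intro f
  rw [Module.End.mul_apply, Op_bs, Op_bs, Op_emb he]; rfl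

theorem Op_add {m n : ℕ} (e : Fin m → Fin n)
    (Θ Θ' : Module.End Fq (WW m)) : Op e (Θ + Θ') = Op e Θ + Op e Θ' := by
  apply ext_bs; intro f
  rw [LinearMap.add_apply, Op_bs, Op_bs, Op_bs, LinearMap.add_apply, map_add]

theorem Op_zero {m n : ℕ} (e : Fin m → Fin n) : Op e (0 : Module.End Fq (WW m)) = 0 := by
  apply ext_bs; intro f
  simp [Op_bs]

theorem Op_sum {m n : ℕ} (e : Fin m → Fin n) {ι : Type*} (s : Finset ι)
    (X : ι → Module.End Fq (WW m)) :
    Op e (∑ i ∈ s, X i) = ∑ i ∈ s, Op e (X i) :=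
  map_sum (⟨⟨Op e, Op_zero e⟩, Op_add e⟩ : Module.End Fq (WW m) →+ Module.End Fq (WW n)) X s

theorem Op_atp {m n : ℕ} {e : Fin m → Fin n} (he : Function.Injective e)
    (i : Fin m) (X : F →ₗ[Fq] F) : Op e (atp i X) = atp (e i) X := by
  apply ext_bs; intro f
  rw [Op_bs, atp_bs, atp_bs, emb, emb]
  simp only [Finsupp.lmapDomain_apply, ← Finsupp.mapDomain_comp, Function.comp_def]
  congr 1
  funext k
  exact extend_update_in he f i k

theorem Op_comm_atp {m n : ℕ} {e : Fin m → Fin n} (he : Function.Injective e)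
    (Θ : Module.End Fq (WW m)) (p : Fin n) (hp : ∀ a, e a ≠ p) (X : F →ₗ[Fq] F) :
    atp p X * Op e Θ = Op e Θ * atp p X := by
  apply ext_bs; intro f
  rw [Module.End.mul_apply, Module.End.mul_apply, Op_bs, atp_bs]
  set u := Θ (bs (f ∘ e)) with hu
  set w := X (ket (f p)) with hw
  have h1 := lift_expand ((atp p X) ∘ₗ (Finsupp.lmapDomain Fq Fq (fun g => Function.extend e g f))) u
  have h2 := lift_expand ((Op e Θ) ∘ₗ (emb p f)) w
  rw [LinearMap.comp_apply] at h1 h2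
  rw [h1, h2]
  have e1 : ∀ g : Fin m → ℕ, ((atp p X) ∘ₗ (Finsupp.lmapDomain Fq Fq (fun g => Function.extend e g f)))
      (Finsupp.single g 1)
      = w.sum fun k y => y • Finsupp.single (Function.update (Function.extend e g f) p k) 1 := by
    intro g
    have := atp_bs p X (Function.extend e g f)
    rw [Function.extend_apply' _ _ _ (by rintro ⟨a, ha⟩; exact hp a ha), ← hw] at this
    simp only [LinearMap.comp_apply, Finsupp.lmapDomain_apply, Finsupp.mapDomain_single]
    rw [this, lift_expand (emb p _) w]
    refine Finset.sum_congr rfl fun k _ => ?_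
    change _ • emb p _ (ket k) = _
    rw [emb_ket]
  have e2 : ∀ k : ℕ, ((Op e Θ) ∘ₗ (emb p f)) (Finsupp.single k 1)
      = u.sum fun g x => x • Finsupp.single (Function.update (Function.extend e g f) p k) 1 := by
    intro k
    rw [LinearMap.comp_apply]
    change Op e Θ (emb p f (ket k)) = _
    have h3 : (Function.update f p k) ∘ e = f ∘ e := by
      funext a; simp [Function.update_of_ne (hp a)]
    rw [emb_ket, Op_bs, h3, ← hu, lift_expand (Finsupp.lmapDomain Fq Fq _) u]
    simp only [Finsupp.lmapDomain_apply, Finsupp.mapDomain_single]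
    simp only [extend_update_out he _ f p hp k]
  simp only [e1, e2]
  exact swap_sum u w _

theorem atp_comm {n : ℕ} {p r : Fin n} (h : p ≠ r) (X Y : F →ₗ[Fq] F) :
    atp p X * atp r Y = atp r Y * atp p X := by
  have he : Function.Injective (fun _ : Fin 1 => r) := fun a b _ => Subsingleton.elim _ _
  have := Op_comm_atp he (atp 0 Y) p (fun _ => h.symm) X
  rwa [Op_atp he] at this


set_option linter.unusedSimpArgs false

theorem q_ne : q ≠ 0 := RatFunc.X_ne_zero

theorem q_pow_ne_one {n : ℕ} (hn : n ≠ 0) : q ^ n ≠ 1 := by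
  intro h
  have h2 : algebraMap (Polynomial ℚ) Fq (Polynomial.X ^ n) = algebraMap (Polynomial ℚ) Fq 1 := by
    rw [map_pow, RatFunc.algebraMap_X, map_one]; exact h
  have h3 := RatFunc.algebraMap_injective ℚ h2
  have := congrArg Polynomial.natDegree h3
  simp at this
  exact hn this

theorem one_sub_q_ne {n : ℕ} (hn : n ≠ 0) : 1 - q ^ n ≠ 0 :=
  sub_ne_zero.mpr (q_pow_ne_one hn).symm

theorem one_add_q_ne : 1 + q ^ 2 ≠ 0 := by
  intro h
  apply one_sub_q_ne (n := 4) (by norm_num)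
  linear_combination (1 - q ^ 2) * h

theorem opOf_ket (v : ℕ → F) (m : ℕ) : opOf v (ket m) = v m := by
  simp [opOf, ket]

theorem K2_ket (m : ℕ) : K2 (ket m) = q ^ (2 * m) • ket m := opOf_ket _ _
theorem Ap_ket (m : ℕ) : Ap (ket m) = ket (m + 1) := opOf_ket _ _
theorem Am_ket (m : ℕ) : Am (ket m) = (1 - q ^ (4 * m)) • ket (m - 1) := opOf_ket _ _
theorem kk_ket (m : ℕ) : kk (ket m) = q ^ m • ket m := opOf_ket _ _
theorem ap_ket (m : ℕ) : ap (ket m) = ket (m + 1) := opOf_ket _ _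
theorem am_ket (m : ℕ) : am (ket m) = (1 - q ^ (2 * m)) • ket (m - 1) := opOf_ket _ _

/-- weights for orthogonality -/
def gw : Fin 7 → Fq := ![1, q ^ 2, q ^ 4, q ^ 5, q ^ 6, q ^ 8, q ^ 10]

theorem gw_ne (i : Fin 7) : gw i ≠ 0 := by
  fin_cases i <;> simp [gw, q_ne]

/-- orthogonality relation -/
def Orth {R : Type*} [Ring R] [Algebra Fq R] (T : Matrix (Fin 7) (Fin 7) R) : Prop :=
  ∀ b e : Fin 7, ∑ c : Fin 7, gw c • (T c b * T (Fin.rev c) e) = if e = Fin.rev b then gw b • 1 else 0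

theorem Orth.mul {R : Type*} [Ring R] [Algebra Fq R] {A B : Matrix (Fin 7) (Fin 7) R}
    (hA : Orth A) (hB : Orth B) (hc : ∀ i j k l, A i j * B k l = B k l * A i j) : Orth (A * B) := by
  intro b e
  have hA' : ∀ x y : Fin 7, ∑ c : Fin 7, gw c • (A c x * A (Fin.rev c) y)
    = if y = Fin.rev x then gw x • (1 : R) else 0 := hA
  have key : ∑ c : Fin 7, gw c • ((A * B) c b * (A * B) (Fin.rev c) e)
     = ∑ x : Fin 7, ∑ y : Fin 7, (∑ c : Fin 7, gw c • (A c x * A (Fin.rev c) y)) * (B x b * B y e) := by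
    simp only [Matrix.mul_apply, Finset.sum_mul, Finset.mul_sum, Finset.smul_sum]
    refine (Finset.sum_congr rfl fun c _ => Finset.sum_comm).trans ?_
    rw [Finset.sum_comm]
    refine Finset.sum_congr rfl fun x _ => ?_
    rw [Finset.sum_comm]
    refine Finset.sum_congr rfl fun y _ => Finset.sum_congr rfl fun c _ => ?_
    rw [smul_mul_assoc]
    congr 1
    rw [mul_assoc (A c x), mul_assoc (A c x), ← mul_assoc (B x b), ← hc, mul_assoc]
  rw [key]
  have h2 : ∀ x : Fin 7, ∑ y : Fin 7, (∑ c : Fin 7, gw c • (A c x * A (Fin.rev c) y)) * (B x b * B y e)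
      = gw x • (B x b * B (Fin.rev x) e) := by
    intro x
    rw [Finset.sum_congr rfl (fun y _ => by rw [hA' x y])]
    simp
  simp only [h2]
  exact hB b e

/-- the π₁ matrix -/
abbrev P1 (α β : Fq) := pi1 α β 1 1 1 1
/-- the π₂ matrix -/
abbrev P2 (α β : Fq) := pi2 α β 1 1 1 1
/-- the π₃ matrix -/
abbrev P3 (α : Fq) := pi3 α 1 1 1

theorem P1_e (α β : Fq) : P1 α β 0 0 = Am ∧ P1 α β 0 1 = α • K2 ∧ P1 α β 0 2 = 0 ∧ P1 α β 0 3 = 0 ∧ P1 α β 0 4 = 0 ∧ P1 α β 0 5 = 0 ∧ P1 α β 0 6 = 0 ∧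
    P1 α β 1 0 = β • K2 ∧ P1 α β 1 1 = Ap ∧ P1 α β 1 2 = 0 ∧ P1 α β 1 3 = 0 ∧ P1 α β 1 4 = 0 ∧ P1 α β 1 5 = 0 ∧ P1 α β 1 6 = 0 ∧
    P1 α β 2 0 = 0 ∧ P1 α β 2 1 = 0 ∧ P1 α β 2 2 = LinearMap.id ∧ P1 α β 2 3 = 0 ∧ P1 α β 2 4 = 0 ∧ P1 α β 2 5 = 0 ∧ P1 α β 2 6 = 0 ∧
    P1 α β 3 0 = 0 ∧ P1 α β 3 1 = 0 ∧ P1 α β 3 2 = 0 ∧ P1 α β 3 3 = LinearMap.id ∧ P1 α β 3 4 = 0 ∧ P1 α β 3 5 = 0 ∧ P1 α β 3 6 = 0 ∧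
    P1 α β 4 0 = 0 ∧ P1 α β 4 1 = 0 ∧ P1 α β 4 2 = 0 ∧ P1 α β 4 3 = 0 ∧ P1 α β 4 4 = LinearMap.id ∧ P1 α β 4 5 = 0 ∧ P1 α β 4 6 = 0 ∧
    P1 α β 5 0 = 0 ∧ P1 α β 5 1 = 0 ∧ P1 α β 5 2 = 0 ∧ P1 α β 5 3 = 0 ∧ P1 α β 5 4 = 0 ∧ P1 α β 5 5 = Am ∧ P1 α β 5 6 = (q ^ 2 * β⁻¹) • K2 ∧
    P1 α β 6 0 = 0 ∧ P1 α β 6 1 = 0 ∧ P1 α β 6 2 = 0 ∧ P1 α β 6 3 = 0 ∧ P1 α β 6 4 = 0 ∧ P1 α β 6 5 = (q ^ 2 * α⁻¹) • K2 ∧ P1 α β 6 6 = Ap := by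
  simp only [P1, pi1, inv_one, one_smul]
  refine ⟨?_, ?_, ?_, ?_, ?_, ?_, ?_, ?_, ?_, ?_, ?_, ?_, ?_, ?_, ?_, ?_, ?_, ?_, ?_, ?_, ?_, ?_, ?_, ?_, ?_,
    ?_, ?_, ?_, ?_, ?_, ?_, ?_, ?_, ?_, ?_, ?_, ?_, ?_, ?_, ?_, ?_, ?_, ?_, ?_, ?_, ?_, ?_, ?_, ?_⟩ <;> rfl

theorem P2_e (α β : Fq) : P2 α β 0 0 = LinearMap.id ∧ P2 α β 0 1 = 0 ∧ P2 α β 0 2 = 0 ∧ P2 α β 0 3 = 0 ∧ P2 α β 0 4 = 0 ∧ P2 α β 0 5 = 0 ∧ P2 α β 0 6 = 0 ∧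
    P2 α β 1 0 = 0 ∧ P2 α β 1 1 = Am ∧ P2 α β 1 2 = α • K2 ∧ P2 α β 1 3 = 0 ∧ P2 α β 1 4 = 0 ∧ P2 α β 1 5 = 0 ∧ P2 α β 1 6 = 0 ∧
    P2 α β 2 0 = 0 ∧ P2 α β 2 1 = β • K2 ∧ P2 α β 2 2 = Ap ∧ P2 α β 2 3 = 0 ∧ P2 α β 2 4 = 0 ∧ P2 α β 2 5 = 0 ∧ P2 α β 2 6 = 0 ∧
    P2 α β 3 0 = 0 ∧ P2 α β 3 1 = 0 ∧ P2 α β 3 2 = 0 ∧ P2 α β 3 3 = LinearMap.id ∧ P2 α β 3 4 = 0 ∧ P2 α β 3 5 = 0 ∧ P2 α β 3 6 = 0 ∧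
    P2 α β 4 0 = 0 ∧ P2 α β 4 1 = 0 ∧ P2 α β 4 2 = 0 ∧ P2 α β 4 3 = 0 ∧ P2 α β 4 4 = Am ∧ P2 α β 4 5 = (q ^ 2 * β⁻¹) • K2 ∧ P2 α β 4 6 = 0 ∧
    P2 α β 5 0 = 0 ∧ P2 α β 5 1 = 0 ∧ P2 α β 5 2 = 0 ∧ P2 α β 5 3 = 0 ∧ P2 α β 5 4 = (q ^ 2 * α⁻¹) • K2 ∧ P2 α β 5 5 = Ap ∧ P2 α β 5 6 = 0 ∧
    P2 α β 6 0 = 0 ∧ P2 α β 6 1 = 0 ∧ P2 α β 6 2 = 0 ∧ P2 α β 6 3 = 0 ∧ P2 α β 6 4 = 0 ∧ P2 α β 6 5 = 0 ∧ P2 α β 6 6 = LinearMap.id := by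
  simp only [P2, pi2, inv_one, one_smul]
  refine ⟨?_, ?_, ?_, ?_, ?_, ?_, ?_, ?_, ?_, ?_, ?_, ?_, ?_, ?_, ?_, ?_, ?_, ?_, ?_, ?_, ?_, ?_, ?_, ?_, ?_,
    ?_, ?_, ?_, ?_, ?_, ?_, ?_, ?_, ?_, ?_, ?_, ?_, ?_, ?_, ?_, ?_, ?_, ?_, ?_, ?_, ?_, ?_, ?_, ?_⟩ <;> rfl

theorem P3_e (α : Fq) : P3 α 0 0 = LinearMap.id ∧ P3 α 0 1 = 0 ∧ P3 α 0 2 = 0 ∧ P3 α 0 3 = 0 ∧ P3 α 0 4 = 0 ∧ P3 α 0 5 = 0 ∧ P3 α 0 6 = 0 ∧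
    P3 α 1 0 = 0 ∧ P3 α 1 1 = LinearMap.id ∧ P3 α 1 2 = 0 ∧ P3 α 1 3 = 0 ∧ P3 α 1 4 = 0 ∧ P3 α 1 5 = 0 ∧ P3 α 1 6 = 0 ∧
    P3 α 2 0 = 0 ∧ P3 α 2 1 = 0 ∧ P3 α 2 2 = am ∘ₗ am ∧ P3 α 2 3 = α • (kk ∘ₗ am) ∧ P3 α 2 4 = (-(1 + q ^ 2)⁻¹ * α ^ 2) • (kk ∘ₗ kk) ∧ P3 α 2 5 = 0 ∧ P3 α 2 6 = 0 ∧
    P3 α 3 0 = 0 ∧ P3 α 3 1 = 0 ∧ P3 α 3 2 = (-(1 + q ^ 2) * α⁻¹) • (am ∘ₗ kk) ∧ P3 α 3 3 = am ∘ₗ ap - kk ∘ₗ kk ∧ P3 α 3 4 = (-q⁻¹ * α) • (kk ∘ₗ ap) ∧ P3 α 3 5 = 0 ∧ P3 α 3 6 = 0 ∧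
    P3 α 4 0 = 0 ∧ P3 α 4 1 = 0 ∧ P3 α 4 2 = (-(1 + q ^ 2) * q ^ 2 * α⁻¹ ^ 2) • (kk ∘ₗ kk) ∧ P3 α 4 3 = ((1 + q ^ 2) * α⁻¹) • (kk ∘ₗ ap) ∧ P3 α 4 4 = ap ∘ₗ ap ∧ P3 α 4 5 = 0 ∧ P3 α 4 6 = 0 ∧
    P3 α 5 0 = 0 ∧ P3 α 5 1 = 0 ∧ P3 α 5 2 = 0 ∧ P3 α 5 3 = 0 ∧ P3 α 5 4 = 0 ∧ P3 α 5 5 = LinearMap.id ∧ P3 α 5 6 = 0 ∧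
    P3 α 6 0 = 0 ∧ P3 α 6 1 = 0 ∧ P3 α 6 2 = 0 ∧ P3 α 6 3 = 0 ∧ P3 α 6 4 = 0 ∧ P3 α 6 5 = 0 ∧ P3 α 6 6 = LinearMap.id := by
  simp only [P3, pi3, inv_one, one_smul, mul_one]
  refine ⟨?_, ?_, ?_, ?_, ?_, ?_, ?_, ?_, ?_, ?_, ?_, ?_, ?_, ?_, ?_, ?_, ?_, ?_, ?_, ?_, ?_, ?_, ?_, ?_, ?_,
    ?_, ?_, ?_, ?_, ?_, ?_, ?_, ?_, ?_, ?_, ?_, ?_, ?_, ?_, ?_, ?_, ?_, ?_, ?_, ?_, ?_, ?_, ?_, ?_⟩ <;> rfl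


theorem forall7 {P : Fin 7 → Prop} (h0 : P 0) (h1 : P 1) (h2 : P 2) (h3 : P 3) (h4 : P 4)
    (h5 : P 5) (h6 : P 6) : ∀ i, P i := by
  intro i; fin_cases i <;> assumption

theorem orth_of {R : Type*} [Ring R] [Algebra Fq R] (T : Matrix (Fin 7) (Fin 7) R)
    (h : ∀ b e : Fin 7, T 0 b * T 6 e + q ^ 2 • (T 1 b * T 5 e) + q ^ 4 • (T 2 b * T 4 e) +
      q ^ 5 • (T 3 b * T 3 e) + q ^ 6 • (T 4 b * T 2 e) + q ^ 8 • (T 5 b * T 1 e) +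
      q ^ 10 • (T 6 b * T 0 e) = if e = Fin.rev b then gw b • 1 else 0) : Orth T := by
  intro b e
  rw [← h b e, Fin.sum_univ_seven]
  have : gw 0 = 1 := rfl
  rw [this, one_smul]
  rfl

theorem rev7 : Fin.rev (0 : Fin 7) = 6 ∧ Fin.rev (1 : Fin 7) = 5 ∧ Fin.rev (2 : Fin 7) = 4 ∧
  Fin.rev (3 : Fin 7) = 3 ∧ Fin.rev (4 : Fin 7) = 2 ∧ Fin.rev (5 : Fin 7) = 1 ∧
  Fin.rev (6 : Fin 7) = 0 := by decide

theorem gw_e : gw 0 = 1 ∧ gw 1 = q ^ 2 ∧ gw 2 = q ^ 4 ∧ gw 3 = q ^ 5 ∧ gw 4 = q ^ 6 ∧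
  gw 5 = q ^ 8 ∧ gw 6 = q ^ 10 := ⟨rfl, rfl, rfl, rfl, rfl, rfl, rfl⟩

theorem comp_id' : (LinearMap.id : F →ₗ[Fq] F) = (1 : Module.End Fq F) := rfl

section orth
variable {α β : Fq}


set_option maxHeartbeats 4000000 in
theorem orth_P1 (hα : α ≠ 0) (h : α * β = -q ^ 2) :
    Orth (R := Module.End Fq F) (P1 α β) := by
  have hb : β = -q ^ 2 * α⁻¹ := by field_simp; linear_combination h
  subst hb
  have hq := q_ne
  apply orth_of
  refine forall7 ?_ ?_ ?_ ?_ ?_ ?_ ?_ <;> refine forall7 ?_ ?_ ?_ ?_ ?_ ?_ ?_ <;>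
    simp only [P1_e, rev7, gw_e, comp_id', mul_zero, zero_mul, smul_zero, add_zero, zero_add,
      mul_one, one_smul, if_true, if_false, Fin.reduceEq] <;>
    (apply ext_ket; intro m; rcases m with _ | m) <;>
    simp only [LinearMap.add_apply, LinearMap.smul_apply, Module.End.mul_apply, K2_ket, Ap_ket,
      Am_ket, map_smul, smul_smul, Module.End.one_apply, Nat.add_sub_cancel, Nat.reduceSub, Nat.reduceAdd, pow_zero,
      sub_self, zero_smul, map_zero, smul_zero, LinearMap.zero_apply, mul_zero, zero_mul, zero_add, add_zero] <;>
    (try match_scalars) <;> first | done | ring1 | (field_simp; done) | (field_simp; ring1)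

set_option maxHeartbeats 4000000 in
theorem orth_P2 (hα : α ≠ 0) (h : α * β = -q ^ 2) :
    Orth (R := Module.End Fq F) (P2 α β) := by
  have hb : β = -q ^ 2 * α⁻¹ := by field_simp; linear_combination h
  subst hb
  have hq := q_ne
  apply orth_of
  refine forall7 ?_ ?_ ?_ ?_ ?_ ?_ ?_ <;> refine forall7 ?_ ?_ ?_ ?_ ?_ ?_ ?_ <;>
    simp only [P2_e, rev7, gw_e, comp_id', mul_zero, zero_mul, smul_zero, add_zero, zero_add,
      mul_one, one_smul, if_true, if_false, Fin.reduceEq] <;>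
    (apply ext_ket; intro m; rcases m with _ | m) <;>
    simp only [LinearMap.add_apply, LinearMap.smul_apply, Module.End.mul_apply, K2_ket, Ap_ket,
      Am_ket, map_smul, smul_smul, Module.End.one_apply, Nat.add_sub_cancel, Nat.reduceSub, Nat.reduceAdd, pow_zero,
      sub_self, zero_smul, map_zero, smul_zero, LinearMap.zero_apply, mul_zero, zero_mul, zero_add, add_zero] <;>
    (try match_scalars) <;> first | done | ring1 | (field_simp; done) | (field_simp; ring1)

set_option maxHeartbeats 4000000 in
theorem orth_P3 (hα : α ≠ 0) :
    Orth (R := Module.End Fq F) (P3 α) := by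
  have hq := q_ne
  have hr := one_add_q_ne
  apply orth_of
  refine forall7 ?_ ?_ ?_ ?_ ?_ ?_ ?_ <;> refine forall7 ?_ ?_ ?_ ?_ ?_ ?_ ?_ <;>
    simp only [P3_e, rev7, gw_e, comp_id', mul_zero, zero_mul, smul_zero, add_zero, zero_add,
      mul_one, one_smul, if_true, if_false, Fin.reduceEq] <;>
    (apply ext_ket; intro m; rcases m with _ | _ | _ | _ | m) <;>
    simp only [LinearMap.add_apply, LinearMap.sub_apply, LinearMap.smul_apply, Module.End.mul_apply, kk_ket, ap_ket,
      am_ket, map_smul, map_sub, smul_smul, Module.End.one_apply, Nat.add_sub_cancel, Nat.reduceSub, Nat.reduceAdd, pow_zero,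
      sub_self, zero_smul, map_zero, smul_zero, LinearMap.zero_apply, mul_zero, zero_mul, zero_add, add_zero, LinearMap.comp_apply] <;>
    (try match_scalars) <;> first | done | ring1 | (field_simp; done) | (field_simp; ring1)
end orth

set_option linter.unusedSimpArgs false

/-- q-binomial -/
def qb : ℕ → ℕ → Fq
  | _, 0 => 1
  | 0, _ + 1 => 0
  | n + 1, m + 1 => qb n (m + 1) + q ^ (4 * (n - m)) * qb n m

theorem qb_zero (n : ℕ) : qb n 0 = 1 := by cases n <;> rfl
theorem qb_zero_succ (m : ℕ) : qb 0 (m + 1) = 0 := rfl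
theorem qb_succ (n m : ℕ) : qb (n + 1) (m + 1) = qb n (m + 1) + q ^ (4 * (n - m)) * qb n m := rfl

theorem qb_gt : ∀ (n m : ℕ), n < m → qb n m = 0 := by
  intro n
  induction n with
  | zero => intro m h; obtain ⟨m, rfl⟩ := Nat.exists_eq_succ_of_ne_zero (by omega : m ≠ 0); rfl
  | succ n ih =>
    intro m h
    obtain ⟨m, rfl⟩ := Nat.exists_eq_succ_of_ne_zero (by omega : m ≠ 0)
    rw [Nat.succ_eq_add_one, qb_succ, ih _ (by omega), ih _ (by omega)]; simp

/-- falling q-factorial -/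
def ff (n m : ℕ) : Fq := ∏ l ∈ Finset.range m, (1 - q ^ (4 * (n - l)))

theorem ff_succ (n m : ℕ) : ff n (m + 1) = ff n m * (1 - q ^ (4 * (n - m))) := by
  simp [ff, Finset.prod_range_succ]

theorem ff_zero (n : ℕ) : ff n 0 = 1 := by simp [ff]

theorem ff_gt (n m : ℕ) (h : n < m) : ff n m = 0 := by
  rw [ff, Finset.prod_eq_zero (Finset.mem_range.mpr h)]; simp

/-- natural number version of `qfac` -/
def qn (n : ℕ) : Fq := ∏ l ∈ Finset.range n, (1 - q ^ (4 * (l + 1)))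

theorem qfac_nat (n : ℕ) : qfac (q ^ 4) (n : ℤ) = qn n := by
  simp [qfac, qn, pow_mul]

theorem qfac_neg (n : ℤ) (h : n < 0) : qfac (q ^ 4) n = 0 := by
  simp [qfac, not_le.mpr h]

theorem qn_succ (n : ℕ) : qn (n + 1) = qn n * (1 - q ^ (4 * (n + 1))) := by
  simp [qn, Finset.prod_range_succ]

theorem qn_ne (n : ℕ) : qn n ≠ 0 := by
  rw [qn, Finset.prod_ne_zero_iff]
  intro l _
  exact one_sub_q_ne (by omega)

theorem ff_qn (n m : ℕ) : ff (n + m) m * qn n = qn (n + m) := by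
  induction m generalizing n with
  | zero => simp [ff_zero]
  | succ m ih =>
    have := ih (n + 1)
    rw [show n + (m + 1) = n + 1 + m by ring, ff_succ, ← this, qn_succ,
      show n + 1 + m - m = n + 1 by omega]
    ring

theorem qb_qn (n m : ℕ) : qb (n + m) m * (qn n * qn m) = qn (n + m) := by
  induction h : n + m generalizing n m with
  | zero =>
    obtain ⟨rfl, rfl⟩ : n = 0 ∧ m = 0 := by omega
    simp [qb_zero, qn]
  | succ s ih =>
    rcases m with _ | m
    · obtain rfl : n = s + 1 := by omega
      simp [qb_zero, qn]
    · rcases n with _ | n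
      · obtain rfl : s = m := by omega
        have h2 := ih 0 s (by omega)
        rw [qb_succ, qb_gt s (s + 1) (by omega)]
        have q0 : qn 0 = 1 := by simp [qn]
        rw [q0, one_mul] at h2 ⊢
        rw [zero_add, qn_succ, show s - s = 0 by omega]
        linear_combination (1 - q ^ (4 * (s + 1))) * h2
      · have h1 := ih n (m + 1) (by omega)
        have h2 := ih (n + 1) m (by omega)
        rw [qb_succ, qn_succ s, qn_succ n, qn_succ m] at *
        obtain rfl : s = n + 1 + m := by omega
        rw [show n + 1 + m - m = n + 1 by omega]
        have e : q ^ (4 * (n + 1 + m + 1)) = q ^ (4 * (n + 1)) * q ^ (4 * (m + 1)) := by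
          rw [← pow_add]; ring_nf
        rw [e]
        linear_combination (1 - q ^ (4 * (n + 1))) * h1 + q ^ (4 * (n + 1)) * (1 - q ^ (4 * (m+1))) * h2

theorem qb_eq (n m : ℕ) : qfac (q ^ 4) (n : ℤ) / (qfac (q ^ 4) (m : ℤ) * qfac (q ^ 4) ((n : ℤ) - (m : ℤ)))
    = qb n m := by
  by_cases h : m ≤ n
  · obtain ⟨d, rfl⟩ := Nat.exists_eq_add_of_le' h
    rw [show ((d + m : ℕ) : ℤ) - (m : ℤ) = ((d : ℕ) : ℤ) by push_cast; ring, qfac_nat, qfac_nat, qfac_nat,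
      ← qb_qn]
    have := qn_ne d
    have := qn_ne m
    field_simp
  · rw [qfac_neg ((n : ℤ) - (m : ℤ)) (by omega), qb_gt n m (by omega)]; simp

/-- the summand of S, with the exponent of q as integer -/
def Sterm (i j k l m : ℕ) : Fq :=
  (-1 : Fq) ^ l * q ^ (2 * (i : ℤ) * ((k : ℤ) - (l : ℤ) - (m : ℤ)) + 2 * ((k : ℤ) + 1) * (l : ℤ)
     + 2 * (m : ℤ) * ((m : ℤ) - (k : ℤ))) * (qb i m * qb j l * ff (j + k - l) m)

theorem Scoef_eq (a b c i j k : ℕ) (h1 : i + j = a + b) (h2 : j + k = b + c) :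
    Scoef a b c i j k = ∑ m ∈ Finset.range (b + 1), Sterm i j k (b - m) m := by
  rw [Scoef, if_pos h1, if_pos h2, one_mul, one_mul]
  refine Finset.sum_congr rfl fun m hm => ?_
  have hm' : m ≤ b := by simpa [Nat.lt_succ_iff] using hm
  rw [Sterm, show (b : ℤ) - (m : ℤ) = ((b - m : ℕ) : ℤ) by omega,
    show j + k - (b - m) = c + m by omega, ← qb_eq i m, ← qb_eq j (b - m)]
  have e : ff (c + m) m = qfac (q ^ 4) ((c : ℤ) + (m : ℤ)) / qfac (q ^ 4) (c : ℤ) := by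
    rw [show (c : ℤ) + (m : ℤ) = ((c + m : ℕ) : ℤ) by push_cast; ring, qfac_nat, qfac_nat,
      ← ff_qn]
    have := qn_ne c
    field_simp
  rw [e]
  have e2 : (2 * (i : ℤ) * ((k : ℤ) - ((b - m : ℕ) : ℤ) - (m : ℤ))) = 2 * (i : ℤ) * ((c : ℤ) - (j : ℤ)) := by
    congr 1
    omega
  rw [e2]
  generalize q ^ (2 * (i : ℤ) * ((c : ℤ) - (j : ℤ)) + 2 * ((k : ℤ) + 1) * ((b - m : ℕ) : ℤ)
          + 2 * (m : ℤ) * ((m : ℤ) - (k : ℤ))) = Z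
  simp only [div_eq_mul_inv, mul_inv]
  ring

/-- Number-cutoff version of S on three sites -/
def S3 : Module.End Fq (WW 3) :=
  Finsupp.lift (WW 3) Fq (Fin 3 → ℕ) fun f =>
    ∑ a ∈ Finset.range (f 0 + f 1 + f 2 + 1), ∑ b ∈ Finset.range (f 0 + f 1 + f 2 + 1),
      ∑ c ∈ Finset.range (f 0 + f 1 + f 2 + 1), Scoef a b c (f 0) (f 1) (f 2) • bs ![a, b, c]

theorem S3_bs' (f : Fin 3 → ℕ) : S3 (bs f) =
    ∑ a ∈ Finset.range (f 0 + f 1 + f 2 + 1), ∑ b ∈ Finset.range (f 0 + f 1 + f 2 + 1),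
      ∑ c ∈ Finset.range (f 0 + f 1 + f 2 + 1), Scoef a b c (f 0) (f 1) (f 2) • bs ![a, b, c] := by
  rw [S3, bs, Finsupp.lift_apply, Finsupp.sum_single_index, one_smul]
  exact zero_smul _ _

theorem Scoef_ne (a b c i j k : ℕ) (h : ¬ (i + j = a + b ∧ j + k = b + c)) : Scoef a b c i j k = 0 := by
  rw [Scoef]
  by_cases h1 : i + j = a + b
  · rw [if_neg (show ¬ (j + k = b + c) from fun h2 => h ⟨h1, h2⟩)]; simp
  · rw [if_neg h1]; simp

theorem S3_bs (i j k : ℕ) : S3 (bs ![i, j, k]) =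
    ∑ l ∈ Finset.range (j + 1), ∑ m ∈ Finset.range (i + 1),
      Sterm i j k l m • bs ![i + j - l - m, l + m, j + k - l - m] := by
  rw [S3_bs']
  simp only [Matrix.cons_val_zero, Matrix.cons_val_one, Matrix.cons_val]
  rw [Finset.sum_comm]
  -- left: sum over b
  have hL : ∀ b ∈ Finset.range (i + j + k + 1), (∑ a ∈ Finset.range (i + j + k + 1),
      ∑ c ∈ Finset.range (i + j + k + 1), Scoef a b c i j k • bs ![a, b, c])
      = ∑ x ∈ Finset.HasAntidiagonal.antidiagonal b, Sterm i j k x.2 x.1 • bs ![i + j - x.2 - x.1, x.2 + x.1, j + k - x.2 - x.1] := by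
    intro b hb
    by_cases hb2 : b ≤ i + j ∧ b ≤ j + k
    · rw [Finset.sum_eq_single (i + j - b), Finset.sum_eq_single (j + k - b)]
      · rw [Scoef_eq _ _ _ _ _ _ (by omega) (by omega), Finset.sum_smul, Finset.Nat.sum_antidiagonal_eq_sum_range_succ_mk]
        refine Finset.sum_congr rfl fun m hm => ?_
        have hm' : m ≤ b := by simpa [Nat.lt_succ_iff] using hm
        dsimp only
        rw [show i + j - (b - m) - m = i + j - b by omega, show b - m + m = b by omega,
          show j + k - (b - m) - m = j + k - b by omega]
      · intro c _ hc; rw [Scoef_ne _ _ _ _ _ _ (by omega), zero_smul]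
      · intro h; exact absurd (Finset.mem_range.mpr (by omega)) h
      · intro a _ ha
        exact Finset.sum_eq_zero fun c _ => by rw [Scoef_ne _ _ _ _ _ _ (by omega), zero_smul]
      · intro h; exact absurd (Finset.mem_range.mpr (by omega)) h
    · rw [Finset.sum_eq_zero, Finset.sum_eq_zero]
      · rintro ⟨m, l⟩ hx
        rw [Finset.HasAntidiagonal.mem_antidiagonal] at hx
        dsimp only at hx ⊢
        rw [Sterm]
        by_cases h1 : i < m
        · rw [qb_gt i m h1]; simp
        · by_cases h2 : j < l
          · rw [qb_gt j l h2]; simp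
          · rw [ff_gt (j + k - l) m (by omega)]; simp
      · intro a _
        exact Finset.sum_eq_zero fun c _ => by rw [Scoef_ne _ _ _ _ _ _ (by omega), zero_smul]
  rw [Finset.sum_congr rfl hL, Finset.sum_comm, ← Finset.sum_product',
    ← Finset.sum_fiberwise_of_maps_to (s := Finset.range (i + 1) ×ˢ Finset.range (j + 1))
      (t := Finset.range (i + j + k + 1)) (g := fun x => x.1 + x.2)
      (by rintro ⟨l, m⟩ h; simp at h ⊢; omega)]
  refine Finset.sum_congr rfl fun b hb => ?_
  symm
  apply Finset.sum_subset
  · rintro ⟨m, l⟩ h; simp at h ⊢; omega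
  · rintro ⟨m, l⟩ h h'
    simp at h h' ⊢
    rw [Sterm]
    by_cases h1 : i < m
    · rw [qb_gt i m h1]; simp
    · by_cases h2 : j < l
      · rw [qb_gt j l h2]; simp
      · omega


/-! ### basic operators on three sites -/

theorem upd3_0 (x y z m : ℕ) : Function.update ![x, y, z] 0 m = ![m, y, z] := by
  funext i; fin_cases i <;> rfl
theorem upd3_1 (x y z m : ℕ) : Function.update ![x, y, z] 1 m = ![x, m, z] := by
  funext i; fin_cases i <;> rfl
theorem upd3_2 (x y z m : ℕ) : Function.update ![x, y, z] 2 m = ![x, y, m] := by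
  funext i; fin_cases i <;> rfl

theorem act0 (x y z : ℕ) : atp (0 : Fin 3) K2 (bs ![x, y, z]) = q ^ (2 * x) • bs ![x, y, z] ∧
    atp (0 : Fin 3) Ap (bs ![x, y, z]) = bs ![x + 1, y, z] ∧
    atp (0 : Fin 3) Am (bs ![x, y, z]) = (1 - q ^ (4 * x)) • bs ![x - 1, y, z] := by
  simp only [atp_bs, Matrix.cons_val_zero, K2_ket, Ap_ket, Am_ket, map_smul, emb_ket, upd3_0,
    true_and, and_self]

theorem act1 (x y z : ℕ) : atp (1 : Fin 3) K2 (bs ![x, y, z]) = q ^ (2 * y) • bs ![x, y, z] ∧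
    atp (1 : Fin 3) Ap (bs ![x, y, z]) = bs ![x, y + 1, z] ∧
    atp (1 : Fin 3) Am (bs ![x, y, z]) = (1 - q ^ (4 * y)) • bs ![x, y - 1, z] := by
  simp only [atp_bs, Matrix.cons_val_one, Matrix.cons_val_zero, K2_ket, Ap_ket, Am_ket, map_smul, emb_ket, upd3_1,
    true_and, and_self]

theorem act2 (x y z : ℕ) : atp (2 : Fin 3) K2 (bs ![x, y, z]) = q ^ (2 * z) • bs ![x, y, z] ∧
    atp (2 : Fin 3) Ap (bs ![x, y, z]) = bs ![x, y, z + 1] ∧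
    atp (2 : Fin 3) Am (bs ![x, y, z]) = (1 - q ^ (4 * z)) • bs ![x, y, z - 1] := by
  simp only [atp_bs, Matrix.cons_val, K2_ket, Ap_ket, Am_ket, map_smul, emb_ket, upd3_2,
    true_and, and_self]

theorem ext3 {X Y : Module.End Fq (WW 3)} (h : ∀ x y z, X (bs ![x, y, z]) = Y (bs ![x, y, z])) : X = Y := by
  apply ext_bs; intro f
  have : f = ![f 0, f 1, f 2] := by funext i; fin_cases i <;> rfl
  rw [this]; exact h _ _ _

/-- operator on site `x` of three sites -/
abbrev k3 (x : Fin 3) : Module.End Fq (WW 3) := atp x K2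
/-- creation -/
abbrev p3 (x : Fin 3) : Module.End Fq (WW 3) := atp x Ap
/-- annihilation -/
abbrev m3 (x : Fin 3) : Module.End Fq (WW 3) := atp x Am

/-- the operator `t₃₂` -/
abbrev Pt : Module.End Fq (WW 3) := k3 0 * p3 1 * m3 2 + p3 0 * k3 2
/-- the operator `t₃₃` -/
abbrev Qt : Module.End Fq (WW 3) := p3 0 * p3 2 - q ^ 2 • (k3 0 * p3 1 * k3 2)
/-- right version -/
abbrev Pu : Module.End Fq (WW 3) := k3 1 * p3 0
/-- right version -/
abbrev Qu : Module.End Fq (WW 3) := p3 1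

theorem sum_shift {M : Type*} [AddCommMonoid M] (n : ℕ) (f g : ℕ → M) :
    ∑ m ∈ Finset.range (n + 1), f m + ∑ m ∈ Finset.range (n + 1), g m
      = f 0 + (∑ m ∈ Finset.range n, (f (m + 1) + g m) + g n) := by
  rw [Finset.sum_range_succ' f, Finset.sum_range_succ g, Finset.sum_add_distrib]
  abel

theorem Sterm_zero_i {i j k l m : ℕ} (h : i < m) : Sterm i j k l m = 0 := by
  rw [Sterm, qb_gt i m h]; simp

theorem Sterm_zero_c {i j k l m : ℕ} (h : j + k - l < m) : Sterm i j k l m = 0 := by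
  rw [Sterm, ff_gt _ m h]; simp

theorem Sterm_rec (i j k l m : ℕ) (hl : l ≤ j) (hm : m ≤ i) (hn : m + 1 ≤ j + k - l) :
    q ^ (2 * j) * Sterm (i + 1) j k l (m + 1) = Sterm i j k l (m + 1) * q ^ (2 * (j + k - l - (m + 1)))
      + Sterm i j k l m * (q ^ (2 * (i + j - l - m)) * (1 - q ^ (4 * (j + k - l - m)))) := by
  simp only [Sterm, qb_succ, ff_succ]
  have hq := q_ne
  have a1 : q ^ (2 * j) = q ^ (2 * j : ℤ) := by norm_cast
  have a2 : q ^ (2 * (j + k - l - (m + 1))) = q ^ (2 * (j + k - l - (m + 1)) : ℤ) := by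
    rw [← zpow_natCast]; congr 1; omega
  have a3 : q ^ (2 * (i + j - l - m)) = q ^ (2 * (i + j - l - m) : ℤ) := by
    rw [← zpow_natCast]; congr 1; omega
  have a4 : q ^ (4 * (i - m)) = q ^ (4 * (i - m) : ℤ) := by
    rw [← zpow_natCast]; congr 1; omega
  rw [a1, a2, a3, a4]
  push_cast
  set A := qb i m
  set B := qb i (m + 1)
  set C := qb j l
  set D := ff (j + k - l) m
  set G := 1 - q ^ (4 * (j + k - l - m))
  have e1 : q ^ (2 * (i : ℤ) * ((k : ℤ) - l - (m + 1)) + 2 * ((k : ℤ) + 1) * l + 2 * ((m : ℤ) + 1) * ((m : ℤ) + 1 - k))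
      * q ^ (2 * ((j : ℤ) + k - l - (m + 1))) = q ^ (2 * (j : ℤ)) * q ^ (2 * ((i : ℤ) + 1) * ((k : ℤ) - l - (m + 1)) + 2 * ((k : ℤ) + 1) * l + 2 * ((m : ℤ) + 1) * ((m : ℤ) + 1 - k)) := by
    rw [← zpow_add₀ hq, ← zpow_add₀ hq]; congr 1; ring
  have e2 : q ^ (2 * (i : ℤ) * ((k : ℤ) - l - m) + 2 * ((k : ℤ) + 1) * l + 2 * (m : ℤ) * ((m : ℤ) - k))
      * q ^ (2 * ((i : ℤ) + j - l - m)) = q ^ (4 * ((i : ℤ) - m)) * (q ^ (2 * (j : ℤ)) * q ^ (2 * ((i : ℤ) + 1) * ((k : ℤ) - l - (m + 1)) + 2 * ((k : ℤ) + 1) * l + 2 * ((m : ℤ) + 1) * ((m : ℤ) + 1 - k))) := by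
    rw [← zpow_add₀ hq, ← zpow_add₀ hq, ← zpow_add₀ hq]; congr 1; ring
  generalize q ^ (2 * (i : ℤ) * ((k : ℤ) - l - (m + 1)) + 2 * ((k : ℤ) + 1) * l + 2 * ((m : ℤ) + 1) * ((m : ℤ) + 1 - k)) = z1 at *
  generalize q ^ (2 * ((j : ℤ) + k - l - (m + 1))) = z2 at *
  generalize q ^ (2 * ((i : ℤ) + 1) * ((k : ℤ) - l - (m + 1)) + 2 * ((k : ℤ) + 1) * l + 2 * ((m : ℤ) + 1) * ((m : ℤ) + 1 - k)) = z3 at *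
  generalize q ^ (2 * (i : ℤ) * ((k : ℤ) - l - m) + 2 * ((k : ℤ) + 1) * l + 2 * (m : ℤ) * ((m : ℤ) - k)) = z4 at *
  generalize q ^ (2 * ((i : ℤ) + j - l - m)) = z5 at *
  generalize q ^ (4 * ((i : ℤ) - m)) = z6 at *
  generalize q ^ (2 * (j : ℤ)) = z7 at *
  linear_combination (-(-1) ^ l * B * C * D * G) * e1 - (-1) ^ l * A * C * D * G * e2

theorem Sterm_rec0 (i j k l : ℕ) (hl : l ≤ j) :
    q ^ (2 * j) * Sterm (i + 1) j k l 0 = Sterm i j k l 0 * q ^ (2 * (j + k - l)) := by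
  simp only [Sterm, qb_zero, ff_zero]
  have hq := q_ne
  have a1 : q ^ (2 * j) = q ^ (2 * j : ℤ) := by norm_cast
  have a2 : q ^ (2 * (j + k - l)) = q ^ (2 * (j + k - l) : ℤ) := by
    rw [← zpow_natCast]; congr 1; omega
  rw [a1, a2]
  push_cast
  have e1 : q ^ (2 * (i : ℤ) * ((k : ℤ) - l - 0) + 2 * ((k : ℤ) + 1) * l + 0 * ((0 : ℤ) - k))
      * q ^ (2 * ((j : ℤ) + k - l)) = q ^ (2 * (j : ℤ)) * q ^ (2 * ((i : ℤ) + 1) * ((k : ℤ) - l - 0) + 2 * ((k : ℤ) + 1) * l + 0 * ((0 : ℤ) - k)) := by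
    rw [← zpow_add₀ hq, ← zpow_add₀ hq]; congr 1; ring
  linear_combination (-(-1) ^ l * qb j l) * e1

theorem R32 : Pt * S3 = S3 * Pu := by
  apply ext3
  intro i j k
  rw [Module.End.mul_apply, Module.End.mul_apply]
  have hP : Pu (bs ![i, j, k]) = q ^ (2 * j) • bs ![i + 1, j, k] := by
    simp only [Module.End.mul_apply, act0, act1]
  have hP2 : ∀ x y z, Pt (bs ![x, y, z]) = (q ^ (2 * x) * (1 - q ^ (4 * z))) • bs ![x, y + 1, z - 1]
      + q ^ (2 * z) • bs ![x + 1, y, z] := by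
    intro x y z
    simp only [Module.End.mul_apply, act0, act1, act2, LinearMap.add_apply, map_smul, smul_smul]
    congr 2; ring
  rw [hP, map_smul, S3_bs, S3_bs, map_sum, Finset.smul_sum]
  refine Finset.sum_congr rfl fun l hl => ?_
  have hl' : l ≤ j := by simpa [Nat.lt_succ_iff] using hl
  rw [map_sum, Finset.smul_sum]
  simp only [map_smul, hP2, smul_add]
  rw [Finset.sum_add_distrib, add_comm, Finset.sum_range_succ' _ (i + 1)]
  have e : ∀ m, q ^ (2 * j) • Sterm (i + 1) j k l (m + 1) • bs ![i + 1 + j - l - (m + 1), l + (m + 1), j + k - l - (m + 1)]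
    = Sterm i j k l (m + 1) • q ^ (2 * (j + k - l - (m + 1))) • bs ![i + j - l - (m + 1) + 1, l + (m + 1), j + k - l - (m + 1)]
     + Sterm i j k l m • (q ^ (2 * (i + j - l - m)) * (1 - q ^ (4 * (j + k - l - m)))) • bs ![i + j - l - m, l + m + 1, j + k - l - m - 1] := by
    intro m
    rcases Nat.lt_or_ge i m with hm | hm
    · rw [Sterm_zero_i (by omega : i + 1 < m + 1), Sterm_zero_i (by omega : i < m + 1), Sterm_zero_i hm]
      simp
    rcases Nat.lt_or_ge (j + k - l) (m + 1) with hn | hn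
    · rw [Sterm_zero_c hn, Sterm_zero_c hn]
      rw [show j + k - l - m = 0 by omega]; simp
    rw [show i + 1 + j - l - (m + 1) = i + j - l - m by omega, show l + (m + 1) = l + m + 1 by omega,
      show j + k - l - m - 1 = j + k - l - (m + 1) by omega, smul_smul, Sterm_rec i j k l m hl' hm hn,
      add_smul, smul_smul, smul_smul]
    rcases Nat.eq_or_lt_of_le hm with hm | hm
    · rw [Sterm_zero_i (by omega : i < m + 1)]; simp
    · rw [show i + j - l - (m + 1) + 1 = i + j - l - m by omega]
  have e0 : q ^ (2 * j) • Sterm (i + 1) j k l 0 • bs ![i + 1 + j - l - 0, l + 0, j + k - l - 0]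
     = Sterm i j k l 0 • q ^ (2 * (j + k - l - 0)) • bs ![i + j - l - 0 + 1, l + 0, j + k - l - 0] := by
    rw [smul_smul, smul_smul, show i + 1 + j - l - 0 = i + j - l - 0 + 1 by omega, Sterm_rec0 i j k l hl']
    rfl
  simp only [e, e0]
  rw [Finset.sum_add_distrib, Finset.sum_range_succ' _ i, Finset.sum_range_succ (fun m => Sterm i j k l (m + 1) • _) i]
  have ez : Sterm i j k l (i + 1) = 0 := by rw [Sterm, qb_gt i (i + 1) (by omega)]; simp
  rw [ez, zero_smul, add_zero]
  abel


theorem S3_00 (k : ℕ) : S3 (bs ![0, 0, k]) = bs ![0, 0, k] := by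
  rw [S3_bs, zero_add, Finset.sum_range_one, Finset.sum_range_one]
  have : Sterm 0 0 k 0 0 = 1 := by simp [Sterm, qb_zero, ff_zero]
  rw [this, one_smul]; simp only [Nat.zero_add, Nat.sub_zero]

theorem R33_0 (j k : ℕ) : S3 (bs ![0, j + 1, k]) = Qt (S3 (bs ![0, j, k])) := by
  have hq := q_ne
  have hQ2 : ∀ x y z, Qt (bs ![x, y, z]) = bs ![x + 1, y, z + 1]
      + (-q ^ (2 + 2 * x + 2 * z)) • bs ![x, y + 1, z] := by
    intro x y z
    simp only [Module.End.mul_apply, act0, act1, act2, LinearMap.sub_apply, LinearMap.smul_apply, map_smul, smul_smul]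
    rw [sub_eq_add_neg, ← neg_smul]
    congr 2; ring
  have h0 : ∀ j, S3 (bs ![0, j, k]) = ∑ l ∈ Finset.range (j + 1),
      ((-1) ^ l * q ^ (2 * (k + 1) * l) * qb j l) • bs ![j - l, l, j + k - l] := by
    intro j
    rw [S3_bs]
    refine Finset.sum_congr rfl fun l _ => ?_
    simp only [zero_add, Finset.sum_range_one, Sterm, qb_zero, ff_zero]
    have : q ^ (2 * ((0 : ℕ) : ℤ) * ((k : ℤ) - (l : ℤ) - ((0 : ℕ) : ℤ)) + 2 * ((k : ℤ) + 1) * (l : ℤ)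
     + 2 * ((0 : ℕ) : ℤ) * (((0 : ℕ) : ℤ) - (k : ℤ))) = q ^ (2 * (k + 1) * l) := by
      rw [← zpow_natCast]; congr 1; push_cast; ring
    rw [this]
    simp
  rw [h0, h0, map_sum, Finset.sum_range_succ' _ (j + 1)]
  simp only [map_smul, hQ2, smul_add]
  have e : ∀ l ∈ Finset.range (j + 1), ((-1) ^ (l + 1) * q ^ (2 * (k + 1) * (l + 1)) * qb (j + 1) (l + 1)) •
      bs ![j + 1 - (l + 1), l + 1, j + 1 + k - (l + 1)]
     = ((-1) ^ (l + 1) * q ^ (2 * (k + 1) * (l + 1)) * qb j (l + 1)) • bs ![j - (l + 1) + 1, l + 1, j + k - (l + 1) + 1]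
      + ((-1) ^ l * q ^ (2 * (k + 1) * l) * qb j l) • (-q ^ (2 + 2 * (j - l) + 2 * (j + k - l))) • bs ![j - l, l + 1, j + k - l] := by
    intro l hl
    have hl' : l ≤ j := by simpa [Nat.lt_succ_iff] using hl
    rw [qb_succ, mul_add, add_smul, smul_smul]
    congr 1
    · rcases Nat.eq_or_lt_of_le hl' with h | h
      · rw [qb_gt j (l + 1) (by omega)]; simp
      · rw [show j + 1 - (l + 1) = j - (l + 1) + 1 by omega, show j + 1 + k - (l + 1) = j + k - (l + 1) + 1 by omega]
    · rw [show j + 1 - (l + 1) = j - l by omega, show j + 1 + k - (l + 1) = j + k - l by omega]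
      congr 1
      obtain ⟨d, rfl⟩ := Nat.exists_eq_add_of_le' hl'
      rw [show d + l - l = d by omega, show d + l + k - l = d + k by omega]
      ring
  rw [Finset.sum_congr rfl e, Finset.sum_add_distrib, Finset.sum_add_distrib,
    Finset.sum_range_succ' (fun l => ((-1) ^ l * q ^ (2 * (k + 1) * l) * qb j l) • bs ![j - l + 1, l, j + k - l + 1]) j,
    Finset.sum_range_succ (fun l => ((-1) ^ (l + 1) * q ^ (2 * (k + 1) * (l + 1)) * qb j (l + 1)) • bs ![j - (l + 1) + 1, l + 1, j + k - (l + 1) + 1]) j]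
  rw [qb_gt j (j + 1) (by omega), mul_zero, zero_smul, add_zero, qb_zero, qb_zero]
  rw [show j + 1 - 0 = j - 0 + 1 by omega, show j + 1 + k - 0 = j + k - 0 + 1 by omega]
  abel

theorem bs_P (i j k : ℕ) : bs ![i + 1, j, k] = (q ^ (2 * j))⁻¹ • Pu (bs ![i, j, k]) := by
  have hq : q ^ (2 * j) ≠ 0 := pow_ne_zero _ q_ne
  simp only [Module.End.mul_apply, act0, act1, smul_smul, inv_mul_cancel₀ hq, one_smul]

theorem bs_Q (i j k : ℕ) : bs ![i, j + 1, k] = Qu (bs ![i, j, k]) := by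
  simp only [act1]

/-- Step in the first site. -/
theorem step_i {X X' Y Y' : Module.End Fq (WW 3)} {c : Fq} (h1 : X * Pt = c • (Pt * X) + Y)
    (h1' : X' * Pu = c • (Pu * X') + Y') (hY : Y * S3 = S3 * Y') (i j k : ℕ)
    (ih : X (S3 (bs ![i, j, k])) = S3 (X' (bs ![i, j, k]))) :
    X (S3 (bs ![i + 1, j, k])) = S3 (X' (bs ![i + 1, j, k])) := by
  rw [bs_P]
  simp only [map_smul]
  congr 1
  have e1 : S3 (Pu (bs ![i, j, k])) = Pt (S3 (bs ![i, j, k])) := (LinearMap.congr_fun R32 _).symm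
  have e2 := LinearMap.congr_fun h1 (S3 (bs ![i, j, k]))
  have e3 := LinearMap.congr_fun h1' (bs ![i, j, k])
  have e4 := LinearMap.congr_fun hY (bs ![i, j, k])
  have e5 := LinearMap.congr_fun R32 (X' (bs ![i, j, k]))
  rw [Module.End.mul_apply] at e2 e3 e4 e5
  rw [e1, e2, e3, LinearMap.add_apply, LinearMap.add_apply, map_add, LinearMap.smul_apply, LinearMap.smul_apply, map_smul,
    Module.End.mul_apply, Module.End.mul_apply, ih]
  rw [Module.End.mul_apply] at e4 e5
  rw [e4, e5]


theorem step_j (R33 : Qt * S3 = S3 * Qu) {X X' Y Y' : Module.End Fq (WW 3)} {c : Fq} (h1 : X * Qt = c • (Qt * X) + Y)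
    (h1' : X' * Qu = c • (Qu * X') + Y') (hY : Y * S3 = S3 * Y') (i j k : ℕ)
    (ih : X (S3 (bs ![i, j, k])) = S3 (X' (bs ![i, j, k]))) :
    X (S3 (bs ![i, j + 1, k])) = S3 (X' (bs ![i, j + 1, k])) := by
  rw [bs_Q]
  have e1 : S3 (Qu (bs ![i, j, k])) = Qt (S3 (bs ![i, j, k])) := (LinearMap.congr_fun R33 _).symm
  have e2 := LinearMap.congr_fun h1 (S3 (bs ![i, j, k]))
  have e3 := LinearMap.congr_fun h1' (bs ![i, j, k])
  have e4 := LinearMap.congr_fun hY (bs ![i, j, k])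
  have e5 := LinearMap.congr_fun R33 (X' (bs ![i, j, k]))
  rw [Module.End.mul_apply] at e2 e3 e4 e5
  rw [e1, e2, e3, LinearMap.add_apply, LinearMap.add_apply, map_add, LinearMap.smul_apply, LinearMap.smul_apply, map_smul,
    Module.End.mul_apply, Module.End.mul_apply, ih]
  rw [Module.End.mul_apply] at e4 e5
  rw [e4, e5]

theorem ind3 (R33 : Qt * S3 = S3 * Qu) {X X' Y Y' Z Z' : Module.End Fq (WW 3)} {c d : Fq}
    (h1 : X * Pt = c • (Pt * X) + Y)
    (h1' : X' * Pu = c • (Pu * X') + Y') (hY : Y * S3 = S3 * Y') (h2 : X * Qt = d • (Qt * X) + Z)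
    (h2' : X' * Qu = d • (Qu * X') + Z') (hZ : Z * S3 = S3 * Z')
    (h0 : ∀ k, X (bs ![0, 0, k]) = S3 (X' (bs ![0, 0, k]))) : X * S3 = S3 * X' := by
  apply ext3
  intro i j k
  rw [Module.End.mul_apply, Module.End.mul_apply]
  induction i generalizing j k with
  | zero =>
    induction j with
    | zero => rw [S3_00]; exact h0 k
    | succ j ih => exact step_j R33 h2 h2' hZ _ _ _ ih
  | succ i ih => exact step_i h1 h1' hY _ _ _ (ih _ _)

theorem wt_aux (X : Module.End Fq (WW 3)) (w : ℕ → ℕ → ℕ → Fq) (hX : ∀ a b c, X (bs ![a, b, c]) = w a b c • bs ![a, b, c])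
    (hw : ∀ a b c i j k, i + j = a + b → j + k = b + c → w a b c = w i j k) : X * S3 = S3 * X := by
  apply ext3
  intro i j k
  rw [Module.End.mul_apply, Module.End.mul_apply, hX, map_smul, S3_bs']
  simp only [map_sum, map_smul, hX, Finset.smul_sum]
  refine Finset.sum_congr rfl fun a _ => Finset.sum_congr rfl fun b _ => Finset.sum_congr rfl fun c _ => ?_
  by_cases h : i + j = a + b ∧ j + k = b + c
  · rw [hw a b c i j k h.1 h.2, smul_comm]
  · have : Scoef a b c (![i, j, k] 0) (![i, j, k] 1) (![i, j, k] 2) = 0 := Scoef_ne _ _ _ _ _ _ h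
    rw [this]; simp

theorem R13 : (k3 1 * k3 2) * S3 = S3 * (k3 1 * k3 2) := by
  apply wt_aux _ (fun _ b c => q ^ (2 * (b + c)))
  · intro a b c
    simp only [Module.End.mul_apply, act1, act2, map_smul, smul_smul]
    congr 1; ring
  · intro a b c i j k h1 h2; rw [h2]

theorem R31 : (k3 0 * k3 1) * S3 = S3 * (k3 0 * k3 1) := by
  apply wt_aux _ (fun a b _ => q ^ (2 * (a + b)))
  · intro a b c
    simp only [Module.End.mul_apply, act0, act1, map_smul, smul_smul]
    congr 1; ring
  · intro a b c i j k h1 h2; rw [h1]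

set_option maxHeartbeats 1000000 in
theorem R33_alg : Qt * Pt = (q ^ 2)⁻¹ • (Pt * Qt) + 0 ∧ Qu * Pu = (q ^ 2)⁻¹ • (Pu * Qu) + 0 := by
  have hq := q_ne
  constructor <;>
  (apply ext3; intro x y z; rcases x with _ | x <;> rcases y with _ | y <;> rcases z with _ | z) <;>
    simp only [LinearMap.add_apply, LinearMap.sub_apply, LinearMap.smul_apply, Module.End.mul_apply, act0, act1, act2,
      map_add, map_sub, map_smul, smul_smul, Nat.add_sub_cancel, Nat.reduceSub, Nat.reduceAdd, zero_add, pow_zero,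
      sub_self, zero_smul, map_zero, smul_zero, LinearMap.zero_apply, mul_zero, zero_mul, add_zero] <;>
    match_scalars <;> field_simp <;> ring1

theorem R33 : Qt * S3 = S3 * Qu := by
  apply ext3
  intro i j k
  rw [Module.End.mul_apply, Module.End.mul_apply]
  induction i generalizing j k with
  | zero => rw [(act1 _ _ _).2.1, R33_0]
  | succ i ih => exact step_i R33_alg.1 R33_alg.2 (by simp) _ _ _ (ih _ _)


set_option linter.unusedSimpArgs false

/-- matrix entry of the monodromy -/
abbrev t11 : Module.End Fq (WW 3) := m3 1
/-- matrix entry of the monodromy -/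
abbrev t12 : Module.End Fq (WW 3) := k3 1 * m3 2
/-- matrix entry of the monodromy -/
abbrev t13 : Module.End Fq (WW 3) := k3 1 * k3 2
/-- matrix entry of the monodromy -/
abbrev t21 : Module.End Fq (WW 3) := m3 0 * k3 1
/-- matrix entry of the monodromy -/
abbrev t22 : Module.End Fq (WW 3) := m3 0 * p3 1 * m3 2 - q ^ 2 • (k3 0 * k3 2)
/-- matrix entry of the monodromy -/
abbrev t23 : Module.End Fq (WW 3) := m3 0 * p3 1 * k3 2 + k3 0 * p3 2
/-- matrix entry of the monodromy -/
abbrev t31 : Module.End Fq (WW 3) := k3 0 * k3 1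
/-- matrix entry of the monodromy -/
abbrev t32 : Module.End Fq (WW 3) := k3 0 * p3 1 * m3 2 + p3 0 * k3 2
/-- matrix entry of the monodromy -/
abbrev t33 : Module.End Fq (WW 3) := p3 0 * p3 2 - q ^ 2 • (k3 0 * p3 1 * k3 2)
/-- matrix entry of the monodromy -/
abbrev u11 : Module.End Fq (WW 3) := m3 0 * m3 2 - q ^ 2 • (k3 0 * m3 1 * k3 2)
/-- matrix entry of the monodromy -/
abbrev u12 : Module.End Fq (WW 3) := k3 0 * m3 2 + p3 0 * m3 1 * k3 2
/-- matrix entry of the monodromy -/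
abbrev u13 : Module.End Fq (WW 3) := k3 1 * k3 2
/-- matrix entry of the monodromy -/
abbrev u21 : Module.End Fq (WW 3) := k3 2 * m3 0 + m3 1 * p3 2 * k3 0
/-- matrix entry of the monodromy -/
abbrev u22 : Module.End Fq (WW 3) := p3 0 * m3 1 * p3 2 - q ^ 2 • (k3 0 * k3 2)
/-- matrix entry of the monodromy -/
abbrev u23 : Module.End Fq (WW 3) := p3 2 * k3 1
/-- matrix entry of the monodromy -/
abbrev u31 : Module.End Fq (WW 3) := k3 0 * k3 1
/-- matrix entry of the monodromy -/
abbrev u32 : Module.End Fq (WW 3) := k3 1 * p3 0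
/-- matrix entry of the monodromy -/
abbrev u33 : Module.End Fq (WW 3) := p3 1

theorem alg_t23_32 : t23 * t32 = (1 : Fq) • (t32 * t23) + 0 := by
  (apply ext3; intro x y z; rcases x with _ | x <;> rcases z with _ | z) <;>
    simp only [LinearMap.add_apply, LinearMap.sub_apply, LinearMap.smul_apply, Module.End.mul_apply, act0, act1, act2,
      map_add, map_sub, map_smul, smul_smul, Nat.add_sub_cancel, Nat.reduceSub, Nat.reduceAdd, zero_add, pow_zero,
      sub_self, zero_smul, map_zero, smul_zero, LinearMap.zero_apply, mul_zero, zero_mul, add_zero, sub_zero, zero_sub, map_neg] <;>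
    match_scalars <;> ring1

theorem alg_t23_33 : t23 * t33 = (q ^ 2 : Fq) • (t33 * t23) + 0 := by
  (apply ext3; intro x y z; rcases x with _ | x) <;>
    simp only [LinearMap.add_apply, LinearMap.sub_apply, LinearMap.smul_apply, Module.End.mul_apply, act0, act1, act2,
      map_add, map_sub, map_smul, smul_smul, Nat.add_sub_cancel, Nat.reduceSub, Nat.reduceAdd, zero_add, pow_zero,
      sub_self, zero_smul, map_zero, smul_zero, LinearMap.zero_apply, mul_zero, zero_mul, add_zero, sub_zero, zero_sub, map_neg] <;>
    match_scalars <;> ring1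

theorem alg_t12_32 : t12 * t32 = (q ^ 2 : Fq) • (t32 * t12) + 0 := by
  (apply ext3; intro x y z; rcases z with _ | z) <;>
    simp only [LinearMap.add_apply, LinearMap.sub_apply, LinearMap.smul_apply, Module.End.mul_apply, act0, act1, act2,
      map_add, map_sub, map_smul, smul_smul, Nat.add_sub_cancel, Nat.reduceSub, Nat.reduceAdd, zero_add, pow_zero,
      sub_self, zero_smul, map_zero, smul_zero, LinearMap.zero_apply, mul_zero, zero_mul, add_zero, sub_zero, zero_sub, map_neg] <;>
    match_scalars <;> ring1

theorem alg_t12_33 : t12 * t33 = (1 : Fq) • (t33 * t12) + (1 - q ^ 4) • (t13 * t32) := by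
  (apply ext3; intro x y z; rcases z with _ | z) <;>
    simp only [LinearMap.add_apply, LinearMap.sub_apply, LinearMap.smul_apply, Module.End.mul_apply, act0, act1, act2,
      map_add, map_sub, map_smul, smul_smul, Nat.add_sub_cancel, Nat.reduceSub, Nat.reduceAdd, zero_add, pow_zero,
      sub_self, zero_smul, map_zero, smul_zero, LinearMap.zero_apply, mul_zero, zero_mul, add_zero, sub_zero, zero_sub, map_neg] <;>
    match_scalars <;> ring1

theorem alg_t22_32 : t22 * t32 = (q ^ 2 : Fq) • (t32 * t22) + 0 := by
  (apply ext3; intro x y z; rcases x with _ | x <;> rcases z with _ | z) <;>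
    simp only [LinearMap.add_apply, LinearMap.sub_apply, LinearMap.smul_apply, Module.End.mul_apply, act0, act1, act2,
      map_add, map_sub, map_smul, smul_smul, Nat.add_sub_cancel, Nat.reduceSub, Nat.reduceAdd, zero_add, pow_zero,
      sub_self, zero_smul, map_zero, smul_zero, LinearMap.zero_apply, mul_zero, zero_mul, add_zero, sub_zero, zero_sub, map_neg] <;>
    match_scalars <;> ring1

theorem alg_t22_33 : t22 * t33 = (1 : Fq) • (t33 * t22) + (1 - q ^ 4) • (t23 * t32) := by
  (apply ext3; intro x y z; rcases x with _ | x <;> rcases z with _ | z) <;>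
    simp only [LinearMap.add_apply, LinearMap.sub_apply, LinearMap.smul_apply, Module.End.mul_apply, act0, act1, act2,
      map_add, map_sub, map_smul, smul_smul, Nat.add_sub_cancel, Nat.reduceSub, Nat.reduceAdd, zero_add, pow_zero,
      sub_self, zero_smul, map_zero, smul_zero, LinearMap.zero_apply, mul_zero, zero_mul, add_zero, sub_zero, zero_sub, map_neg] <;>
    match_scalars <;> ring1

theorem alg_t21_32 : t21 * t32 = (1 : Fq) • (t32 * t21) + (q ^ 2 - (q ^ 2)⁻¹) • (t22 * t31) := by
  have hq := q_ne
  (apply ext3; intro x y z; rcases x with _ | x <;> rcases z with _ | z) <;>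
    simp only [LinearMap.add_apply, LinearMap.sub_apply, LinearMap.smul_apply, Module.End.mul_apply, act0, act1, act2,
      map_add, map_sub, map_smul, smul_smul, Nat.add_sub_cancel, Nat.reduceSub, Nat.reduceAdd, zero_add, pow_zero,
      sub_self, zero_smul, map_zero, smul_zero, LinearMap.zero_apply, mul_zero, zero_mul, add_zero, sub_zero, zero_sub, map_neg] <;>
    match_scalars <;> (field_simp; ring1)

theorem alg_t21_33 : t21 * t33 = (1 : Fq) • (t33 * t21) + (1 - q ^ 4) • (t23 * t31) := by
  (apply ext3; intro x y z; rcases x with _ | x) <;>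
    simp only [LinearMap.add_apply, LinearMap.sub_apply, LinearMap.smul_apply, Module.End.mul_apply, act0, act1, act2,
      map_add, map_sub, map_smul, smul_smul, Nat.add_sub_cancel, Nat.reduceSub, Nat.reduceAdd, zero_add, pow_zero,
      sub_self, zero_smul, map_zero, smul_zero, LinearMap.zero_apply, mul_zero, zero_mul, add_zero, sub_zero, zero_sub, map_neg] <;>
    match_scalars <;> ring1

theorem alg_t11_32 : t11 * t32 = (1 : Fq) • (t32 * t11) + (1 - q ^ 4) • (t12 * t31) := by
  (apply ext3; intro x y z; rcases y with _ | y <;> rcases z with _ | z) <;>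
    simp only [LinearMap.add_apply, LinearMap.sub_apply, LinearMap.smul_apply, Module.End.mul_apply, act0, act1, act2,
      map_add, map_sub, map_smul, smul_smul, Nat.add_sub_cancel, Nat.reduceSub, Nat.reduceAdd, zero_add, pow_zero,
      sub_self, zero_smul, map_zero, smul_zero, LinearMap.zero_apply, mul_zero, zero_mul, add_zero, sub_zero, zero_sub, map_neg] <;>
    match_scalars <;> ring1

theorem alg_t11_33 : t11 * t33 = (1 : Fq) • (t33 * t11) + (q ^ 6 - q ^ 2) • (t13 * t31) := by
  (apply ext3; intro x y z; rcases y with _ | y) <;>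
    simp only [LinearMap.add_apply, LinearMap.sub_apply, LinearMap.smul_apply, Module.End.mul_apply, act0, act1, act2,
      map_add, map_sub, map_smul, smul_smul, Nat.add_sub_cancel, Nat.reduceSub, Nat.reduceAdd, zero_add, pow_zero,
      sub_self, zero_smul, map_zero, smul_zero, LinearMap.zero_apply, mul_zero, zero_mul, add_zero, sub_zero, zero_sub, map_neg] <;>
    match_scalars <;> ring1

theorem alg_u23_32 : u23 * u32 = (1 : Fq) • (u32 * u23) + 0 := by
  (apply ext3; intro x y z) <;>
    simp only [LinearMap.add_apply, LinearMap.sub_apply, LinearMap.smul_apply, Module.End.mul_apply, act0, act1, act2,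
      map_add, map_sub, map_smul, smul_smul, Nat.add_sub_cancel, Nat.reduceSub, Nat.reduceAdd, zero_add, pow_zero,
      sub_self, zero_smul, map_zero, smul_zero, LinearMap.zero_apply, mul_zero, zero_mul, add_zero, sub_zero, zero_sub, map_neg] <;>
    match_scalars <;> ring1

theorem alg_u23_33 : u23 * u33 = (q ^ 2 : Fq) • (u33 * u23) + 0 := by
  (apply ext3; intro x y z) <;>
    simp only [LinearMap.add_apply, LinearMap.sub_apply, LinearMap.smul_apply, Module.End.mul_apply, act0, act1, act2,
      map_add, map_sub, map_smul, smul_smul, Nat.add_sub_cancel, Nat.reduceSub, Nat.reduceAdd, zero_add, pow_zero,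
      sub_self, zero_smul, map_zero, smul_zero, LinearMap.zero_apply, mul_zero, zero_mul, add_zero, sub_zero, zero_sub, map_neg] <;>
    match_scalars <;> ring1

theorem alg_u12_32 : u12 * u32 = (q ^ 2 : Fq) • (u32 * u12) + 0 := by
  (apply ext3; intro x y z; rcases y with _ | y) <;>
    simp only [LinearMap.add_apply, LinearMap.sub_apply, LinearMap.smul_apply, Module.End.mul_apply, act0, act1, act2,
      map_add, map_sub, map_smul, smul_smul, Nat.add_sub_cancel, Nat.reduceSub, Nat.reduceAdd, zero_add, pow_zero,
      sub_self, zero_smul, map_zero, smul_zero, LinearMap.zero_apply, mul_zero, zero_mul, add_zero, sub_zero, zero_sub, map_neg] <;>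
    match_scalars <;> ring1

theorem alg_u12_33 : u12 * u33 = (1 : Fq) • (u33 * u12) + (1 - q ^ 4) • (u13 * u32) := by
  (apply ext3; intro x y z; rcases y with _ | y) <;>
    simp only [LinearMap.add_apply, LinearMap.sub_apply, LinearMap.smul_apply, Module.End.mul_apply, act0, act1, act2,
      map_add, map_sub, map_smul, smul_smul, Nat.add_sub_cancel, Nat.reduceSub, Nat.reduceAdd, zero_add, pow_zero,
      sub_self, zero_smul, map_zero, smul_zero, LinearMap.zero_apply, mul_zero, zero_mul, add_zero, sub_zero, zero_sub, map_neg] <;>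
    match_scalars <;> ring1

theorem alg_u22_32 : u22 * u32 = (q ^ 2 : Fq) • (u32 * u22) + 0 := by
  (apply ext3; intro x y z; rcases y with _ | y) <;>
    simp only [LinearMap.add_apply, LinearMap.sub_apply, LinearMap.smul_apply, Module.End.mul_apply, act0, act1, act2,
      map_add, map_sub, map_smul, smul_smul, Nat.add_sub_cancel, Nat.reduceSub, Nat.reduceAdd, zero_add, pow_zero,
      sub_self, zero_smul, map_zero, smul_zero, LinearMap.zero_apply, mul_zero, zero_mul, add_zero, sub_zero, zero_sub, map_neg] <;>
    match_scalars <;> ring1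

theorem alg_u22_33 : u22 * u33 = (1 : Fq) • (u33 * u22) + (1 - q ^ 4) • (u23 * u32) := by
  (apply ext3; intro x y z; rcases y with _ | y) <;>
    simp only [LinearMap.add_apply, LinearMap.sub_apply, LinearMap.smul_apply, Module.End.mul_apply, act0, act1, act2,
      map_add, map_sub, map_smul, smul_smul, Nat.add_sub_cancel, Nat.reduceSub, Nat.reduceAdd, zero_add, pow_zero,
      sub_self, zero_smul, map_zero, smul_zero, LinearMap.zero_apply, mul_zero, zero_mul, add_zero, sub_zero, zero_sub, map_neg] <;>
    match_scalars <;> ring1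

theorem alg_u21_32 : u21 * u32 = (1 : Fq) • (u32 * u21) + (q ^ 2 - (q ^ 2)⁻¹) • (u22 * u31) := by
  have hq := q_ne
  (apply ext3; intro x y z; rcases x with _ | x <;> rcases y with _ | y) <;>
    simp only [LinearMap.add_apply, LinearMap.sub_apply, LinearMap.smul_apply, Module.End.mul_apply, act0, act1, act2,
      map_add, map_sub, map_smul, smul_smul, Nat.add_sub_cancel, Nat.reduceSub, Nat.reduceAdd, zero_add, pow_zero,
      sub_self, zero_smul, map_zero, smul_zero, LinearMap.zero_apply, mul_zero, zero_mul, add_zero, sub_zero, zero_sub, map_neg] <;>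
    match_scalars <;> (field_simp; ring1)

theorem alg_u21_33 : u21 * u33 = (1 : Fq) • (u33 * u21) + (1 - q ^ 4) • (u23 * u31) := by
  (apply ext3; intro x y z; rcases y with _ | y) <;>
    simp only [LinearMap.add_apply, LinearMap.sub_apply, LinearMap.smul_apply, Module.End.mul_apply, act0, act1, act2,
      map_add, map_sub, map_smul, smul_smul, Nat.add_sub_cancel, Nat.reduceSub, Nat.reduceAdd, zero_add, pow_zero,
      sub_self, zero_smul, map_zero, smul_zero, LinearMap.zero_apply, mul_zero, zero_mul, add_zero, sub_zero, zero_sub, map_neg] <;>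
    match_scalars <;> ring1

theorem alg_u11_32 : u11 * u32 = (1 : Fq) • (u32 * u11) + (1 - q ^ 4) • (u12 * u31) := by
  (apply ext3; intro x y z; rcases x with _ | x <;> rcases y with _ | y) <;>
    simp only [LinearMap.add_apply, LinearMap.sub_apply, LinearMap.smul_apply, Module.End.mul_apply, act0, act1, act2,
      map_add, map_sub, map_smul, smul_smul, Nat.add_sub_cancel, Nat.reduceSub, Nat.reduceAdd, zero_add, pow_zero,
      sub_self, zero_smul, map_zero, smul_zero, LinearMap.zero_apply, mul_zero, zero_mul, add_zero, sub_zero, zero_sub, map_neg] <;>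
    match_scalars <;> ring1

theorem alg_u11_33 : u11 * u33 = (1 : Fq) • (u33 * u11) + (q ^ 6 - q ^ 2) • (u13 * u31) := by
  (apply ext3; intro x y z; rcases y with _ | y) <;>
    simp only [LinearMap.add_apply, LinearMap.sub_apply, LinearMap.smul_apply, Module.End.mul_apply, act0, act1, act2,
      map_add, map_sub, map_smul, smul_smul, Nat.add_sub_cancel, Nat.reduceSub, Nat.reduceAdd, zero_add, pow_zero,
      sub_self, zero_smul, map_zero, smul_zero, LinearMap.zero_apply, mul_zero, zero_mul, add_zero, sub_zero, zero_sub, map_neg] <;>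
    match_scalars <;> ring1

theorem comm_mul {S A A' B B' : Module.End Fq (WW 3)} (c : Fq) (h1 : A * S = S * A') (h2 : B * S = S * B') :
    (c • (A * B)) * S = S * (c • (A' * B')) := by
  rw [smul_mul_assoc, mul_smul_comm, mul_assoc, h2, ← mul_assoc, h1, mul_assoc]

theorem comm_minor {S A A' B B' C C' D D' : Module.End Fq (WW 3)} (c d : Fq) (h1 : A * S = S * A')
    (h2 : B * S = S * B') (h3 : C * S = S * C') (h4 : D * S = S * D') :
    (c • (A * B) + d • (C * D)) * S = S * (c • (A' * B') + d • (C' * D')) := by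
  rw [add_mul, mul_add, comm_mul c h1 h2, comm_mul d h3 h4]

theorem R23 : t23 * S3 = S3 * u23 := by
  refine ind3 R33 alg_t23_32 alg_u23_32 (by rw [zero_mul, mul_zero])
    alg_t23_33 alg_u23_33 (by rw [zero_mul, mul_zero]) ?_
  intro k
  simp only [LinearMap.add_apply, LinearMap.sub_apply, LinearMap.smul_apply, Module.End.mul_apply, act0, act1, act2,
    map_add, map_sub, map_smul, smul_smul, Nat.reduceSub, Nat.reduceAdd, zero_add, pow_zero, map_neg,
    sub_self, zero_smul, map_zero, smul_zero, mul_zero, zero_mul, add_zero, one_smul, mul_one, one_mul, sub_zero, zero_sub, S3_00]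

theorem R12 : t12 * S3 = S3 * u12 := by
  refine ind3 R33 alg_t12_32 alg_u12_32 (by rw [zero_mul, mul_zero])
    alg_t12_33 alg_u12_33 (comm_mul _ R13 R32) ?_
  intro k
  simp only [LinearMap.add_apply, LinearMap.sub_apply, LinearMap.smul_apply, Module.End.mul_apply, act0, act1, act2,
    map_add, map_sub, map_smul, smul_smul, Nat.reduceSub, Nat.reduceAdd, zero_add, pow_zero, map_neg,
    sub_self, zero_smul, map_zero, smul_zero, mul_zero, zero_mul, add_zero, one_smul, mul_one, one_mul, sub_zero, zero_sub, S3_00]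

theorem R22 : t22 * S3 = S3 * u22 := by
  refine ind3 R33 alg_t22_32 alg_u22_32 (by rw [zero_mul, mul_zero])
    alg_t22_33 alg_u22_33 (comm_mul _ R23 R32) ?_
  intro k
  simp only [LinearMap.add_apply, LinearMap.sub_apply, LinearMap.smul_apply, Module.End.mul_apply, act0, act1, act2,
    map_add, map_sub, map_smul, smul_smul, Nat.reduceSub, Nat.reduceAdd, zero_add, pow_zero, map_neg,
    sub_self, zero_smul, map_zero, smul_zero, mul_zero, zero_mul, add_zero, one_smul, mul_one, one_mul, sub_zero, zero_sub, S3_00]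

theorem R21 : t21 * S3 = S3 * u21 := by
  refine ind3 R33 alg_t21_32 alg_u21_32 (comm_mul _ R22 R31)
    alg_t21_33 alg_u21_33 (comm_mul _ R23 R31) ?_
  intro k
  simp only [LinearMap.add_apply, LinearMap.sub_apply, LinearMap.smul_apply, Module.End.mul_apply, act0, act1, act2,
    map_add, map_sub, map_smul, smul_smul, Nat.reduceSub, Nat.reduceAdd, zero_add, pow_zero, map_neg,
    sub_self, zero_smul, map_zero, smul_zero, mul_zero, zero_mul, add_zero, one_smul, mul_one, one_mul, sub_zero, zero_sub, S3_00]

theorem R11 : t11 * S3 = S3 * u11 := by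
  refine ind3 R33 alg_t11_32 alg_u11_32 (comm_mul _ R12 R31)
    alg_t11_33 alg_u11_33 (comm_mul _ R13 R31) ?_
  intro k
  simp only [LinearMap.add_apply, LinearMap.sub_apply, LinearMap.smul_apply, Module.End.mul_apply, act0, act1, act2,
    map_add, map_sub, map_smul, smul_smul, Nat.reduceSub, Nat.reduceAdd, zero_add, pow_zero, map_neg,
    sub_self, zero_smul, map_zero, smul_zero, mul_zero, zero_mul, add_zero, one_smul, mul_one, one_mul, sub_zero, zero_sub, S3_00]

/-- matrix entry of the other monodromy -/
abbrev v11 : Module.End Fq (WW 3) := m3 0 * m3 2 - q ^ 2 • (k3 0 * m3 1 * k3 2)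
/-- matrix entry of the other monodromy -/
abbrev v12 : Module.End Fq (WW 3) := m3 0 * k3 2 + k3 0 * m3 1 * p3 2
/-- matrix entry of the other monodromy -/
abbrev v21 : Module.End Fq (WW 3) := k3 0 * m3 2 + p3 0 * m3 1 * k3 2
/-- matrix entry of the other monodromy -/
abbrev v22 : Module.End Fq (WW 3) := p3 0 * m3 1 * p3 2 - q ^ 2 • (k3 0 * k3 2)
/-- matrix entry of the other monodromy -/
abbrev v23 : Module.End Fq (WW 3) := p3 0 * k3 1
/-- matrix entry of the other monodromy -/
abbrev v32 : Module.End Fq (WW 3) := k3 1 * p3 2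
/-- matrix entry of the other monodromy -/
abbrev v33 : Module.End Fq (WW 3) := p3 1
/-- matrix entry of the other monodromy -/
abbrev w11 : Module.End Fq (WW 3) := m3 1
/-- matrix entry of the other monodromy -/
abbrev w12 : Module.End Fq (WW 3) := k3 1 * m3 0
/-- matrix entry of the other monodromy -/
abbrev w21 : Module.End Fq (WW 3) := m3 2 * k3 1
/-- matrix entry of the other monodromy -/
abbrev w22 : Module.End Fq (WW 3) := m3 0 * p3 1 * m3 2 - q ^ 2 • (k3 0 * k3 2)
/-- matrix entry of the other monodromy -/
abbrev w23 : Module.End Fq (WW 3) := m3 2 * p3 1 * k3 0 + k3 2 * p3 0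
/-- matrix entry of the other monodromy -/
abbrev w32 : Module.End Fq (WW 3) := k3 2 * p3 1 * m3 0 + p3 2 * k3 0
/-- matrix entry of the other monodromy -/
abbrev w33 : Module.End Fq (WW 3) := p3 0 * p3 2 - q ^ 2 • (k3 0 * p3 1 * k3 2)

theorem minor_t11 : v11 = (1 : Fq) • (t11 * t22) + (q ^ 4 : Fq) • (t12 * t21) := by
  (apply ext3; intro x y z) <;>
    simp only [LinearMap.add_apply, LinearMap.sub_apply, LinearMap.smul_apply, Module.End.mul_apply, act0, act1, act2,
      map_add, map_sub, map_smul, smul_smul, Nat.add_sub_cancel, Nat.reduceSub, Nat.reduceAdd, zero_add, pow_zero,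
      sub_self, zero_smul, map_zero, smul_zero, LinearMap.zero_apply, mul_zero, zero_mul, add_zero, sub_zero, zero_sub, map_neg] <;>
    match_scalars <;> ring1

theorem minor_t12 : v12 = (1 : Fq) • (t11 * t23) + (q ^ 4 : Fq) • (t13 * t21) := by
  (apply ext3; intro x y z) <;>
    simp only [LinearMap.add_apply, LinearMap.sub_apply, LinearMap.smul_apply, Module.End.mul_apply, act0, act1, act2,
      map_add, map_sub, map_smul, smul_smul, Nat.add_sub_cancel, Nat.reduceSub, Nat.reduceAdd, zero_add, pow_zero,
      sub_self, zero_smul, map_zero, smul_zero, LinearMap.zero_apply, mul_zero, zero_mul, add_zero, sub_zero, zero_sub, map_neg] <;>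
    match_scalars <;> ring1

theorem minor_t21 : v21 = (1 : Fq) • (t11 * t32) + (q ^ 4 : Fq) • (t12 * t31) := by
  (apply ext3; intro x y z) <;>
    simp only [LinearMap.add_apply, LinearMap.sub_apply, LinearMap.smul_apply, Module.End.mul_apply, act0, act1, act2,
      map_add, map_sub, map_smul, smul_smul, Nat.add_sub_cancel, Nat.reduceSub, Nat.reduceAdd, zero_add, pow_zero,
      sub_self, zero_smul, map_zero, smul_zero, LinearMap.zero_apply, mul_zero, zero_mul, add_zero, sub_zero, zero_sub, map_neg] <;>
    match_scalars <;> ring1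

theorem minor_t22 : v22 = (1 : Fq) • (t11 * t33) + (-q ^ 6 : Fq) • (t13 * t31) := by
  (apply ext3; intro x y z) <;>
    simp only [LinearMap.add_apply, LinearMap.sub_apply, LinearMap.smul_apply, Module.End.mul_apply, act0, act1, act2,
      map_add, map_sub, map_smul, smul_smul, Nat.add_sub_cancel, Nat.reduceSub, Nat.reduceAdd, zero_add, pow_zero,
      sub_self, zero_smul, map_zero, smul_zero, LinearMap.zero_apply, mul_zero, zero_mul, add_zero, sub_zero, zero_sub, map_neg] <;>
    match_scalars <;> ring1

theorem minor_t23 : v23 = (1 : Fq) • (t12 * t33) + (q ^ 4 : Fq) • (t13 * t32) := by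
  (apply ext3; intro x y z; rcases z with _ | z) <;>
    simp only [LinearMap.add_apply, LinearMap.sub_apply, LinearMap.smul_apply, Module.End.mul_apply, act0, act1, act2,
      map_add, map_sub, map_smul, smul_smul, Nat.add_sub_cancel, Nat.reduceSub, Nat.reduceAdd, zero_add, pow_zero,
      sub_self, zero_smul, map_zero, smul_zero, LinearMap.zero_apply, mul_zero, zero_mul, add_zero, sub_zero, zero_sub, map_neg] <;>
    match_scalars <;> ring1

theorem minor_t32 : v32 = (1 : Fq) • (t21 * t33) + (q ^ 4 : Fq) • (t23 * t31) := by
  (apply ext3; intro x y z) <;>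
    simp only [LinearMap.add_apply, LinearMap.sub_apply, LinearMap.smul_apply, Module.End.mul_apply, act0, act1, act2,
      map_add, map_sub, map_smul, smul_smul, Nat.add_sub_cancel, Nat.reduceSub, Nat.reduceAdd, zero_add, pow_zero,
      sub_self, zero_smul, map_zero, smul_zero, LinearMap.zero_apply, mul_zero, zero_mul, add_zero, sub_zero, zero_sub, map_neg] <;>
    match_scalars <;> ring1

theorem minor_t33 : v33 = (1 : Fq) • (t22 * t33) + (q ^ 4 : Fq) • (t23 * t32) := by
  (apply ext3; intro x y z; rcases z with _ | z) <;>
    simp only [LinearMap.add_apply, LinearMap.sub_apply, LinearMap.smul_apply, Module.End.mul_apply, act0, act1, act2,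
      map_add, map_sub, map_smul, smul_smul, Nat.add_sub_cancel, Nat.reduceSub, Nat.reduceAdd, zero_add, pow_zero,
      sub_self, zero_smul, map_zero, smul_zero, LinearMap.zero_apply, mul_zero, zero_mul, add_zero, sub_zero, zero_sub, map_neg] <;>
    match_scalars <;> ring1

theorem minor_u11 : w11 = (1 : Fq) • (u11 * u22) + (q ^ 4 : Fq) • (u12 * u21) := by
  (apply ext3; intro x y z; rcases x with _ | x) <;>
    simp only [LinearMap.add_apply, LinearMap.sub_apply, LinearMap.smul_apply, Module.End.mul_apply, act0, act1, act2,
      map_add, map_sub, map_smul, smul_smul, Nat.add_sub_cancel, Nat.reduceSub, Nat.reduceAdd, zero_add, pow_zero,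
      sub_self, zero_smul, map_zero, smul_zero, LinearMap.zero_apply, mul_zero, zero_mul, add_zero, sub_zero, zero_sub, map_neg] <;>
    match_scalars <;> ring1

theorem minor_u12 : w12 = (1 : Fq) • (u11 * u23) + (q ^ 4 : Fq) • (u13 * u21) := by
  (apply ext3; intro x y z; rcases y with _ | y) <;>
    simp only [LinearMap.add_apply, LinearMap.sub_apply, LinearMap.smul_apply, Module.End.mul_apply, act0, act1, act2,
      map_add, map_sub, map_smul, smul_smul, Nat.add_sub_cancel, Nat.reduceSub, Nat.reduceAdd, zero_add, pow_zero,
      sub_self, zero_smul, map_zero, smul_zero, LinearMap.zero_apply, mul_zero, zero_mul, add_zero, sub_zero, zero_sub, map_neg] <;>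
    match_scalars <;> ring1

theorem minor_u21 : w21 = (1 : Fq) • (u11 * u32) + (q ^ 4 : Fq) • (u12 * u31) := by
  (apply ext3; intro x y z) <;>
    simp only [LinearMap.add_apply, LinearMap.sub_apply, LinearMap.smul_apply, Module.End.mul_apply, act0, act1, act2,
      map_add, map_sub, map_smul, smul_smul, Nat.add_sub_cancel, Nat.reduceSub, Nat.reduceAdd, zero_add, pow_zero,
      sub_self, zero_smul, map_zero, smul_zero, LinearMap.zero_apply, mul_zero, zero_mul, add_zero, sub_zero, zero_sub, map_neg] <;>
    match_scalars <;> ring1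

theorem minor_u22 : w22 = (1 : Fq) • (u11 * u33) + (-q ^ 6 : Fq) • (u13 * u31) := by
  (apply ext3; intro x y z) <;>
    simp only [LinearMap.add_apply, LinearMap.sub_apply, LinearMap.smul_apply, Module.End.mul_apply, act0, act1, act2,
      map_add, map_sub, map_smul, smul_smul, Nat.add_sub_cancel, Nat.reduceSub, Nat.reduceAdd, zero_add, pow_zero,
      sub_self, zero_smul, map_zero, smul_zero, LinearMap.zero_apply, mul_zero, zero_mul, add_zero, sub_zero, zero_sub, map_neg] <;>
    match_scalars <;> ring1

theorem minor_u23 : w23 = (1 : Fq) • (u12 * u33) + (q ^ 4 : Fq) • (u13 * u32) := by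
  (apply ext3; intro x y z) <;>
    simp only [LinearMap.add_apply, LinearMap.sub_apply, LinearMap.smul_apply, Module.End.mul_apply, act0, act1, act2,
      map_add, map_sub, map_smul, smul_smul, Nat.add_sub_cancel, Nat.reduceSub, Nat.reduceAdd, zero_add, pow_zero,
      sub_self, zero_smul, map_zero, smul_zero, LinearMap.zero_apply, mul_zero, zero_mul, add_zero, sub_zero, zero_sub, map_neg] <;>
    match_scalars <;> ring1

theorem minor_u32 : w32 = (1 : Fq) • (u21 * u33) + (q ^ 4 : Fq) • (u23 * u31) := by
  (apply ext3; intro x y z) <;>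
    simp only [LinearMap.add_apply, LinearMap.sub_apply, LinearMap.smul_apply, Module.End.mul_apply, act0, act1, act2,
      map_add, map_sub, map_smul, smul_smul, Nat.add_sub_cancel, Nat.reduceSub, Nat.reduceAdd, zero_add, pow_zero,
      sub_self, zero_smul, map_zero, smul_zero, LinearMap.zero_apply, mul_zero, zero_mul, add_zero, sub_zero, zero_sub, map_neg] <;>
    match_scalars <;> ring1

theorem minor_u33 : w33 = (1 : Fq) • (u22 * u33) + (q ^ 4 : Fq) • (u23 * u32) := by
  (apply ext3; intro x y z) <;>
    simp only [LinearMap.add_apply, LinearMap.sub_apply, LinearMap.smul_apply, Module.End.mul_apply, act0, act1, act2,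
      map_add, map_sub, map_smul, smul_smul, Nat.add_sub_cancel, Nat.reduceSub, Nat.reduceAdd, zero_add, pow_zero,
      sub_self, zero_smul, map_zero, smul_zero, LinearMap.zero_apply, mul_zero, zero_mul, add_zero, sub_zero, zero_sub, map_neg] <;>
    match_scalars <;> ring1

theorem Q11 : v11 * S3 = S3 * w11 := by
  rw [minor_t11, minor_u11]
  exact comm_minor _ _ R11 R22 R12 R21

theorem Q12 : v12 * S3 = S3 * w12 := by
  rw [minor_t12, minor_u12]
  exact comm_minor _ _ R11 R23 R13 R21

theorem Q21 : v21 * S3 = S3 * w21 := by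
  rw [minor_t21, minor_u21]
  exact comm_minor _ _ R11 R32 R12 R31

theorem Q22 : v22 * S3 = S3 * w22 := by
  rw [minor_t22, minor_u22]
  exact comm_minor _ _ R11 R33 R13 R31

theorem Q23 : v23 * S3 = S3 * w23 := by
  rw [minor_t23, minor_u23]
  exact comm_minor _ _ R12 R33 R13 R32

theorem Q32 : v32 * S3 = S3 * w32 := by
  rw [minor_t32, minor_u32]
  exact comm_minor _ _ R21 R33 R23 R31

theorem Q33 : v33 * S3 = S3 * w33 := by
  rw [minor_t33, minor_u33]
  exact comm_minor _ _ R22 R33 R23 R32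


set_option linter.unusedSimpArgs false

/-- 7×7 matrices of operators -/
abbrev MM (n : ℕ) : Type := Matrix (Fin 7) (Fin 7) (Module.End Fq (WW n))

/-- one-site monodromy matrix -/
def Lm {n : ℕ} (p : Fin n) (T : Matrix (Fin 7) (Fin 7) (F →ₗ[Fq] F)) : MM n :=
  fun i j => atp p (T i j)

/-- intertwining relation -/
def Intw {n : ℕ} (X : Module.End Fq (WW n)) (A B : MM n) : Prop :=
  ∀ i j, A i j * X = X * B i j

theorem Intw.comp {n : ℕ} {X Y : Module.End Fq (WW n)} {A B C : MM n} (h : Intw X A B)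
    (h' : Intw Y B C) : Intw (X * Y) A C := by
  intro i j
  rw [← mul_assoc, h, mul_assoc, h', mul_assoc]

theorem Intw.mul {n : ℕ} {X : Module.End Fq (WW n)} {A B C D : MM n} (h : Intw X A B)
    (h' : Intw X C D) : Intw X (A * C) (B * D) := by
  intro i j
  rw [Matrix.mul_apply, Matrix.mul_apply, Finset.sum_mul, Finset.mul_sum]
  refine Finset.sum_congr rfl fun k _ => ?_
  rw [mul_assoc, h', ← mul_assoc, h, mul_assoc]

/-- multi-site operator matrices -/
def OpM {m n : ℕ} (e : Fin m → Fin n) (A : MM m) : MM n := fun i j => Op e (A i j)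

theorem OpM_mul {m n : ℕ} {e : Fin m → Fin n} (he : Function.Injective e) (A B : MM m) :
    OpM e (A * B) = OpM e A * OpM e B := by
  funext i j
  simp only [OpM, Matrix.mul_apply, Op_sum, Op_mul he]

theorem OpM_Lm {m n : ℕ} {e : Fin m → Fin n} (he : Function.Injective e) (p : Fin m)
    (T : Matrix (Fin 7) (Fin 7) (F →ₗ[Fq] F)) : OpM e (Lm p T) = Lm (e p) T := by
  funext i j
  simp only [OpM, Lm, Op_atp he]

theorem Intw.op {m n : ℕ} {e : Fin m → Fin n} (he : Function.Injective e)
    {X : Module.End Fq (WW m)} {A B : MM m} (h : Intw X A B) :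
    Intw (Op e X) (OpM e A) (OpM e B) := by
  intro i j
  rw [OpM, OpM, ← Op_mul he, ← Op_mul he, h]

theorem Intw.triv {m n : ℕ} {e : Fin m → Fin n} (he : Function.Injective e)
    (X : Module.End Fq (WW m)) (p : Fin n) (hp : ∀ a, e a ≠ p)
    (T : Matrix (Fin 7) (Fin 7) (F →ₗ[Fq] F)) :
    Intw (Op e X) (Lm p T) (Lm p T) := fun _ _ => Op_comm_atp he X p hp _

/-- index equivalence -/
def e4 : (ℕ × (ℕ × (ℕ × ℕ))) ≃ (Fin 4 → ℕ) where
  toFun x := ![x.1, x.2.1, x.2.2.1, x.2.2.2]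
  invFun f := (f 0, f 1, f 2, f 3)
  left_inv x := by simp
  right_inv f := by funext i; fin_cases i <;> rfl

/-- standard basis of `F` -/
def bF : Module.Basis ℕ Fq F := Finsupp.basisSingleOne

theorem bF_apply (m : ℕ) : bF m = ket m := by simp [bF, ket]

/-- fourfold tensor product -/
abbrev T4 : Type := F ⊗[Fq] (F ⊗[Fq] (F ⊗[Fq] F))

/-- identification of the fourfold tensor product -/
def tau : (F ⊗[Fq] (F ⊗[Fq] (F ⊗[Fq] F))) ≃ₗ[Fq] WW 4 :=
  ((bF.tensorProduct (bF.tensorProduct (bF.tensorProduct bF))).reindex e4).repr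

theorem tau_ket (a b c d : ℕ) :
    tau (ket a ⊗ₜ[Fq] (ket b ⊗ₜ[Fq] (ket c ⊗ₜ[Fq] ket d))) = bs ![a, b, c, d] := by
  have := ((bF.tensorProduct (bF.tensorProduct (bF.tensorProduct bF))).reindex e4).repr_self
    ![a, b, c, d]
  rw [Module.Basis.reindex_apply] at this
  have h : e4.symm ![a, b, c, d] = (a, b, c, d) := rfl
  rw [h] at this
  simp only [Module.Basis.tensorProduct_apply, bF_apply] at this
  exact this

theorem ext_tens {M : Type*} [AddCommMonoid M] [Module Fq M]
    {X Y : (F ⊗[Fq] (F ⊗[Fq] (F ⊗[Fq] F))) →ₗ[Fq] M}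
    (h : ∀ a b c d, X (ket a ⊗ₜ[Fq] (ket b ⊗ₜ[Fq] (ket c ⊗ₜ[Fq] ket d)))
      = Y (ket a ⊗ₜ[Fq] (ket b ⊗ₜ[Fq] (ket c ⊗ₜ[Fq] ket d)))) : X = Y := by
  apply (bF.tensorProduct (bF.tensorProduct (bF.tensorProduct bF))).ext
  rintro ⟨a, b, c, d⟩
  simp only [Module.Basis.tensorProduct_apply, bF_apply]
  exact h a b c d

/-- tensor-to-WW4 map in one slot -/
theorem upd4_all (a b c d m : ℕ) : Function.update ![a, b, c, d] 0 m = ![m, b, c, d] ∧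
    Function.update ![a, b, c, d] 1 m = ![a, m, c, d] ∧
    Function.update ![a, b, c, d] 2 m = ![a, b, m, d] ∧
    Function.update ![a, b, c, d] 3 m = ![a, b, c, m] := by
  refine ⟨?_, ?_, ?_, ?_⟩ <;> (funext i; fin_cases i <;> rfl)

theorem tau_slot0 (b c d : ℕ) (v : F) :
    tau (v ⊗ₜ[Fq] (ket b ⊗ₜ[Fq] (ket c ⊗ₜ[Fq] ket d))) = emb 0 ![0, b, c, d] v := by
  have : (tau : T4 →ₗ[Fq] WW 4) ∘ₗ ((TensorProduct.mk Fq _ _).flip (ket b ⊗ₜ[Fq] (ket c ⊗ₜ[Fq] ket d)))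
      = emb 0 ![0, b, c, d] := by
    apply ext_ket; intro m
    simp [emb_ket, tau_ket, (upd4_all 0 b c d m).1]
  simpa using LinearMap.congr_fun this v

theorem tau_map0 (X : F →ₗ[Fq] F) (u : T4) :
    tau (TensorProduct.map X LinearMap.id u) = atp 0 X (tau u) := by
  have : (tau : T4 →ₗ[Fq] WW 4) ∘ₗ (TensorProduct.map X LinearMap.id : T4 →ₗ[Fq] T4)
      = (atp 0 X) ∘ₗ (tau : T4 →ₗ[Fq] WW 4) := by
    apply ext_tens; intro a b c d
    simp only [LinearMap.comp_apply, TensorProduct.map_tmul, LinearMap.id_apply,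
      LinearEquiv.coe_coe, tau_ket, tau_slot0, atp_bs, Matrix.cons_val_zero]
    rw [atp_emb]
  exact LinearMap.congr_fun this u

theorem tau_map1 (X : F →ₗ[Fq] F) (u : T4) :
    tau (TensorProduct.map LinearMap.id (TensorProduct.map X LinearMap.id) u) = atp 1 X (tau u) := by
  have : (tau : T4 →ₗ[Fq] WW 4) ∘ₗ (TensorProduct.map LinearMap.id (TensorProduct.map X LinearMap.id) : T4 →ₗ[Fq] T4)
      = (atp 1 X) ∘ₗ (tau : T4 →ₗ[Fq] WW 4) := by
    apply ext_tens; intro a b c d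
    simp only [LinearMap.comp_apply, TensorProduct.map_tmul, LinearMap.id_apply,
      LinearEquiv.coe_coe, tau_ket, atp_bs, Matrix.cons_val_zero, Matrix.cons_val_one]
    have : (tau : T4 →ₗ[Fq] WW 4) ∘ₗ (TensorProduct.mk Fq _ _ (ket a)) ∘ₗ
      ((TensorProduct.mk Fq _ _).flip (ket c ⊗ₜ[Fq] ket d)) = emb 1 ![a, b, c, d] := by
      apply ext_ket; intro m
      simp [emb_ket, tau_ket, (upd4_all a b c d m).2.1]
    simpa using LinearMap.congr_fun this (X (ket b))
  exact LinearMap.congr_fun this u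

theorem tau_map2 (X : F →ₗ[Fq] F) (u : T4) :
    tau (TensorProduct.map LinearMap.id (TensorProduct.map LinearMap.id
      (TensorProduct.map X LinearMap.id)) u) = atp 2 X (tau u) := by
  have : (tau : T4 →ₗ[Fq] WW 4) ∘ₗ (TensorProduct.map LinearMap.id (TensorProduct.map LinearMap.id
      (TensorProduct.map X LinearMap.id)) : T4 →ₗ[Fq] T4)
      = (atp 2 X) ∘ₗ (tau : T4 →ₗ[Fq] WW 4) := by
    apply ext_tens; intro a b c d
    simp only [LinearMap.comp_apply, TensorProduct.map_tmul, LinearMap.id_apply,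
      LinearEquiv.coe_coe, tau_ket, atp_bs]
    have : (tau : T4 →ₗ[Fq] WW 4) ∘ₗ (TensorProduct.mk Fq _ _ (ket a)) ∘ₗ
      (TensorProduct.mk Fq _ _ (ket b)) ∘ₗ
      ((TensorProduct.mk Fq _ _).flip (ket d)) = emb 2 ![a, b, c, d] := by
      apply ext_ket; intro m
      simp [emb_ket, tau_ket, (upd4_all a b c d m).2.2.1]
    simpa using LinearMap.congr_fun this (X (ket c))
  exact LinearMap.congr_fun this u

theorem tau_map3 (X : F →ₗ[Fq] F) (u : T4) :
    tau (TensorProduct.map LinearMap.id (TensorProduct.map LinearMap.id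
      (TensorProduct.map LinearMap.id X)) u) = atp 3 X (tau u) := by
  have : (tau : T4 →ₗ[Fq] WW 4) ∘ₗ (TensorProduct.map LinearMap.id (TensorProduct.map LinearMap.id
      (TensorProduct.map LinearMap.id X)) : T4 →ₗ[Fq] T4)
      = (atp 3 X) ∘ₗ (tau : T4 →ₗ[Fq] WW 4) := by
    apply ext_tens; intro a b c d
    simp only [LinearMap.comp_apply, TensorProduct.map_tmul, LinearMap.id_apply,
      LinearEquiv.coe_coe, tau_ket, atp_bs]
    have : (tau : T4 →ₗ[Fq] WW 4) ∘ₗ (TensorProduct.mk Fq _ _ (ket a)) ∘ₗ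
      (TensorProduct.mk Fq _ _ (ket b)) ∘ₗ
      ((TensorProduct.mk Fq _ _) (ket c)) = emb 3 ![a, b, c, d] := by
      apply ext_ket; intro m
      simp [emb_ket, tau_ket, (upd4_all a b c d m).2.2.2]
    simpa using LinearMap.congr_fun this (X (ket d))
  exact LinearMap.congr_fun this u

theorem tau_map (X Y Z W : F →ₗ[Fq] F) (u : T4) :
    tau (TensorProduct.map X (TensorProduct.map Y (TensorProduct.map Z W)) u)
      = (atp 0 X * (atp 1 Y * (atp 2 Z * atp 3 W)) : Module.End Fq (WW 4)) (tau u) := by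
  simp only [Module.End.mul_apply, ← tau_map0, ← tau_map1, ← tau_map2, ← tau_map3]
  congr 1
  simp only [← LinearMap.comp_apply, ← TensorProduct.map_comp, LinearMap.id_comp, LinearMap.comp_id]

/-- reversal of tensor factors -/
def rv : Module.End Fq (WW 4) := Finsupp.lmapDomain Fq Fq (fun f => f ∘ Fin.rev)

theorem rv_bs (f : Fin 4 → ℕ) : rv (bs f) = bs (f ∘ Fin.rev) := by simp [rv, bs]

theorem rv_atp (p : Fin 4) (X : F →ₗ[Fq] F) : atp p.rev X * rv = rv * atp p X := by
  apply ext_bs; intro f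
  rw [Module.End.mul_apply, Module.End.mul_apply, rv_bs, atp_bs, atp_bs]
  simp only [Function.comp, Fin.rev_rev]
  have : emb p.rev (f ∘ Fin.rev) = rv ∘ₗ emb p f := by
    apply ext_ket; intro m
    rw [LinearMap.comp_apply, emb_ket, emb_ket, rv_bs]
    congr 1
    funext i
    by_cases h : i = p.rev
    · subst h; simp
    · have h' : i.rev ≠ p := fun h' => h (by rw [← h', Fin.rev_rev])
      simp [Function.update_of_ne h, Function.update_of_ne h']
  exact LinearMap.congr_fun this _

/-- the operator `J` on four sites -/
def J4 (Ξ : F ⊗[Fq] (F ⊗[Fq] (F ⊗[Fq] F)) →ₗ[Fq] F ⊗[Fq] (F ⊗[Fq] (F ⊗[Fq] F))) :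
    Module.End Fq (WW 4) :=
  (tau : T4 →ₗ[Fq] WW 4) ∘ₗ Ξ ∘ₗ (tau.symm : WW 4 →ₗ[Fq] _) ∘ₗ rv

theorem J4_bs (Ξ) (i j k l : ℕ) : J4 Ξ (bs ![i, j, k, l]) =
    tau (Ξ (ket l ⊗ₜ[Fq] (ket k ⊗ₜ[Fq] (ket j ⊗ₜ[Fq] ket i)))) := by
  have h : (![i, j, k, l] : Fin 4 → ℕ) ∘ Fin.rev = ![l, k, j, i] := by
    funext a; fin_cases a <;> rfl
  simp only [J4, LinearMap.comp_apply, rv_bs, h, LinearEquiv.coe_coe]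
  rw [← tau_ket, LinearEquiv.symm_apply_apply]

theorem Lm4 (A B C D : MM 4) (i j : Fin 7) : (A * (B * (C * D))) i j =
    ∑ K : Fin 7, ∑ L : Fin 7, ∑ M : Fin 7, A i K * (B K L * (C L M * D M j)) := by
  simp only [Matrix.mul_apply, Finset.mul_sum]

theorem J4_intw {α₂ β₂ α₃ : Fq} {Ξ} (hΞ : IsNormalizedIntertwiner α₂ β₂ α₃ Ξ) :
    Intw (J4 Ξ) (Lm 0 (P3 α₃) * (Lm 1 (P2 α₂ β₂) * (Lm 2 (P3 α₃) * Lm 3 (P2 α₂ β₂))))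
      (Lm 3 (P2 α₂ β₂) * (Lm 2 (P3 α₃) * (Lm 1 (P2 α₂ β₂) * Lm 0 (P3 α₃)))) := by
  intro I J
  obtain ⟨-, -, h⟩ := hΞ
  have h := h I J
  have hr : (Lm 0 (P2 α₂ β₂) * (Lm 1 (P3 α₃) * (Lm 2 (P2 α₂ β₂) * Lm 3 (P3 α₃))) : MM 4) I J * rv
    = rv * (Lm 3 (P2 α₂ β₂) * (Lm 2 (P3 α₃) * (Lm 1 (P2 α₂ β₂) * Lm 0 (P3 α₃))) : MM 4) I J := by
    have : Intw rv (Lm 0 (P2 α₂ β₂) * (Lm 1 (P3 α₃) * (Lm 2 (P2 α₂ β₂) * Lm 3 (P3 α₃))))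
      (Lm 3 (P2 α₂ β₂) * (Lm 2 (P3 α₃) * (Lm 1 (P2 α₂ β₂) * Lm 0 (P3 α₃)))) := by
      refine Intw.mul (fun i j => rv_atp 3 _) (Intw.mul (fun i j => rv_atp 2 _)
        (Intw.mul (fun i j => rv_atp 1 _) (fun i j => rv_atp 0 _)))
    exact this I J
  apply LinearMap.ext
  intro w
  have hr := LinearMap.congr_fun hr w
  simp only [Module.End.mul_apply] at hr ⊢
  simp only [J4, LinearMap.comp_apply]
  rw [← hr]
  obtain ⟨u, hu⟩ := tau.surjective (rv w)
  rw [← hu]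
  have h1 := congrArg tau (LinearMap.congr_fun h u)
  simp only [LinearMap.comp_apply, LinearMap.sum_apply, map_sum, tau_map] at h1
  simp only [LinearEquiv.coe_coe, LinearEquiv.symm_apply_apply, Lm4, LinearMap.sum_apply, Lm, map_sum]
  rw [h1]
  simp only [← tau_map, LinearEquiv.symm_apply_apply]

theorem J4_vac {α₂ β₂ α₃ : Fq} {Ξ} (hΞ : IsNormalizedIntertwiner α₂ β₂ α₃ Ξ) :
    J4 Ξ (bs ![0, 0, 0, 0]) = bs ![0, 0, 0, 0] := by
  rw [J4_bs, hΞ.2.1, tau_ket]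

theorem inj4 {p1 p2 p3 p4 : Fin 9} (h : [p1, p2, p3, p4].Nodup) :
    Function.Injective ![p1, p2, p3, p4] := by
  have := List.nodup_iff_injective_get.1 h
  intro a b hab
  apply this
  fin_cases a <;> fin_cases b <;> first | rfl | simpa using hab

theorem inj3 {p1 p2 p3 : Fin 9} (h : [p1, p2, p3].Nodup) :
    Function.Injective ![p1, p2, p3] := by
  have := List.nodup_iff_injective_get.1 h
  intro a b hab
  apply this
  fin_cases a <;> fin_cases b <;> first | rfl | simpa using hab

theorem ext_upd4 {p1 p2 p3 p4 : Fin 9} (h : [p1, p2, p3, p4].Nodup) (f : Fin 9 → ℕ) (a b c d : ℕ) :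
    Function.extend ![p1, p2, p3, p4] ![a, b, c, d] f = upd4' f p1 p2 p3 p4 a b c d := by
  have he := inj4 h
  simp only [List.nodup_cons, List.mem_cons, not_or] at h
  funext r
  by_cases hr : ∃ i, (![p1, p2, p3, p4] : Fin 4 → Fin 9) i = r
  · obtain ⟨i, rfl⟩ := hr
    rw [he.extend_apply]
    fin_cases i <;> simp [upd4', Function.update, h]
  · rw [Function.extend_apply' _ _ _ hr]
    simp only [Fin.exists_fin_succ] at hr
    simp at hr
    simp [upd4', Function.update, Ne.symm hr.1, Ne.symm hr.2.1, Ne.symm hr.2.2.1, Ne.symm hr.2.2.2]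

theorem ext_upd3 {p1 p2 p3 : Fin 9} (h : [p1, p2, p3].Nodup) (f : Fin 9 → ℕ) (a b c : ℕ) :
    Function.extend ![p1, p2, p3] ![a, b, c] f = upd3' f p1 p2 p3 a b c := by
  have he := inj3 h
  simp only [List.nodup_cons, List.mem_cons, not_or] at h
  funext r
  by_cases hr : ∃ i, (![p1, p2, p3] : Fin 3 → Fin 9) i = r
  · obtain ⟨i, rfl⟩ := hr
    rw [he.extend_apply]
    fin_cases i <;> simp [upd3', Function.update, h]
  · rw [Function.extend_apply' _ _ _ hr]
    simp only [Fin.exists_fin_succ] at hr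
    simp at hr
    simp [upd3', Function.update]
    grind

theorem ext_inj {m n : ℕ} {e : Fin m → Fin n} (he : Function.Injective e) (f : Fin n → ℕ) :
    Function.Injective (fun g : Fin m → ℕ => Function.extend e g f) := by
  intro g g' h
  funext i
  have := congrFun h (e i)
  simpa [he.extend_apply] using this

theorem J9_eq {Ξ} {Jc : ℕ → ℕ → ℕ → ℕ → ℕ → ℕ → ℕ → ℕ → Fq} (hJ : ∀ i j k l : ℕ,
      Ξ (ket l ⊗ₜ[Fq] (ket k ⊗ₜ[Fq] (ket j ⊗ₜ[Fq] ket i)))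
        = ∑ᶠ a : ℕ, ∑ᶠ b : ℕ, ∑ᶠ c : ℕ, ∑ᶠ d : ℕ,
            Jc a b c d i j k l • (ket a ⊗ₜ[Fq] (ket b ⊗ₜ[Fq] (ket c ⊗ₜ[Fq] ket d))))
    {p1 p2 p3 p4 : Fin 9} (h : [p1, p2, p3, p4].Nodup) :
    J9 Jc p1 p2 p3 p4 = Op ![p1, p2, p3, p4] (J4 Ξ) := by
  apply ext_bs; intro f
  have h4 : f ∘ ![p1, p2, p3, p4] = ![f p1, f p2, f p3, f p4] := by
    funext i; fin_cases i <;> rfl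
  rw [Op_bs, h4, J4_bs, hJ]
  let φ : (F ⊗[Fq] (F ⊗[Fq] (F ⊗[Fq] F))) →ₗ[Fq] WW 9 :=
    Finsupp.lmapDomain Fq Fq (fun g => Function.extend ![p1, p2, p3, p4] g f) ∘ₗ
      (tau : T4 →ₗ[Fq] WW 4)
  have hφ : Function.Injective φ.toAddMonoidHom :=
    (Finsupp.mapDomain_injective (ext_inj (inj4 h) f)).comp tau.injective
  have e : J9 Jc p1 p2 p3 p4 (bs f) = ∑ᶠ a : ℕ, ∑ᶠ b : ℕ, ∑ᶠ c : ℕ, ∑ᶠ d : ℕ,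
      φ.toAddMonoidHom (Jc a b c d (f p1) (f p2) (f p3) (f p4) • (ket a ⊗ₜ[Fq] (ket b ⊗ₜ[Fq] (ket c ⊗ₜ[Fq] ket d)))) := by
    simp only [J9, bs, Finsupp.lift_apply, Finsupp.sum_single_index, zero_smul, one_smul]
    refine finsum_congr fun a => finsum_congr fun b => finsum_congr fun c => finsum_congr fun d => ?_
    change _ = φ _
    rw [map_smul]
    simp only [φ, LinearMap.comp_apply, LinearEquiv.coe_coe, tau_ket, Finsupp.lmapDomain_apply, bs,
      Finsupp.mapDomain_single, ext_upd4 h]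
  rw [e]
  simp only [← AddMonoidHom.map_finsum_of_injective _ hφ]
  rfl

theorem S9_eq {p1 p2 p3 : Fin 9} (h : [p1, p2, p3].Nodup) :
    S9 p1 p2 p3 = Op ![p1, p2, p3] S3 := by
  apply ext_bs; intro f
  have h4 : f ∘ ![p1, p2, p3] = ![f p1, f p2, f p3] := by
    funext i; fin_cases i <;> rfl
  rw [Op_bs, h4, S3_bs']
  simp only [map_sum, map_smul, Finsupp.lmapDomain_apply, bs, Finsupp.mapDomain_single, ext_upd3 h]
  simp only [S9, Finsupp.lift_apply, Finsupp.sum_single_index, zero_smul, one_smul]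
  simp only [Matrix.cons_val_zero, Matrix.cons_val_one, Matrix.cons_val]
  set N := f p1 + f p2 + f p3 + 1 with hN
  have z : ∀ a b c : ℕ, (N ≤ a ∨ N ≤ b ∨ N ≤ c) → Scoef a b c (f p1) (f p2) (f p3) = 0 := by
    intro a b c hh
    apply Scoef_ne
    omega
  rw [finsum_eq_finsetSum_of_support_subset (s := Finset.range N)]
  · refine Finset.sum_congr rfl fun a _ => ?_
    rw [finsum_eq_finsetSum_of_support_subset (s := Finset.range N)]
    · refine Finset.sum_congr rfl fun b _ => ?_
      rw [finsum_eq_finsetSum_of_support_subset (s := Finset.range N)]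
      intro c hc
      by_contra hn
      simp only [Finset.coe_range, Set.mem_Iio, not_lt] at hn
      apply hc
      simp only [z a b c (Or.inr (Or.inr hn)), zero_smul]
    · intro b hc
      by_contra hn
      simp only [Finset.coe_range, Set.mem_Iio, not_lt] at hn
      apply hc
      simp only [z a b _ (Or.inr (Or.inl hn)), zero_smul, finsum_zero]
  · intro a hc
    by_contra hn
    simp only [Finset.coe_range, Set.mem_Iio, not_lt] at hn
    apply hc
    simp only [z a _ _ (Or.inl hn), zero_smul, finsum_zero]


set_option linter.unusedSimpArgs false
set_option linter.unreachableTactic false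
set_option linter.unusedTactic false

theorem sum7 {M : Type*} [AddCommMonoid M] (f : Fin 7 → M) :
    ∑ i, f i = f 0 + f 1 + f 2 + f 3 + f 4 + f 5 + f 6 := Fin.sum_univ_seven f

section rows
variable {n : ℕ} (p : Fin n) (B : MM n) (j : Fin 7)

theorem row1 (α β : Fq) :
    (Lm p (P1 α β) * B) 0 j = atp p Am * B 0 j + α • (atp p K2 * B 1 j) ∧
    (Lm p (P1 α β) * B) 1 j = β • (atp p K2 * B 0 j) + atp p Ap * B 1 j ∧
    (Lm p (P1 α β) * B) 2 j = B 2 j ∧ (Lm p (P1 α β) * B) 3 j = B 3 j ∧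
    (Lm p (P1 α β) * B) 4 j = B 4 j ∧
    (Lm p (P1 α β) * B) 5 j = atp p Am * B 5 j + (q ^ 2 * β⁻¹) • (atp p K2 * B 6 j) ∧
    (Lm p (P1 α β) * B) 6 j = (q ^ 2 * α⁻¹) • (atp p K2 * B 5 j) + atp p Ap * B 6 j := by
  refine ⟨?_, ?_, ?_, ?_, ?_, ?_, ?_⟩ <;>
    simp only [Matrix.mul_apply, sum7, Lm, P1_e, atp_zero, atp_one, atp_smul, zero_mul, one_mul,
      add_zero, zero_add, smul_mul_assoc]

theorem row2 (α β : Fq) :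
    (Lm p (P2 α β) * B) 0 j = B 0 j ∧
    (Lm p (P2 α β) * B) 1 j = atp p Am * B 1 j + α • (atp p K2 * B 2 j) ∧
    (Lm p (P2 α β) * B) 2 j = β • (atp p K2 * B 1 j) + atp p Ap * B 2 j ∧
    (Lm p (P2 α β) * B) 3 j = B 3 j ∧
    (Lm p (P2 α β) * B) 4 j = atp p Am * B 4 j + (q ^ 2 * β⁻¹) • (atp p K2 * B 5 j) ∧
    (Lm p (P2 α β) * B) 5 j = (q ^ 2 * α⁻¹) • (atp p K2 * B 4 j) + atp p Ap * B 5 j ∧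
    (Lm p (P2 α β) * B) 6 j = B 6 j := by
  refine ⟨?_, ?_, ?_, ?_, ?_, ?_, ?_⟩ <;>
    simp only [Matrix.mul_apply, sum7, Lm, P2_e, atp_zero, atp_one, atp_smul, zero_mul, one_mul,
      add_zero, zero_add, smul_mul_assoc]
end rows

theorem cs {p r : Fin 3} (h : p ≠ r) (X Y : F →ₗ[Fq] F) (Z : Module.End Fq (WW 3)) :
    atp p X * (atp r Y * Z) = atp r Y * (atp p X * Z) := by
  rw [← mul_assoc, atp_comm h, mul_assoc]

theorem c20 (X Y : F →ₗ[Fq] F) : atp (2 : Fin 3) X * atp 0 Y = atp 0 Y * atp 2 X :=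
  atp_comm (by decide) X Y
theorem c10 (X Y : F →ₗ[Fq] F) : atp (1 : Fin 3) X * atp 0 Y = atp 0 Y * atp 1 X :=
  atp_comm (by decide) X Y
theorem c21 (X Y : F →ₗ[Fq] F) : atp (2 : Fin 3) X * atp 1 Y = atp 1 Y * atp 2 X :=
  atp_comm (by decide) X Y
theorem c20' (X Y : F →ₗ[Fq] F) (Z : Module.End Fq (WW 3)) :
    atp (2 : Fin 3) X * (atp 0 Y * Z) = atp 0 Y * (atp 2 X * Z) := cs (by decide) X Y Z
theorem c10' (X Y : F →ₗ[Fq] F) (Z : Module.End Fq (WW 3)) :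
    atp (1 : Fin 3) X * (atp 0 Y * Z) = atp 0 Y * (atp 1 X * Z) := cs (by decide) X Y Z
theorem c21' (X Y : F →ₗ[Fq] F) (Z : Module.End Fq (WW 3)) :
    atp (2 : Fin 3) X * (atp 1 Y * Z) = atp 1 Y * (atp 2 X * Z) := cs (by decide) X Y Z

theorem intw_of {A B : Module.End Fq (WW 3)} (c : Fq) {t u : Module.End Fq (WW 3)}
    (h : t * S3 = S3 * u) (hA : A = c • t) (hB : B = c • u) : A * S3 = S3 * B := by
  rw [hA, hB, smul_mul_assoc, mul_smul_comm, h]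

theorem intw_zero {A B : Module.End Fq (WW 3)} (hA : A = 0) (hB : B = 0) : A * S3 = S3 * B := by
  rw [hA, hB, zero_mul, mul_zero]

variable {α β : Fq}

section
set_option linter.unusedVariables false

theorem S3_212_r0 (h : α * β = -q ^ 2) (h1 : q ^ 2 * β⁻¹ = -α) (h2 : q ^ 2 * α⁻¹ = -β) : ∀ j, (Lm 0 (P2 α β) * (Lm 1 (P1 α β) * Lm 2 (P2 α β)) : MM 3) 0 j * S3 =
    S3 * (Lm 2 (P1 α β) * (Lm 1 (P2 α β) * Lm 0 (P1 α β)) : MM 3) 0 j := by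
  refine forall7 (intw_of (1) R11 ?_ ?_) (intw_of (α) R12 ?_ ?_) (intw_of (α ^ 2) R13 ?_ ?_) (intw_zero ?_ ?_) (intw_zero ?_ ?_) (intw_zero ?_ ?_) (intw_zero ?_ ?_)
  all_goals simp only [row1, row2, Lm, P1_e, P2_e, h1, h2, k3, p3, m3, Pt, Qt, Pu, Qu, atp_zero, atp_one, atp_smul, mul_zero, mul_one, smul_zero, add_zero, zero_add, mul_add, mul_smul_comm, smul_add, smul_smul, t11, t12, t13, t21, t22, t23, t31, t32, t33, u11, u12, u13, u21, u22, u23, u31, u32, u33, v11, v12, v21, v22, v23, v32, v33, w11, w12, w21, w22, w23, w32, w33, smul_sub, one_smul, mul_assoc, c20, c10, c21, c20', c10', c21', smul_mul_assoc]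
  all_goals (match_scalars <;> first | ring1 | linear_combination h | linear_combination -h | linear_combination α * h | linear_combination β * h | linear_combination (-α) * h | linear_combination (-β) * h)

theorem S3_212_r1 (h : α * β = -q ^ 2) (h1 : q ^ 2 * β⁻¹ = -α) (h2 : q ^ 2 * α⁻¹ = -β) : ∀ j, (Lm 0 (P2 α β) * (Lm 1 (P1 α β) * Lm 2 (P2 α β)) : MM 3) 1 j * S3 =
    S3 * (Lm 2 (P1 α β) * (Lm 1 (P2 α β) * Lm 0 (P1 α β)) : MM 3) 1 j := by
  refine forall7 (intw_of (β) R21 ?_ ?_) (intw_of (1) R22 ?_ ?_) (intw_of (α) R23 ?_ ?_) (intw_zero ?_ ?_) (intw_zero ?_ ?_) (intw_zero ?_ ?_) (intw_zero ?_ ?_)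
  all_goals simp only [row1, row2, Lm, P1_e, P2_e, h1, h2, k3, p3, m3, Pt, Qt, Pu, Qu, atp_zero, atp_one, atp_smul, mul_zero, mul_one, smul_zero, add_zero, zero_add, mul_add, mul_smul_comm, smul_add, smul_smul, t11, t12, t13, t21, t22, t23, t31, t32, t33, u11, u12, u13, u21, u22, u23, u31, u32, u33, v11, v12, v21, v22, v23, v32, v33, w11, w12, w21, w22, w23, w32, w33, smul_sub, one_smul, mul_assoc, c20, c10, c21, c20', c10', c21', smul_mul_assoc]
  all_goals (match_scalars <;> first | ring1 | linear_combination h | linear_combination -h | linear_combination α * h | linear_combination β * h | linear_combination (-α) * h | linear_combination (-β) * h)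

theorem S3_212_r2 (h : α * β = -q ^ 2) (h1 : q ^ 2 * β⁻¹ = -α) (h2 : q ^ 2 * α⁻¹ = -β) : ∀ j, (Lm 0 (P2 α β) * (Lm 1 (P1 α β) * Lm 2 (P2 α β)) : MM 3) 2 j * S3 =
    S3 * (Lm 2 (P1 α β) * (Lm 1 (P2 α β) * Lm 0 (P1 α β)) : MM 3) 2 j := by
  refine forall7 (intw_of (β ^ 2) R31 ?_ ?_) (intw_of (β) R32 ?_ ?_) (intw_of (1) R33 ?_ ?_) (intw_zero ?_ ?_) (intw_zero ?_ ?_) (intw_zero ?_ ?_) (intw_zero ?_ ?_)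
  all_goals simp only [row1, row2, Lm, P1_e, P2_e, h1, h2, k3, p3, m3, Pt, Qt, Pu, Qu, atp_zero, atp_one, atp_smul, mul_zero, mul_one, smul_zero, add_zero, zero_add, mul_add, mul_smul_comm, smul_add, smul_smul, t11, t12, t13, t21, t22, t23, t31, t32, t33, u11, u12, u13, u21, u22, u23, u31, u32, u33, v11, v12, v21, v22, v23, v32, v33, w11, w12, w21, w22, w23, w32, w33, smul_sub, one_smul, mul_assoc, c20, c10, c21, c20', c10', c21', smul_mul_assoc]
  all_goals (match_scalars <;> first | ring1 | linear_combination h | linear_combination -h | linear_combination α * h | linear_combination β * h | linear_combination (-α) * h | linear_combination (-β) * h)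

theorem S3_212_r3 (h : α * β = -q ^ 2) (h1 : q ^ 2 * β⁻¹ = -α) (h2 : q ^ 2 * α⁻¹ = -β) : ∀ j, (Lm 0 (P2 α β) * (Lm 1 (P1 α β) * Lm 2 (P2 α β)) : MM 3) 3 j * S3 =
    S3 * (Lm 2 (P1 α β) * (Lm 1 (P2 α β) * Lm 0 (P1 α β)) : MM 3) 3 j := by
  refine forall7 (intw_zero ?_ ?_) (intw_zero ?_ ?_) (intw_zero ?_ ?_) ?_ (intw_zero ?_ ?_) (intw_zero ?_ ?_) (intw_zero ?_ ?_) <;>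
    simp only [row1, row2, Lm, P1_e, P2_e, atp_zero, atp_one, one_mul, mul_one]

theorem S3_212_r4 (h : α * β = -q ^ 2) (h1 : q ^ 2 * β⁻¹ = -α) (h2 : q ^ 2 * α⁻¹ = -β) : ∀ j, (Lm 0 (P2 α β) * (Lm 1 (P1 α β) * Lm 2 (P2 α β)) : MM 3) 4 j * S3 =
    S3 * (Lm 2 (P1 α β) * (Lm 1 (P2 α β) * Lm 0 (P1 α β)) : MM 3) 4 j := by
  refine forall7 (intw_zero ?_ ?_) (intw_zero ?_ ?_) (intw_zero ?_ ?_) (intw_zero ?_ ?_) (intw_of (1) Q11 ?_ ?_) (intw_of (-α) Q12 ?_ ?_) (intw_of (α ^ 2) R31 ?_ ?_)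
  all_goals simp only [row1, row2, Lm, P1_e, P2_e, h1, h2, k3, p3, m3, Pt, Qt, Pu, Qu, atp_zero, atp_one, atp_smul, mul_zero, mul_one, smul_zero, add_zero, zero_add, mul_add, mul_smul_comm, smul_add, smul_smul, t11, t12, t13, t21, t22, t23, t31, t32, t33, u11, u12, u13, u21, u22, u23, u31, u32, u33, v11, v12, v21, v22, v23, v32, v33, w11, w12, w21, w22, w23, w32, w33, smul_sub, one_smul, mul_assoc, c20, c10, c21, c20', c10', c21', smul_mul_assoc]
  all_goals (match_scalars <;> first | ring1 | linear_combination h | linear_combination -h | linear_combination α * h | linear_combination β * h | linear_combination (-α) * h | linear_combination (-β) * h)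

theorem S3_212_r5 (h : α * β = -q ^ 2) (h1 : q ^ 2 * β⁻¹ = -α) (h2 : q ^ 2 * α⁻¹ = -β) : ∀ j, (Lm 0 (P2 α β) * (Lm 1 (P1 α β) * Lm 2 (P2 α β)) : MM 3) 5 j * S3 =
    S3 * (Lm 2 (P1 α β) * (Lm 1 (P2 α β) * Lm 0 (P1 α β)) : MM 3) 5 j := by
  refine forall7 (intw_zero ?_ ?_) (intw_zero ?_ ?_) (intw_zero ?_ ?_) (intw_zero ?_ ?_) (intw_of (-β) Q21 ?_ ?_) (intw_of (1) Q22 ?_ ?_) (intw_of (-α) Q23 ?_ ?_)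
  all_goals simp only [row1, row2, Lm, P1_e, P2_e, h1, h2, k3, p3, m3, Pt, Qt, Pu, Qu, atp_zero, atp_one, atp_smul, mul_zero, mul_one, smul_zero, add_zero, zero_add, mul_add, mul_smul_comm, smul_add, smul_smul, t11, t12, t13, t21, t22, t23, t31, t32, t33, u11, u12, u13, u21, u22, u23, u31, u32, u33, v11, v12, v21, v22, v23, v32, v33, w11, w12, w21, w22, w23, w32, w33, smul_sub, one_smul, mul_assoc, c20, c10, c21, c20', c10', c21', smul_mul_assoc]
  all_goals (match_scalars <;> first | ring1 | linear_combination h | linear_combination -h | linear_combination α * h | linear_combination β * h | linear_combination (-α) * h | linear_combination (-β) * h)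

theorem S3_212_r6 (h : α * β = -q ^ 2) (h1 : q ^ 2 * β⁻¹ = -α) (h2 : q ^ 2 * α⁻¹ = -β) : ∀ j, (Lm 0 (P2 α β) * (Lm 1 (P1 α β) * Lm 2 (P2 α β)) : MM 3) 6 j * S3 =
    S3 * (Lm 2 (P1 α β) * (Lm 1 (P2 α β) * Lm 0 (P1 α β)) : MM 3) 6 j := by
  refine forall7 (intw_zero ?_ ?_) (intw_zero ?_ ?_) (intw_zero ?_ ?_) (intw_zero ?_ ?_) (intw_of (β ^ 2) R13 ?_ ?_) (intw_of (-β) Q32 ?_ ?_) (intw_of (1) Q33 ?_ ?_)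
  all_goals simp only [row1, row2, Lm, P1_e, P2_e, h1, h2, k3, p3, m3, Pt, Qt, Pu, Qu, atp_zero, atp_one, atp_smul, mul_zero, mul_one, smul_zero, add_zero, zero_add, mul_add, mul_smul_comm, smul_add, smul_smul, t11, t12, t13, t21, t22, t23, t31, t32, t33, u11, u12, u13, u21, u22, u23, u31, u32, u33, v11, v12, v21, v22, v23, v32, v33, w11, w12, w21, w22, w23, w32, w33, smul_sub, one_smul, mul_assoc, c20, c10, c21, c20', c10', c21', smul_mul_assoc]
  all_goals (match_scalars <;> first | ring1 | linear_combination h | linear_combination -h | linear_combination α * h | linear_combination β * h | linear_combination (-α) * h | linear_combination (-β) * h)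

theorem S3_212 (hα : α ≠ 0) (hβ : β ≠ 0) (h : α * β = -q ^ 2) :
    Intw S3 (Lm 0 (P2 α β) * (Lm 1 (P1 α β) * Lm 2 (P2 α β)))
      (Lm 2 (P1 α β) * (Lm 1 (P2 α β) * Lm 0 (P1 α β))) := by
  have h1 : q ^ 2 * β⁻¹ = -α := by
    field_simp; linear_combination h
  have h2 : q ^ 2 * α⁻¹ = -β := by
    field_simp; linear_combination h
  exact forall7 (S3_212_r0 h h1 h2) (S3_212_r1 h h1 h2) (S3_212_r2 h h1 h2) (S3_212_r3 h h1 h2) (S3_212_r4 h h1 h2) (S3_212_r5 h h1 h2) (S3_212_r6 h h1 h2)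

theorem S3_121_r0 (h : α * β = -q ^ 2) (h1 : q ^ 2 * β⁻¹ = -α) (h2 : q ^ 2 * α⁻¹ = -β) : ∀ j, (Lm 0 (P1 α β) * (Lm 1 (P2 α β) * Lm 2 (P1 α β)) : MM 3) 0 j * S3 =
    S3 * (Lm 2 (P2 α β) * (Lm 1 (P1 α β) * Lm 0 (P2 α β)) : MM 3) 0 j := by
  refine forall7 (intw_of (1) Q11 ?_ ?_) (intw_of (α) Q12 ?_ ?_) (intw_of (α ^ 2) R31 ?_ ?_) (intw_zero ?_ ?_) (intw_zero ?_ ?_) (intw_zero ?_ ?_) (intw_zero ?_ ?_)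
  all_goals simp only [row1, row2, Lm, P1_e, P2_e, h1, h2, k3, p3, m3, Pt, Qt, Pu, Qu, atp_zero, atp_one, atp_smul, mul_zero, mul_one, smul_zero, add_zero, zero_add, mul_add, mul_smul_comm, smul_add, smul_smul, t11, t12, t13, t21, t22, t23, t31, t32, t33, u11, u12, u13, u21, u22, u23, u31, u32, u33, v11, v12, v21, v22, v23, v32, v33, w11, w12, w21, w22, w23, w32, w33, smul_sub, one_smul, mul_assoc, c20, c10, c21, c20', c10', c21', smul_mul_assoc]
  all_goals (match_scalars <;> first | ring1 | linear_combination h | linear_combination -h | linear_combination α * h | linear_combination β * h | linear_combination (-α) * h | linear_combination (-β) * h)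

theorem S3_121_r1 (h : α * β = -q ^ 2) (h1 : q ^ 2 * β⁻¹ = -α) (h2 : q ^ 2 * α⁻¹ = -β) : ∀ j, (Lm 0 (P1 α β) * (Lm 1 (P2 α β) * Lm 2 (P1 α β)) : MM 3) 1 j * S3 =
    S3 * (Lm 2 (P2 α β) * (Lm 1 (P1 α β) * Lm 0 (P2 α β)) : MM 3) 1 j := by
  refine forall7 (intw_of (β) Q21 ?_ ?_) (intw_of (1) Q22 ?_ ?_) (intw_of (α) Q23 ?_ ?_) (intw_zero ?_ ?_) (intw_zero ?_ ?_) (intw_zero ?_ ?_) (intw_zero ?_ ?_)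
  all_goals simp only [row1, row2, Lm, P1_e, P2_e, h1, h2, k3, p3, m3, Pt, Qt, Pu, Qu, atp_zero, atp_one, atp_smul, mul_zero, mul_one, smul_zero, add_zero, zero_add, mul_add, mul_smul_comm, smul_add, smul_smul, t11, t12, t13, t21, t22, t23, t31, t32, t33, u11, u12, u13, u21, u22, u23, u31, u32, u33, v11, v12, v21, v22, v23, v32, v33, w11, w12, w21, w22, w23, w32, w33, smul_sub, one_smul, mul_assoc, c20, c10, c21, c20', c10', c21', smul_mul_assoc]
  all_goals (match_scalars <;> first | ring1 | linear_combination h | linear_combination -h | linear_combination α * h | linear_combination β * h | linear_combination (-α) * h | linear_combination (-β) * h)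

theorem S3_121_r2 (h : α * β = -q ^ 2) (h1 : q ^ 2 * β⁻¹ = -α) (h2 : q ^ 2 * α⁻¹ = -β) : ∀ j, (Lm 0 (P1 α β) * (Lm 1 (P2 α β) * Lm 2 (P1 α β)) : MM 3) 2 j * S3 =
    S3 * (Lm 2 (P2 α β) * (Lm 1 (P1 α β) * Lm 0 (P2 α β)) : MM 3) 2 j := by
  refine forall7 (intw_of (β ^ 2) R13 ?_ ?_) (intw_of (β) Q32 ?_ ?_) (intw_of (1) Q33 ?_ ?_) (intw_zero ?_ ?_) (intw_zero ?_ ?_) (intw_zero ?_ ?_) (intw_zero ?_ ?_)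
  all_goals simp only [row1, row2, Lm, P1_e, P2_e, h1, h2, k3, p3, m3, Pt, Qt, Pu, Qu, atp_zero, atp_one, atp_smul, mul_zero, mul_one, smul_zero, add_zero, zero_add, mul_add, mul_smul_comm, smul_add, smul_smul, t11, t12, t13, t21, t22, t23, t31, t32, t33, u11, u12, u13, u21, u22, u23, u31, u32, u33, v11, v12, v21, v22, v23, v32, v33, w11, w12, w21, w22, w23, w32, w33, smul_sub, one_smul, mul_assoc, c20, c10, c21, c20', c10', c21', smul_mul_assoc]
  all_goals (match_scalars <;> first | ring1 | linear_combination h | linear_combination -h | linear_combination α * h | linear_combination β * h | linear_combination (-α) * h | linear_combination (-β) * h)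

theorem S3_121_r3 (h : α * β = -q ^ 2) (h1 : q ^ 2 * β⁻¹ = -α) (h2 : q ^ 2 * α⁻¹ = -β) : ∀ j, (Lm 0 (P1 α β) * (Lm 1 (P2 α β) * Lm 2 (P1 α β)) : MM 3) 3 j * S3 =
    S3 * (Lm 2 (P2 α β) * (Lm 1 (P1 α β) * Lm 0 (P2 α β)) : MM 3) 3 j := by
  refine forall7 (intw_zero ?_ ?_) (intw_zero ?_ ?_) (intw_zero ?_ ?_) ?_ (intw_zero ?_ ?_) (intw_zero ?_ ?_) (intw_zero ?_ ?_) <;>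
    simp only [row1, row2, Lm, P1_e, P2_e, atp_zero, atp_one, one_mul, mul_one]

theorem S3_121_r4 (h : α * β = -q ^ 2) (h1 : q ^ 2 * β⁻¹ = -α) (h2 : q ^ 2 * α⁻¹ = -β) : ∀ j, (Lm 0 (P1 α β) * (Lm 1 (P2 α β) * Lm 2 (P1 α β)) : MM 3) 4 j * S3 =
    S3 * (Lm 2 (P2 α β) * (Lm 1 (P1 α β) * Lm 0 (P2 α β)) : MM 3) 4 j := by
  refine forall7 (intw_zero ?_ ?_) (intw_zero ?_ ?_) (intw_zero ?_ ?_) (intw_zero ?_ ?_) (intw_of (1) R11 ?_ ?_) (intw_of (-α) R12 ?_ ?_) (intw_of (α ^ 2) R13 ?_ ?_)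
  all_goals simp only [row1, row2, Lm, P1_e, P2_e, h1, h2, k3, p3, m3, Pt, Qt, Pu, Qu, atp_zero, atp_one, atp_smul, mul_zero, mul_one, smul_zero, add_zero, zero_add, mul_add, mul_smul_comm, smul_add, smul_smul, t11, t12, t13, t21, t22, t23, t31, t32, t33, u11, u12, u13, u21, u22, u23, u31, u32, u33, v11, v12, v21, v22, v23, v32, v33, w11, w12, w21, w22, w23, w32, w33, smul_sub, one_smul, mul_assoc, c20, c10, c21, c20', c10', c21', smul_mul_assoc]
  all_goals (match_scalars <;> first | ring1 | linear_combination h | linear_combination -h | linear_combination α * h | linear_combination β * h | linear_combination (-α) * h | linear_combination (-β) * h)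

theorem S3_121_r5 (h : α * β = -q ^ 2) (h1 : q ^ 2 * β⁻¹ = -α) (h2 : q ^ 2 * α⁻¹ = -β) : ∀ j, (Lm 0 (P1 α β) * (Lm 1 (P2 α β) * Lm 2 (P1 α β)) : MM 3) 5 j * S3 =
    S3 * (Lm 2 (P2 α β) * (Lm 1 (P1 α β) * Lm 0 (P2 α β)) : MM 3) 5 j := by
  refine forall7 (intw_zero ?_ ?_) (intw_zero ?_ ?_) (intw_zero ?_ ?_) (intw_zero ?_ ?_) (intw_of (-β) R21 ?_ ?_) (intw_of (1) R22 ?_ ?_) (intw_of (-α) R23 ?_ ?_)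
  all_goals simp only [row1, row2, Lm, P1_e, P2_e, h1, h2, k3, p3, m3, Pt, Qt, Pu, Qu, atp_zero, atp_one, atp_smul, mul_zero, mul_one, smul_zero, add_zero, zero_add, mul_add, mul_smul_comm, smul_add, smul_smul, t11, t12, t13, t21, t22, t23, t31, t32, t33, u11, u12, u13, u21, u22, u23, u31, u32, u33, v11, v12, v21, v22, v23, v32, v33, w11, w12, w21, w22, w23, w32, w33, smul_sub, one_smul, mul_assoc, c20, c10, c21, c20', c10', c21', smul_mul_assoc]
  all_goals (match_scalars <;> first | ring1 | linear_combination h | linear_combination -h | linear_combination α * h | linear_combination β * h | linear_combination (-α) * h | linear_combination (-β) * h)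

theorem S3_121_r6 (h : α * β = -q ^ 2) (h1 : q ^ 2 * β⁻¹ = -α) (h2 : q ^ 2 * α⁻¹ = -β) : ∀ j, (Lm 0 (P1 α β) * (Lm 1 (P2 α β) * Lm 2 (P1 α β)) : MM 3) 6 j * S3 =
    S3 * (Lm 2 (P2 α β) * (Lm 1 (P1 α β) * Lm 0 (P2 α β)) : MM 3) 6 j := by
  refine forall7 (intw_zero ?_ ?_) (intw_zero ?_ ?_) (intw_zero ?_ ?_) (intw_zero ?_ ?_) (intw_of (β ^ 2) R31 ?_ ?_) (intw_of (-β) R32 ?_ ?_) (intw_of (1) R33 ?_ ?_)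
  all_goals simp only [row1, row2, Lm, P1_e, P2_e, h1, h2, k3, p3, m3, Pt, Qt, Pu, Qu, atp_zero, atp_one, atp_smul, mul_zero, mul_one, smul_zero, add_zero, zero_add, mul_add, mul_smul_comm, smul_add, smul_smul, t11, t12, t13, t21, t22, t23, t31, t32, t33, u11, u12, u13, u21, u22, u23, u31, u32, u33, v11, v12, v21, v22, v23, v32, v33, w11, w12, w21, w22, w23, w32, w33, smul_sub, one_smul, mul_assoc, c20, c10, c21, c20', c10', c21', smul_mul_assoc]
  all_goals (match_scalars <;> first | ring1 | linear_combination h | linear_combination -h | linear_combination α * h | linear_combination β * h | linear_combination (-α) * h | linear_combination (-β) * h)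

theorem S3_121 (hα : α ≠ 0) (hβ : β ≠ 0) (h : α * β = -q ^ 2) :
    Intw S3 (Lm 0 (P1 α β) * (Lm 1 (P2 α β) * Lm 2 (P1 α β)))
      (Lm 2 (P2 α β) * (Lm 1 (P1 α β) * Lm 0 (P2 α β))) := by
  have h1 : q ^ 2 * β⁻¹ = -α := by
    field_simp; linear_combination h
  have h2 : q ^ 2 * α⁻¹ = -β := by
    field_simp; linear_combination h
  exact forall7 (S3_121_r0 h h1 h2) (S3_121_r1 h h1 h2) (S3_121_r2 h h1 h2) (S3_121_r3 h h1 h2) (S3_121_r4 h h1 h2) (S3_121_r5 h h1 h2) (S3_121_r6 h h1 h2)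

end


set_option linter.unusedVariables false

theorem Intw.one {n : ℕ} (X : Module.End Fq (WW n)) : Intw X 1 1 := by
  intro i j
  by_cases h : i = j
  · subst h; simp
  · simp [Matrix.one_apply_ne h]

/-- the properties of the `S` operators used in the chain -/
structure IsS (a b c : Fin 9 → MM 9) (S : Module.End Fq (WW 9)) (p1 p2 p3 : Fin 9) : Prop where
  h121 : Intw S (a p1 * (b p2 * a p3)) (b p3 * (a p2 * b p1))
  h212 : Intw S (b p1 * (a p2 * b p3)) (a p3 * (b p2 * a p1))
  ta : ∀ p, p ≠ p1 ∧ p ≠ p2 ∧ p ≠ p3 → Intw S (a p) (a p)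
  tb : ∀ p, p ≠ p1 ∧ p ≠ p2 ∧ p ≠ p3 → Intw S (b p) (b p)
  tc : ∀ p, p ≠ p1 ∧ p ≠ p2 ∧ p ≠ p3 → Intw S (c p) (c p)

/-- the properties of the `J` operators used in the chain -/
structure IsJ (a b c : Fin 9 → MM 9) (S : Module.End Fq (WW 9)) (p1 p2 p3 p4 : Fin 9) : Prop where
  hJ : Intw S (c p1 * (b p2 * (c p3 * b p4))) (b p4 * (c p3 * (b p2 * c p1)))
  ta : ∀ p, p ≠ p1 ∧ p ≠ p2 ∧ p ≠ p3 ∧ p ≠ p4 → Intw S (a p) (a p)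
  tb : ∀ p, p ≠ p1 ∧ p ≠ p2 ∧ p ≠ p3 ∧ p ≠ p4 → Intw S (b p) (b p)
  tc : ∀ p, p ≠ p1 ∧ p ≠ p2 ∧ p ≠ p3 ∧ p ≠ p4 → Intw S (c p) (c p)

section
variable {a b c : Fin 9 → MM 9} {S : Module.End Fq (WW 9)} {p1 p2 p3 p4 : Fin 9}

theorem IsS.r121 (h : IsS a b c S p1 p2 p3) {R R' : MM 9} (hR : Intw S R R') :
    Intw S (a p1 * (b p2 * (a p3 * R))) (b p3 * (a p2 * (b p1 * R'))) := by
  have := h.h121.mul hR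
  simpa only [mul_assoc] using this

theorem IsS.r212 (h : IsS a b c S p1 p2 p3) {R R' : MM 9} (hR : Intw S R R') :
    Intw S (b p1 * (a p2 * (b p3 * R))) (a p3 * (b p2 * (a p1 * R'))) := by
  have := h.h212.mul hR
  simpa only [mul_assoc] using this

theorem IsJ.r (h : IsJ a b c S p1 p2 p3 p4) {R R' : MM 9} (hR : Intw S R R') :
    Intw S (c p1 * (b p2 * (c p3 * (b p4 * R)))) (b p4 * (c p3 * (b p2 * (c p1 * R')))) := by
  have := h.hJ.mul hR
  simpa only [mul_assoc] using this

theorem chainR (hac : ∀ p r, p ≠ r → a p * c r = c r * a p)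
    {S456 : Module.End Fq (WW 9)} (hS456 : IsS a b c S456 3 4 5)
    {S489 : Module.End Fq (WW 9)} (hS489 : IsS a b c S489 3 7 8)
    {J3579 : Module.End Fq (WW 9)} (hJ3579 : IsJ a b c J3579 2 4 6 8)
    {S269 : Module.End Fq (WW 9)} (hS269 : IsS a b c S269 1 5 8)
    {S258 : Module.End Fq (WW 9)} (hS258 : IsS a b c S258 1 4 7)
    {J1678 : Module.End Fq (WW 9)} (hJ1678 : IsJ a b c J1678 0 5 6 7)
    {J1234 : Module.End Fq (WW 9)} (hJ1234 : IsJ a b c J1234 0 1 2 3) :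
    Intw (J1234 * J1678 * S258 * S269 * J3579 * S489 * S456)
      (c 0 * (b 1 * (c 2 * (b 3 * (a 4 * (b 5 * (c 6 * (b 7 * (a 8 * 1)))))))))
      (a 8 * (b 7 * (c 6 * (b 5 * (a 4 * (b 3 * (c 2 * (b 1 * (c 0 * 1))))))))) := by
  have sw : ∀ p r, p ≠ r → ∀ R : MM 9, a p * (c r * R) = c r * (a p * R) := by
    intro p r h R
    rw [← mul_assoc, hac p r h, mul_assoc]
  have sw' : ∀ p r, p ≠ r → ∀ R : MM 9, c r * (a p * R) = a p * (c r * R) := by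
    intro p r h R
    rw [sw p r h]
  have s0 : Intw S456 (a 8 * (b 7 * (c 6 * (a 3 * (b 4 * (a 5 * (c 2 * (b 1 * (c 0 * 1)))))))))
      (a 8 * (b 7 * (c 6 * (b 5 * (a 4 * (b 3 * (c 2 * (b 1 * (c 0 * 1))))))))) :=
    (hS456.ta 8 (by decide)).mul ((hS456.tb 7 (by decide)).mul ((hS456.tc 6 (by decide)).mul (hS456.r121 ((hS456.tc 2 (by decide)).mul ((hS456.tb 1 (by decide)).mul ((hS456.tc 0 (by decide)).mul (Intw.one _)))))))
  have e1 : a 8 * (b 7 * (a 3 * (c 6 * (b 4 * (a 5 * (c 2 * (b 1 * (c 0 * 1))))))))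
      = a 8 * (b 7 * (c 6 * (a 3 * (b 4 * (a 5 * (c 2 * (b 1 * (c 0 * 1)))))))) := by
    rw [sw 3 6 (by decide)]
  have s1 : Intw S489 (b 3 * (a 7 * (b 8 * (c 6 * (b 4 * (a 5 * (c 2 * (b 1 * (c 0 * 1)))))))))
      (a 8 * (b 7 * (a 3 * (c 6 * (b 4 * (a 5 * (c 2 * (b 1 * (c 0 * 1))))))))) :=
    hS489.r212 ((hS489.tc 6 (by decide)).mul ((hS489.tb 4 (by decide)).mul ((hS489.ta 5 (by decide)).mul ((hS489.tc 2 (by decide)).mul ((hS489.tb 1 (by decide)).mul ((hS489.tc 0 (by decide)).mul (Intw.one _)))))))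
  rw [e1] at s1
  have e2 : b 3 * (a 7 * (b 8 * (c 6 * (b 4 * (c 2 * (a 5 * (b 1 * (c 0 * 1))))))))
      = b 3 * (a 7 * (b 8 * (c 6 * (b 4 * (a 5 * (c 2 * (b 1 * (c 0 * 1)))))))) := by
    rw [sw' 5 2 (by decide)]
  have s2 : Intw J3579 (b 3 * (a 7 * (c 2 * (b 4 * (c 6 * (b 8 * (a 5 * (b 1 * (c 0 * 1)))))))))
      (b 3 * (a 7 * (b 8 * (c 6 * (b 4 * (c 2 * (a 5 * (b 1 * (c 0 * 1))))))))) :=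
    (hJ3579.tb 3 (by decide)).mul ((hJ3579.ta 7 (by decide)).mul (hJ3579.r ((hJ3579.ta 5 (by decide)).mul ((hJ3579.tb 1 (by decide)).mul ((hJ3579.tc 0 (by decide)).mul (Intw.one _))))))
  rw [e2] at s2
  have s3 : Intw S269 (b 3 * (a 7 * (c 2 * (b 4 * (c 6 * (a 1 * (b 5 * (a 8 * (c 0 * 1)))))))))
      (b 3 * (a 7 * (c 2 * (b 4 * (c 6 * (b 8 * (a 5 * (b 1 * (c 0 * 1))))))))) :=
    (hS269.tb 3 (by decide)).mul ((hS269.ta 7 (by decide)).mul ((hS269.tc 2 (by decide)).mul ((hS269.tb 4 (by decide)).mul ((hS269.tc 6 (by decide)).mul (hS269.r121 ((hS269.tc 0 (by decide)).mul (Intw.one _)))))))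
  have e4 : b 3 * (c 2 * (a 7 * (b 4 * (a 1 * (c 6 * (b 5 * (a 8 * (c 0 * 1))))))))
      = b 3 * (a 7 * (c 2 * (b 4 * (c 6 * (a 1 * (b 5 * (a 8 * (c 0 * 1)))))))) := by
    rw [sw' 7 2 (by decide), sw 1 6 (by decide)]
  have s4 : Intw S258 (b 3 * (c 2 * (b 1 * (a 4 * (b 7 * (c 6 * (b 5 * (a 8 * (c 0 * 1)))))))))
      (b 3 * (c 2 * (a 7 * (b 4 * (a 1 * (c 6 * (b 5 * (a 8 * (c 0 * 1))))))))) :=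
    (hS258.tb 3 (by decide)).mul ((hS258.tc 2 (by decide)).mul (hS258.r212 ((hS258.tc 6 (by decide)).mul ((hS258.tb 5 (by decide)).mul ((hS258.ta 8 (by decide)).mul ((hS258.tc 0 (by decide)).mul (Intw.one _)))))))
  rw [e4] at s4
  have e5 : b 3 * (c 2 * (b 1 * (a 4 * (b 7 * (c 6 * (b 5 * (c 0 * (a 8 * 1))))))))
      = b 3 * (c 2 * (b 1 * (a 4 * (b 7 * (c 6 * (b 5 * (a 8 * (c 0 * 1)))))))) := by
    rw [sw' 8 0 (by decide)]
  have s5 : Intw J1678 (b 3 * (c 2 * (b 1 * (a 4 * (c 0 * (b 5 * (c 6 * (b 7 * (a 8 * 1)))))))))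
      (b 3 * (c 2 * (b 1 * (a 4 * (b 7 * (c 6 * (b 5 * (c 0 * (a 8 * 1))))))))) :=
    (hJ1678.tb 3 (by decide)).mul ((hJ1678.tc 2 (by decide)).mul ((hJ1678.tb 1 (by decide)).mul ((hJ1678.ta 4 (by decide)).mul (hJ1678.r ((hJ1678.ta 8 (by decide)).mul (Intw.one _))))))
  rw [e5] at s5
  have e6 : b 3 * (c 2 * (b 1 * (c 0 * (a 4 * (b 5 * (c 6 * (b 7 * (a 8 * 1))))))))
      = b 3 * (c 2 * (b 1 * (a 4 * (c 0 * (b 5 * (c 6 * (b 7 * (a 8 * 1)))))))) := by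
    rw [sw' 4 0 (by decide)]
  have s6 : Intw J1234 (c 0 * (b 1 * (c 2 * (b 3 * (a 4 * (b 5 * (c 6 * (b 7 * (a 8 * 1)))))))))
      (b 3 * (c 2 * (b 1 * (c 0 * (a 4 * (b 5 * (c 6 * (b 7 * (a 8 * 1))))))))) :=
    hJ1234.r ((hJ1234.ta 4 (by decide)).mul ((hJ1234.tb 5 (by decide)).mul ((hJ1234.tc 6 (by decide)).mul ((hJ1234.tb 7 (by decide)).mul ((hJ1234.ta 8 (by decide)).mul (Intw.one _))))))
  rw [e6] at s6
  exact ((((((s6).comp s5).comp s4).comp s3).comp s2).comp s1).comp s0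

theorem chainL (hac : ∀ p r, p ≠ r → a p * c r = c r * a p)
    {S456 : Module.End Fq (WW 9)} (hS456 : IsS a b c S456 3 4 5)
    {S489 : Module.End Fq (WW 9)} (hS489 : IsS a b c S489 3 7 8)
    {J3579 : Module.End Fq (WW 9)} (hJ3579 : IsJ a b c J3579 2 4 6 8)
    {S269 : Module.End Fq (WW 9)} (hS269 : IsS a b c S269 1 5 8)
    {S258 : Module.End Fq (WW 9)} (hS258 : IsS a b c S258 1 4 7)
    {J1678 : Module.End Fq (WW 9)} (hJ1678 : IsJ a b c J1678 0 5 6 7)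
    {J1234 : Module.End Fq (WW 9)} (hJ1234 : IsJ a b c J1234 0 1 2 3) :
    Intw (S456 * S489 * J3579 * S269 * S258 * J1678 * J1234)
      (c 0 * (b 1 * (c 2 * (b 3 * (a 4 * (b 5 * (c 6 * (b 7 * (a 8 * 1)))))))))
      (a 8 * (b 7 * (c 6 * (b 5 * (a 4 * (b 3 * (c 2 * (b 1 * (c 0 * 1))))))))) := by
  have sw : ∀ p r, p ≠ r → ∀ R : MM 9, a p * (c r * R) = c r * (a p * R) := by
    intro p r h R
    rw [← mul_assoc, hac p r h, mul_assoc]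
  have sw' : ∀ p r, p ≠ r → ∀ R : MM 9, c r * (a p * R) = a p * (c r * R) := by
    intro p r h R
    rw [sw p r h]
  have s0 : Intw J1234 (a 8 * (b 7 * (c 6 * (b 5 * (a 4 * (c 0 * (b 1 * (c 2 * (b 3 * 1)))))))))
      (a 8 * (b 7 * (c 6 * (b 5 * (a 4 * (b 3 * (c 2 * (b 1 * (c 0 * 1))))))))) :=
    (hJ1234.ta 8 (by decide)).mul ((hJ1234.tb 7 (by decide)).mul ((hJ1234.tc 6 (by decide)).mul ((hJ1234.tb 5 (by decide)).mul ((hJ1234.ta 4 (by decide)).mul (hJ1234.r (Intw.one _))))))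
  have e1 : a 8 * (b 7 * (c 6 * (b 5 * (c 0 * (a 4 * (b 1 * (c 2 * (b 3 * 1))))))))
      = a 8 * (b 7 * (c 6 * (b 5 * (a 4 * (c 0 * (b 1 * (c 2 * (b 3 * 1)))))))) := by
    rw [sw' 4 0 (by decide)]
  have s1 : Intw J1678 (a 8 * (c 0 * (b 5 * (c 6 * (b 7 * (a 4 * (b 1 * (c 2 * (b 3 * 1)))))))))
      (a 8 * (b 7 * (c 6 * (b 5 * (c 0 * (a 4 * (b 1 * (c 2 * (b 3 * 1))))))))) :=
    (hJ1678.ta 8 (by decide)).mul (hJ1678.r ((hJ1678.ta 4 (by decide)).mul ((hJ1678.tb 1 (by decide)).mul ((hJ1678.tc 2 (by decide)).mul ((hJ1678.tb 3 (by decide)).mul (Intw.one _))))))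
  rw [e1] at s1
  have s2 : Intw S258 (a 8 * (c 0 * (b 5 * (c 6 * (a 1 * (b 4 * (a 7 * (c 2 * (b 3 * 1)))))))))
      (a 8 * (c 0 * (b 5 * (c 6 * (b 7 * (a 4 * (b 1 * (c 2 * (b 3 * 1))))))))) :=
    (hS258.ta 8 (by decide)).mul ((hS258.tc 0 (by decide)).mul ((hS258.tb 5 (by decide)).mul ((hS258.tc 6 (by decide)).mul (hS258.r121 ((hS258.tc 2 (by decide)).mul ((hS258.tb 3 (by decide)).mul (Intw.one _)))))))
  have e3 : c 0 * (a 8 * (b 5 * (a 1 * (c 6 * (b 4 * (c 2 * (a 7 * (b 3 * 1))))))))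
      = a 8 * (c 0 * (b 5 * (c 6 * (a 1 * (b 4 * (a 7 * (c 2 * (b 3 * 1)))))))) := by
    rw [sw' 8 0 (by decide), sw 1 6 (by decide), sw' 7 2 (by decide)]
  have s3 : Intw S269 (c 0 * (b 1 * (a 5 * (b 8 * (c 6 * (b 4 * (c 2 * (a 7 * (b 3 * 1)))))))))
      (c 0 * (a 8 * (b 5 * (a 1 * (c 6 * (b 4 * (c 2 * (a 7 * (b 3 * 1))))))))) :=
    (hS269.tc 0 (by decide)).mul (hS269.r212 ((hS269.tc 6 (by decide)).mul ((hS269.tb 4 (by decide)).mul ((hS269.tc 2 (by decide)).mul ((hS269.ta 7 (by decide)).mul ((hS269.tb 3 (by decide)).mul (Intw.one _)))))))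
  rw [e3] at s3
  have s4 : Intw J3579 (c 0 * (b 1 * (a 5 * (c 2 * (b 4 * (c 6 * (b 8 * (a 7 * (b 3 * 1)))))))))
      (c 0 * (b 1 * (a 5 * (b 8 * (c 6 * (b 4 * (c 2 * (a 7 * (b 3 * 1))))))))) :=
    (hJ3579.tc 0 (by decide)).mul ((hJ3579.tb 1 (by decide)).mul ((hJ3579.ta 5 (by decide)).mul (hJ3579.r ((hJ3579.ta 7 (by decide)).mul ((hJ3579.tb 3 (by decide)).mul (Intw.one _))))))
  have e5 : c 0 * (b 1 * (c 2 * (a 5 * (b 4 * (c 6 * (b 8 * (a 7 * (b 3 * 1))))))))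
      = c 0 * (b 1 * (a 5 * (c 2 * (b 4 * (c 6 * (b 8 * (a 7 * (b 3 * 1)))))))) := by
    rw [sw' 5 2 (by decide)]
  have s5 : Intw S489 (c 0 * (b 1 * (c 2 * (a 5 * (b 4 * (c 6 * (a 3 * (b 7 * (a 8 * 1)))))))))
      (c 0 * (b 1 * (c 2 * (a 5 * (b 4 * (c 6 * (b 8 * (a 7 * (b 3 * 1))))))))) :=
    (hS489.tc 0 (by decide)).mul ((hS489.tb 1 (by decide)).mul ((hS489.tc 2 (by decide)).mul ((hS489.ta 5 (by decide)).mul ((hS489.tb 4 (by decide)).mul ((hS489.tc 6 (by decide)).mul (hS489.r121 (Intw.one _)))))))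
  rw [e5] at s5
  have e6 : c 0 * (b 1 * (c 2 * (a 5 * (b 4 * (a 3 * (c 6 * (b 7 * (a 8 * 1))))))))
      = c 0 * (b 1 * (c 2 * (a 5 * (b 4 * (c 6 * (a 3 * (b 7 * (a 8 * 1)))))))) := by
    rw [sw 3 6 (by decide)]
  have s6 : Intw S456 (c 0 * (b 1 * (c 2 * (b 3 * (a 4 * (b 5 * (c 6 * (b 7 * (a 8 * 1)))))))))
      (c 0 * (b 1 * (c 2 * (a 5 * (b 4 * (a 3 * (c 6 * (b 7 * (a 8 * 1))))))))) :=
    (hS456.tc 0 (by decide)).mul ((hS456.tb 1 (by decide)).mul ((hS456.tc 2 (by decide)).mul (hS456.r212 ((hS456.tc 6 (by decide)).mul ((hS456.tb 7 (by decide)).mul ((hS456.ta 8 (by decide)).mul (Intw.one _)))))))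
  rw [e6] at s6
  exact ((((((s6).comp s5).comp s4).comp s3).comp s2).comp s1).comp s0

end


set_option linter.unusedVariables false

theorem Lm_P1_P3_comm {n : ℕ} (α β γ : Fq) (p r : Fin n) (h : p ≠ r) :
    Lm p (P1 α β) * Lm r (P3 γ) = Lm r (P3 γ) * Lm p (P1 α β) := by
  have H : ∀ i j, (Lm p (P1 α β) * Lm r (P3 γ)) i j = (Lm r (P3 γ) * Lm p (P1 α β)) i j := by
    refine forall7 ?_ ?_ ?_ ?_ ?_ ?_ ?_ <;> refine forall7 ?_ ?_ ?_ ?_ ?_ ?_ ?_ <;>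
    simp only [Matrix.mul_apply, sum7, Lm, P1_e, P3_e, atp_zero, atp_one, zero_mul, mul_zero,
      one_mul, mul_one, add_zero, zero_add]
  funext i j
  exact H i j

theorem isS_of {α β γ : Fq} (hα : α ≠ 0) (hβ : β ≠ 0) (h : α * β = -q ^ 2) {p1 p2 p3 : Fin 9}
    (hn : [p1, p2, p3].Nodup) :
    IsS (fun p => Lm p (P1 α β)) (fun p => Lm p (P2 α β)) (fun p => Lm p (P3 γ))
      (Op ![p1, p2, p3] S3) p1 p2 p3 := by
  have he := inj3 hn
  have ht : ∀ p, p ≠ p1 ∧ p ≠ p2 ∧ p ≠ p3 → ∀ a, ![p1, p2, p3] a ≠ p := by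
    rintro p ⟨h1, h2, h3⟩ a
    fin_cases a
    · exact h1.symm
    · exact h2.symm
    · exact h3.symm
  refine ⟨?_, ?_, ?_, ?_, ?_⟩
  · have := (S3_121 hα hβ h).op he
    simp only [OpM_mul he, OpM_Lm he] at this
    exact this
  · have := (S3_212 hα hβ h).op he
    simp only [OpM_mul he, OpM_Lm he] at this
    exact this
  all_goals
    intro p hp
    exact Intw.triv he _ p (ht p hp) _

theorem isJ_of {α β γ : Fq} {Ξ} (hΞ : IsNormalizedIntertwiner α β γ Ξ) {p1 p2 p3 p4 : Fin 9}
    (hn : [p1, p2, p3, p4].Nodup) :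
    IsJ (fun p => Lm p (P1 α β)) (fun p => Lm p (P2 α β)) (fun p => Lm p (P3 γ))
      (Op ![p1, p2, p3, p4] (J4 Ξ)) p1 p2 p3 p4 := by
  have he := inj4 hn
  have ht : ∀ p, p ≠ p1 ∧ p ≠ p2 ∧ p ≠ p3 ∧ p ≠ p4 → ∀ a, ![p1, p2, p3, p4] a ≠ p := by
    rintro p ⟨h1, h2, h3, h4⟩ a
    fin_cases a
    · exact h1.symm
    · exact h2.symm
    · exact h3.symm
    · exact h4.symm
  refine ⟨?_, ?_, ?_, ?_⟩
  · have := (J4_intw hΞ).op he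
    simp only [OpM_mul he, OpM_Lm he] at this
    exact this
  all_goals
    intro p hp
    exact Intw.triv he _ p (ht p hp) _

theorem Op_vac {m n : ℕ} (e : Fin m → Fin n) (X : Module.End Fq (WW m))
    (h : X (bs 0) = bs 0) : Op e X (bs 0) = bs 0 := by
  have h0 : (0 : Fin n → ℕ) ∘ e = 0 := rfl
  have h1 : Function.extend e (0 : Fin m → ℕ) (0 : Fin n → ℕ) = 0 := by
    funext p
    by_cases hp : ∃ a, e a = p
    · classical
      simp only [Function.extend_def]
      split <;> rfl
    · rw [Function.extend_apply' _ _ _ hp]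
  rw [Op_bs, h0, h]
  simp [bs, h1]

theorem S3_vac : S3 (bs 0) = bs 0 := by
  have : (0 : Fin 3 → ℕ) = ![0, 0, 0] := by funext i; fin_cases i <;> rfl
  rw [this]; exact S3_00 0

theorem J4_vac' {α β γ : Fq} {Ξ} (hΞ : IsNormalizedIntertwiner α β γ Ξ) :
    J4 Ξ (bs 0) = bs 0 := by
  have : (0 : Fin 4 → ℕ) = ![0, 0, 0, 0] := by funext i; fin_cases i <;> rfl
  rw [this]; exact J4_vac hΞ

/-- operators built from the sites satisfying `P` -/
def AP {n : ℕ} (P : Fin n → Prop) : Subalgebra Fq (Module.End Fq (WW n)) :=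
  Algebra.adjoin Fq {x | ∃ p Y, P p ∧ x = atp p Y}

theorem AP_comm {n : ℕ} {P Q : Fin n → Prop} (hPQ : ∀ p, P p → ¬ Q p)
    {x y : Module.End Fq (WW n)} (hx : x ∈ AP P) (hy : y ∈ AP Q) : x * y = y * x := by
  have h1 : ∀ r Z, Q r → Commute x (atp r Z) := by
    intro r Z hr
    refine (Algebra.commute_of_mem_adjoin_of_forall_mem_commute (R := Fq)
      (a := (atp r Z : Module.End Fq (WW n))) hx ?_).symm
    rintro _ ⟨p, Y, hp, rfl⟩
    have hpr : r ≠ p := by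
      rintro rfl
      exact hPQ r hp hr
    exact atp_comm hpr Z Y
  have h2 : Commute x y := by
    refine Algebra.commute_of_mem_adjoin_of_forall_mem_commute (R := Fq) hy ?_
    rintro _ ⟨r, Z, hr, rfl⟩
    exact h1 r Z hr
  exact h2

/-- all entries of the matrix are built from the sites satisfying `P` -/
def InAP {n : ℕ} (P : Fin n → Prop) (A : MM n) : Prop := ∀ i j, A i j ∈ AP P

theorem AP_Lm {n : ℕ} {P : Fin n → Prop} {p : Fin n} (T) (hp : P p) :
    InAP P (Lm p T) := fun i j => Algebra.subset_adjoin ⟨p, _, hp, rfl⟩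

theorem AP_mul {n : ℕ} {P : Fin n → Prop} {A B : MM n} (hA : InAP P A)
    (hB : InAP P B) : InAP P (A * B) := by
  intro i j
  rw [Matrix.mul_apply]
  exact Subalgebra.sum_mem _ fun k _ => Subalgebra.mul_mem _ (hA _ _) (hB _ _)

/-- vectors with sites outside `Q` in the vacuum -/
def UQ {n : ℕ} (Q : Fin n → Prop) : Submodule Fq (WW n) :=
  Submodule.span Fq {v | ∃ f : Fin n → ℕ, (∀ p, ¬ Q p → f p = 0) ∧ v = bs f}

theorem UQ_atp {n : ℕ} {Q : Fin n → Prop} {p : Fin n} (hp : Q p) (Y : F →ₗ[Fq] F)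
    {u : WW n} (hu : u ∈ UQ Q) : atp p Y u ∈ UQ Q := by
  refine Submodule.span_induction ?_ ?_ ?_ ?_ hu
  · rintro _ ⟨f, hf, rfl⟩
    rw [atp_bs, lift_expand (emb p f)]
    refine Submodule.sum_mem _ fun m _ => Submodule.smul_mem _ _ ?_
    change emb p f (ket m) ∈ _
    rw [emb_ket]
    refine Submodule.subset_span ⟨_, ?_, rfl⟩
    intro r hr
    rw [Function.update_of_ne (fun h => hr (by rw [h]; exact hp))]
    exact hf r hr
  · simp
  · intro x y _ _ hx hy
    rw [map_add]; exact Submodule.add_mem _ hx hy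
  · intro a x _ hx
    rw [map_smul]; exact Submodule.smul_mem _ _ hx

theorem UQ_AP {n : ℕ} {P Q : Fin n → Prop} (hPQ : ∀ p, P p → Q p) {x : Module.End Fq (WW n)}
    (hx : x ∈ AP P) : ∀ u : WW n, u ∈ UQ Q → x u ∈ UQ Q := by
  refine Algebra.adjoin_induction ?_ ?_ ?_ ?_ hx
  · rintro _ ⟨p, Y, hp, rfl⟩ u hu
    exact UQ_atp (hPQ p hp) Y hu
  · intro r u hu
    rw [Module.algebraMap_end_apply]; exact Submodule.smul_mem _ _ hu
  · intro x y _ _ hx hy u hu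
    exact Submodule.add_mem _ (hx u hu) (hy u hu)
  · intro x y _ _ hx hy u hu
    exact hx _ (hy u hu)

theorem peel {n : ℕ} (V U : Submodule Fq (WW n)) (M N : MM n)
    (A : Subalgebra Fq (Module.End Fq (WW n)))
    (hM : ∀ i j, M i j ∈ A) (hN : ∀ x ∈ A, ∀ i j, x * N i j = N i j * x) (hO : Orth M)
    (hT : ∀ i j, ∀ v ∈ V, (M * N) i j v ∈ V) (hU : U ≤ V)
    (hUA : ∀ x ∈ A, ∀ u ∈ U, x u ∈ U) :
    ∃ W : Submodule Fq (WW n), W ≤ V ∧ (∀ i j, ∀ w ∈ W, N i j w ∈ W) ∧ U ≤ W := by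
  let W : Submodule Fq (WW n) :=
    { carrier := {w | ∀ x ∈ A, x w ∈ V}
      add_mem' := by
        intro a b ha hb x hx
        rw [map_add]; exact V.add_mem (ha x hx) (hb x hx)
      zero_mem' := by
        intro x hx
        rw [map_zero]; exact V.zero_mem
      smul_mem' := by
        intro c a ha x hx
        rw [map_smul]; exact V.smul_mem _ (ha x hx) }
  refine ⟨W, ?_, ?_, ?_⟩
  · intro w hw
    exact hw 1 A.one_mem
  · intro i j w hw x hx
    have e0 : x (N i j w) = N i j (x w) := by
      have := LinearMap.congr_fun (hN x hx i j) w
      exact this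
    rw [e0]
    have e1 : ∑ c : Fin 7, gw c • ((M * N) c j * M (Fin.rev c) (Fin.rev i)) = gw i • N i j := by
      have h1 : ∀ c, gw c • ((M * N) c j * M (Fin.rev c) (Fin.rev i))
          = ∑ k : Fin 7, (gw c • (M c k * M (Fin.rev c) (Fin.rev i))) * N k j := by
        intro c
        rw [Matrix.mul_apply, Finset.sum_mul, Finset.smul_sum]
        refine Finset.sum_congr rfl fun k _ => ?_
        rw [smul_mul_assoc, mul_assoc, mul_assoc, hN _ (hM _ _)]
      rw [Finset.sum_congr rfl fun c _ => h1 c, Finset.sum_comm]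
      have h2 : ∀ k, ∑ c : Fin 7, (gw c • (M c k * M (Fin.rev c) (Fin.rev i))) * N k j
          = (if Fin.rev i = Fin.rev k then gw k • (1 : Module.End Fq (WW n)) else 0) * N k j := by
        intro k
        rw [← Finset.sum_mul, hO k (Fin.rev i)]
      rw [Finset.sum_congr rfl fun k _ => h2 k]
      simp
    have e2 : N i j (x w) = (gw i)⁻¹ •
        ∑ c : Fin 7, gw c • ((M * N) c j (M (Fin.rev c) (Fin.rev i) (x w))) := by
      have := LinearMap.congr_fun e1 (x w)
      simp only [LinearMap.sum_apply, LinearMap.smul_apply, Module.End.mul_apply] at this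
      rw [this, smul_smul, inv_mul_cancel₀ (gw_ne i), one_smul]
    rw [e2]
    refine V.smul_mem _ (V.sum_mem fun c _ => V.smul_mem _ (hT _ _ _ ?_))
    exact hw (M (Fin.rev c) (Fin.rev i) * x) (A.mul_mem (hM _ _) hx)
  · intro u hu x hx
    exact hU (hUA x hx u hu)

theorem orth_Lm {n : ℕ} (p : Fin n) {T : Matrix (Fin 7) (Fin 7) (F →ₗ[Fq] F)}
    (h : Orth (R := Module.End Fq F) T) : Orth (Lm p T) := by
  intro b e
  have h1 := congrArg (atp p) (h b e)
  rw [atp_sum] at h1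
  have h2 : ∀ c, atp p (gw c • ((T c b : Module.End Fq F) * (T (Fin.rev c) e : Module.End Fq F)))
      = gw c • (Lm p T c b * Lm p T (Fin.rev c) e) := by
    intro c
    rw [atp_smul]
    congr 1
    exact atp_mul p _ _
  rw [Finset.sum_congr rfl fun c _ => h2 c] at h1
  rw [h1]
  split
  · rw [atp_smul]
    congr 1
    exact atp_one p
  · exact atp_zero p

theorem orth_mul_AP {n : ℕ} {P Q : Fin n → Prop} {A B : MM n} (hA : Orth A) (hB : Orth B)
    (hPQ : ∀ p, P p → ¬ Q p) (hAP : InAP P A) (hBQ : InAP Q B) :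
    Orth (A * B) := hA.mul hB fun i j k l => AP_comm hPQ (hAP i j) (hBQ k l)

set_option linter.unusedVariables false
set_option linter.unusedSimpArgs false

theorem row3 {n : ℕ} (p : Fin n) (B : MM n) (j : Fin 7) (α : Fq) :
    (Lm p (P3 α) * B) 2 j = atp p (P3 α 2 2) * B 2 j + atp p (P3 α 2 3) * B 3 j
      + atp p (P3 α 2 4) * B 4 j ∧
    (Lm p (P3 α) * B) 3 j = atp p (P3 α 3 2) * B 2 j + atp p (P3 α 3 3) * B 3 j
      + atp p (P3 α 3 4) * B 4 j ∧
    (Lm p (P3 α) * B) 4 j = atp p (P3 α 4 2) * B 2 j + atp p (P3 α 4 3) * B 3 j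
      + atp p (P3 α 4 4) * B 4 j ∧
    (Lm p (P3 α) * B) 0 j = B 0 j ∧ (Lm p (P3 α) * B) 1 j = B 1 j ∧
    (Lm p (P3 α) * B) 5 j = B 5 j ∧ (Lm p (P3 α) * B) 6 j = B 6 j := by
  refine ⟨?_, ?_, ?_, ?_, ?_, ?_, ?_⟩ <;>
    simp only [Matrix.mul_apply, sum7, Lm, P3_e, atp_zero, atp_one, atp_smul, zero_mul, one_mul,
      add_zero, zero_add, smul_mul_assoc]

section act
variable {n : ℕ} (p : Fin n) (f : Fin n → ℕ)
theorem bK2 : atp p K2 (bs f) = q ^ (2 * f p) • bs f := by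
  rw [atp_bs, K2_ket, map_smul, emb_ket, Function.update_eq_self]
theorem bkk : atp p kk (bs f) = q ^ (f p) • bs f := by
  rw [atp_bs, kk_ket, map_smul, emb_ket, Function.update_eq_self]
theorem bAp : atp p Ap (bs f) = bs (Function.update f p (f p + 1)) := by
  rw [atp_bs, Ap_ket, emb_ket]
theorem bap : atp p ap (bs f) = bs (Function.update f p (f p + 1)) := by
  rw [atp_bs, ap_ket, emb_ket]
theorem bAm (h : f p = 0) : atp p Am (bs f) = 0 := by
  rw [atp_bs, Am_ket, h]; simp
end act

theorem mem_of_smul {V : Submodule Fq (WW 9)} {v : WW 9} {c : Fq} (hc : c ≠ 0) {x : WW 9}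
    (hx : x ∈ V) (h : x = c • v) : v ∈ V := by
  rw [h] at hx
  exact (V.smul_mem_iff hc).mp hx

/-- stability under the last column of the first block -/
def Stab1 (α β γ : Fq) (V : Submodule Fq (WW 9)) : Prop :=
  ∀ i, ∀ v ∈ V, (Lm 8 (P1 α β) * (Lm 7 (P2 α β) * (Lm 6 (P3 γ) * (Lm 5 (P2 α β) *
    Lm 4 (P1 α β)))) : MM 9) i 6 v ∈ V

/-- stability under column 5 of the second block -/
def Stab2 (α β γ : Fq) (V : Submodule Fq (WW 9)) : Prop :=
  ∀ i, ∀ v ∈ V, (Lm 3 (P2 α β) * (Lm 2 (P3 γ) * Lm 1 (P2 α β)) : MM 9) i 5 v ∈ V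

section raising
variable {α β γ : Fq} {V : Submodule Fq (WW 9)} {f : Fin 9 → ℕ}

theorem raise8 (hα : α ≠ 0) (hβ : β ≠ 0) (hγ : γ ≠ 0) (hV : Stab1 α β γ V)
    (hf : bs f ∈ V) : bs (Function.update f 8 (f 8 + 1)) ∈ V := by
  have h := hV 1 _ hf
  simp only [row1, row2, row3] at h
  simp only [Lm, P1_e, P2_e, P3_e, atp_zero, atp_smul, atp_mul, mul_zero, smul_zero, zero_add, add_zero,
    LinearMap.smul_apply, LinearMap.add_apply, Module.End.mul_apply, bK2, bkk, bAp, bap, map_smul,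
    map_add, smul_smul] at h
  refine mem_of_smul ?_ h rfl
  simp [q_ne, hα, hβ, hγ, one_add_q_ne]

theorem raise7 (hα : α ≠ 0) (hβ : β ≠ 0) (hγ : γ ≠ 0) (hV : Stab1 α β γ V)
    (hf : bs f ∈ V) : bs (Function.update f 7 (f 7 + 1)) ∈ V := by
  have h := hV 2 _ hf
  simp only [row1, row2, row3] at h
  simp only [Lm, P1_e, P2_e, P3_e, atp_zero, atp_smul, atp_mul, mul_zero, smul_zero, zero_add, add_zero,
    LinearMap.smul_apply, LinearMap.add_apply, Module.End.mul_apply, bK2, bkk, bAp, bap, map_smul,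
    map_add, smul_smul] at h
  refine mem_of_smul ?_ h rfl
  simp [q_ne, hα, hβ, hγ, one_add_q_ne]

theorem raise6 (hα : α ≠ 0) (hβ : β ≠ 0) (hγ : γ ≠ 0) (hV : Stab1 α β γ V)
    (hf : bs f ∈ V) : bs (Function.update f 6 (f 6 + 1)) ∈ V := by
  have h := hV 3 _ hf
  simp only [row1, row2, row3] at h
  simp only [Lm, P1_e, P2_e, P3_e, atp_zero, atp_smul, atp_mul, mul_zero, smul_zero, zero_add, add_zero,
    LinearMap.smul_apply, LinearMap.add_apply, Module.End.mul_apply, bK2, bkk, bAp, bap, map_smul,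
    map_add, smul_smul] at h
  refine mem_of_smul ?_ h rfl
  simp [q_ne, hα, hβ, hγ, one_add_q_ne]

theorem raise5 (hα : α ≠ 0) (hβ : β ≠ 0) (hγ : γ ≠ 0) (hV : Stab1 α β γ V)
    (hf : bs f ∈ V) (h0 : f 7 = 0) : bs (Function.update f 5 (f 5 + 1)) ∈ V := by
  have h := hV 4 _ hf
  simp only [row1, row2, row3] at h
  simp only [Lm, P1_e, P2_e, P3_e, atp_zero, atp_smul, atp_mul, mul_zero, smul_zero, zero_add, add_zero,
    LinearMap.smul_apply, LinearMap.add_apply, Module.End.mul_apply, bK2, bkk, bAp, bap, map_smul,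
    map_add, smul_smul] at h
  rw [bAm 7 _ (by simp [Function.update_apply, h0])] at h
  simp only [smul_zero, zero_add] at h
  refine mem_of_smul ?_ h rfl
  simp [q_ne, hα, hβ, hγ, one_add_q_ne]

theorem raise4 (hα : α ≠ 0) (hβ : β ≠ 0) (hγ : γ ≠ 0) (hV : Stab1 α β γ V)
    (hf : bs f ∈ V) (h0 : f 8 = 0) : bs (Function.update f 4 (f 4 + 1)) ∈ V := by
  have h := hV 5 _ hf
  simp only [row1, row2, row3] at h
  simp only [Lm, P1_e, P2_e, P3_e, atp_zero, atp_smul, atp_mul, mul_zero, smul_zero, zero_add, add_zero,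
    LinearMap.smul_apply, LinearMap.add_apply, Module.End.mul_apply, bK2, bkk, bAp, bap, map_smul,
    map_add, smul_smul] at h
  rw [bAm 8 _ (by simp [Function.update_apply, h0])] at h
  rw [bAm 8 _ (by simp [Function.update_apply, h0])] at h
  simp only [smul_zero, zero_add] at h
  refine mem_of_smul ?_ h rfl
  simp [q_ne, hα, hβ, hγ, one_add_q_ne]

theorem raise3 (hα : α ≠ 0) (hβ : β ≠ 0) (hγ : γ ≠ 0) (hV : Stab2 α β γ V)
    (hf : bs f ∈ V) : bs (Function.update f 3 (f 3 + 1)) ∈ V := by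
  have h := hV 2 _ hf
  simp only [row1, row2, row3] at h
  simp only [Lm, P1_e, P2_e, P3_e, atp_zero, atp_smul, atp_mul, mul_zero, smul_zero, zero_add, add_zero,
    LinearMap.smul_apply, LinearMap.add_apply, Module.End.mul_apply, bK2, bkk, bAp, bap, map_smul,
    map_add, smul_smul] at h
  refine mem_of_smul ?_ h rfl
  simp [q_ne, hα, hβ, hγ, one_add_q_ne]

theorem raise2 (hα : α ≠ 0) (hβ : β ≠ 0) (hγ : γ ≠ 0) (hV : Stab2 α β γ V)
    (hf : bs f ∈ V) : bs (Function.update f 2 (f 2 + 1)) ∈ V := by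
  have h := hV 3 _ hf
  simp only [row1, row2, row3] at h
  simp only [Lm, P1_e, P2_e, P3_e, atp_zero, atp_smul, atp_mul, mul_zero, smul_zero, zero_add, add_zero,
    LinearMap.smul_apply, LinearMap.add_apply, Module.End.mul_apply, bK2, bkk, bAp, bap, map_smul,
    map_add, smul_smul] at h
  refine mem_of_smul ?_ h rfl
  simp [q_ne, hα, hβ, hγ, one_add_q_ne]

theorem raise1 (hα : α ≠ 0) (hβ : β ≠ 0) (hγ : γ ≠ 0) (hV : Stab2 α β γ V)
    (hf : bs f ∈ V) (h0 : f 3 = 0) : bs (Function.update f 1 (f 1 + 1)) ∈ V := by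
  have h := hV 4 _ hf
  simp only [row1, row2, row3] at h
  simp only [Lm, P1_e, P2_e, P3_e, atp_zero, atp_smul, atp_mul, mul_zero, smul_zero, zero_add, add_zero,
    LinearMap.smul_apply, LinearMap.add_apply, Module.End.mul_apply, bK2, bkk, bAp, bap, map_smul,
    map_add, smul_smul] at h
  rw [bAm 3 _ (by simp [Function.update_apply, h0])] at h
  simp only [smul_zero, zero_add] at h
  refine mem_of_smul ?_ h rfl
  simp [q_ne, hα, hβ, hγ, one_add_q_ne]

theorem raise0 (hγ : γ ≠ 0) (hV : ∀ i j, ∀ v ∈ V, (Lm 0 (P3 γ) : MM 9) i j v ∈ V)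
    (hf : bs f ∈ V) : bs (Function.update f 0 (f 0 + 1)) ∈ V := by
  have h := hV 3 4 _ hf
  simp only [Lm, P1_e, P2_e, P3_e, atp_zero, atp_smul, atp_mul, mul_zero, smul_zero, zero_add, add_zero,
    LinearMap.smul_apply, LinearMap.add_apply, Module.End.mul_apply, bK2, bkk, bAp, bap, map_smul,
    map_add, smul_smul] at h
  refine mem_of_smul ?_ h rfl
  simp [q_ne, hγ, one_add_q_ne]

/-- iterate a raising step -/
theorem raise_iter (p : Fin 9) (P : (Fin 9 → ℕ) → Prop)
    (hP : ∀ f, P f → ∀ k, P (Function.update f p k))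
    (step : ∀ f, P f → bs f ∈ V → bs (Function.update f p (f p + 1)) ∈ V)
    (hPf : P f) (hf : bs (Function.update f p 0) ∈ V) : bs f ∈ V := by
  have : ∀ k, bs (Function.update f p k) ∈ V := by
    intro k
    induction k with
    | zero => exact hf
    | succ k ih =>
      have := step _ (hP f hPf k) ih
      simpa using this
  have := this (f p)
  rwa [Function.update_eq_self] at this

theorem fill1 (hα : α ≠ 0) (hβ : β ≠ 0) (hγ : γ ≠ 0) (hV : Stab1 α β γ V) (h0 : bs 0 ∈ V)
    (hf : ∀ p, ¬ (4 ≤ p) → f p = 0) : bs f ∈ V := by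
  refine raise_iter 8 (fun _ => True) (fun _ _ _ => trivial)
    (fun g _ hg => raise8 hα hβ hγ hV hg) trivial ?_
  refine raise_iter 7 (fun _ => True) (fun _ _ _ => trivial)
    (fun g _ hg => raise7 hα hβ hγ hV hg) trivial ?_
  refine raise_iter 6 (fun _ => True) (fun _ _ _ => trivial)
    (fun g _ hg => raise6 hα hβ hγ hV hg) trivial ?_
  refine raise_iter 5 (fun g => g 7 = 0) (fun g hg k => by simpa [Function.update_apply] using hg)
    (fun g hg' hg => raise5 hα hβ hγ hV hg hg') (by simp [Function.update_apply]) ?_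
  refine raise_iter 4 (fun g => g 8 = 0) (fun g hg k => by simpa [Function.update_apply] using hg)
    (fun g hg' hg => raise4 hα hβ hγ hV hg hg') (by simp [Function.update_apply]) ?_
  convert h0 using 2
  funext p
  have := hf p
  fin_cases p <;> simp [Function.update_apply] at this ⊢ <;> exact this

theorem fill2 (hα : α ≠ 0) (hβ : β ≠ 0) (hγ : γ ≠ 0) (hV : Stab2 α β γ V)
    (h0 : ∀ g : Fin 9 → ℕ, (∀ p, ¬ (4 ≤ p) → g p = 0) → bs g ∈ V)
    (hf : f 0 = 0) : bs f ∈ V := by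
  refine raise_iter 3 (fun _ => True) (fun _ _ _ => trivial)
    (fun g _ hg => raise3 hα hβ hγ hV hg) trivial ?_
  refine raise_iter 2 (fun _ => True) (fun _ _ _ => trivial)
    (fun g _ hg => raise2 hα hβ hγ hV hg) trivial ?_
  refine raise_iter 1 (fun g => g 3 = 0) (fun g hg k => by simpa [Function.update_apply] using hg)
    (fun g hg' hg => raise1 hα hβ hγ hV hg hg') (by simp [Function.update_apply]) ?_
  apply h0
  intro p hp
  fin_cases p <;> simp [Function.update_apply] at hp ⊢ <;> exact hf

theorem fill3 (hγ : γ ≠ 0) (hV : ∀ i j, ∀ v ∈ V, (Lm 0 (P3 γ) : MM 9) i j v ∈ V)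
    (h0 : ∀ g : Fin 9 → ℕ, g 0 = 0 → bs g ∈ V) : bs f ∈ V := by
  refine raise_iter 0 (fun _ => True) (fun _ _ _ => trivial)
    (fun g _ hg => raise0 hγ hV hg) trivial ?_
  apply h0
  simp

end raising

set_option linter.unusedVariables false
set_option linter.unusedSimpArgs false

theorem col_mul {n : ℕ} {A B : MM n} {j : Fin 7} (hB : ∀ i, B i j = if i = j then 1 else 0) (i : Fin 7) :
    (A * B) i j = A i j := by
  rw [Matrix.mul_apply]
  simp [hB]

theorem col2_6 {n : ℕ} (p : Fin n) (α β : Fq) : ∀ i, Lm p (P2 α β) i 6 = if i = 6 then 1 else 0 := by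
  refine forall7 ?_ ?_ ?_ ?_ ?_ ?_ ?_ <;> simp [Lm, P2_e, atp_zero, atp_one]

theorem col3_6 {n : ℕ} (p : Fin n) (γ : Fq) : ∀ i, Lm p (P3 γ) i 6 = if i = 6 then 1 else 0 := by
  refine forall7 ?_ ?_ ?_ ?_ ?_ ?_ ?_ <;> simp [Lm, P3_e, atp_zero, atp_one]

theorem col3_5 {n : ℕ} (p : Fin n) (γ : Fq) : ∀ i, Lm p (P3 γ) i 5 = if i = 5 then 1 else 0 := by
  refine forall7 ?_ ?_ ?_ ?_ ?_ ?_ ?_ <;> simp [Lm, P3_e, atp_zero, atp_one]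

theorem assoc9 {R : Type*} [Monoid R] (a b c d e f g h i : R) :
    a * (b * (c * (d * (e * (f * (g * (h * (i * 1)))))))) =
      (a * (b * (c * (d * e)))) * ((f * (g * h)) * i) := by
  simp only [mul_assoc, mul_one]

theorem cyclic {α β γ : Fq} (hα : α ≠ 0) (hβ : β ≠ 0) (hγ : γ ≠ 0) (h : α * β = -q ^ 2)
    {V : Submodule Fq (WW 9)}
    (hV1 : ∀ i j, ∀ v ∈ V, ((Lm 8 (P1 α β) * (Lm 7 (P2 α β) * (Lm 6 (P3 γ) * (Lm 5 (P2 α β) *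
      Lm 4 (P1 α β))))) * ((Lm 3 (P2 α β) * (Lm 2 (P3 γ) * Lm 1 (P2 α β))) *
      Lm 0 (P3 γ)) : MM 9) i j v ∈ V)
    (h0 : bs 0 ∈ V) (f : Fin 9 → ℕ) : bs f ∈ V := by
  obtain ⟨M1, hM1⟩ : ∃ M : MM 9, M = Lm 8 (P1 α β) * (Lm 7 (P2 α β) * (Lm 6 (P3 γ) *
    (Lm 5 (P2 α β) * Lm 4 (P1 α β)))) := ⟨_, rfl⟩
  obtain ⟨M2, hM2⟩ : ∃ M : MM 9, M = Lm 3 (P2 α β) * (Lm 2 (P3 γ) * Lm 1 (P2 α β)) := ⟨_, rfl⟩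
  rw [← hM1, ← hM2] at hV1
  have hP1 := orth_P1 hα h
  have hP2 := orth_P2 hα h
  have hP3 := orth_P3 hγ
  have o1 : Orth M1 := by
    rw [hM1]
    refine orth_mul_AP (P := fun p => p = 8) (Q := fun p => p < 8) (orth_Lm _ hP1) ?_
      (by decide) (AP_Lm _ (by decide)) (AP_mul (AP_Lm _ (by decide)) (AP_mul (AP_Lm _ (by decide))
        (AP_mul (AP_Lm _ (by decide)) (AP_Lm _ (by decide)))))
    refine orth_mul_AP (P := fun p => p = 7) (Q := fun p => p < 7) (orth_Lm _ hP2) ?_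
      (by decide) (AP_Lm _ (by decide)) (AP_mul (AP_Lm _ (by decide))
        (AP_mul (AP_Lm _ (by decide)) (AP_Lm _ (by decide))))
    refine orth_mul_AP (P := fun p => p = 6) (Q := fun p => p < 6) (orth_Lm _ hP3) ?_
      (by decide) (AP_Lm _ (by decide)) (AP_mul (AP_Lm _ (by decide)) (AP_Lm _ (by decide)))
    exact orth_mul_AP (P := fun p => p = 5) (Q := fun p => p < 5) (orth_Lm _ hP2) (orth_Lm _ hP1)
      (by decide) (AP_Lm _ (by decide)) (AP_Lm _ (by decide))
  have o2 : Orth M2 := by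
    rw [hM2]
    refine orth_mul_AP (P := fun p => p = 3) (Q := fun p => p < 3) (orth_Lm _ hP2) ?_
      (by decide) (AP_Lm _ (by decide)) (AP_mul (AP_Lm _ (by decide)) (AP_Lm _ (by decide)))
    exact orth_mul_AP (P := fun p => p = 2) (Q := fun p => p < 2) (orth_Lm _ hP3) (orth_Lm _ hP2)
      (by decide) (AP_Lm _ (by decide)) (AP_Lm _ (by decide))
  have i1 : InAP (fun p => 4 ≤ p) M1 := hM1 ▸
    AP_mul (AP_Lm _ (by decide)) (AP_mul (AP_Lm _ (by decide)) (AP_mul (AP_Lm _ (by decide))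
      (AP_mul (AP_Lm _ (by decide)) (AP_Lm _ (by decide)))))
  have i2 : InAP (fun p => p < 4) (M2 * Lm 0 (P3 γ)) := hM2 ▸
    AP_mul (AP_mul (AP_Lm _ (by decide)) (AP_mul (AP_Lm _ (by decide)) (AP_Lm _ (by decide))))
        (AP_Lm _ (by decide))
  have i3 : InAP (fun p => p ≠ 0) M2 := hM2 ▸
    AP_mul (AP_Lm _ (by decide)) (AP_mul (AP_Lm _ (by decide)) (AP_Lm _ (by decide)))
  have i4 : InAP (fun p => p = 0) (Lm (0 : Fin 9) (P3 γ)) := AP_Lm _ rfl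
  have s1 : Stab1 α β γ V := by
    intro i v hv
    have h1 := hV1 i 6 v hv
    have h2 : (M1 * (M2 * Lm 0 (P3 γ)) : MM 9) i 6 = M1 i 6 := by
      apply col_mul
      intro k
      rw [col_mul (col3_6 _ _), hM2, ← mul_assoc, col_mul (col2_6 _ _ _), col_mul (col3_6 _ _),
        col2_6]
    rw [h2] at h1
    rw [← hM1]
    exact h1
  obtain ⟨W, hWV, hW, hUW⟩ := peel V (UQ fun p => 4 ≤ p) M1 (M2 * Lm 0 (P3 γ)) (AP fun p => 4 ≤ p)
    i1 (fun x hx i j => AP_comm (Q := fun p => p < 4) (by decide) hx (i2 i j)) o1 hV1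
    (by
      refine Submodule.span_le.mpr ?_
      rintro _ ⟨g, hg, rfl⟩
      exact fill1 hα hβ hγ s1 h0 hg)
    (fun x hx u hu => UQ_AP (fun _ hp => hp) hx u hu)
  have s2 : Stab2 α β γ W := by
    intro i v hv
    have h1 := hW i 5 v hv
    rw [col_mul (col3_5 _ _)] at h1
    rw [← hM2]
    exact h1
  have f2 : ∀ g : Fin 9 → ℕ, g 0 = 0 → bs g ∈ W := fun g hg =>
    fill2 hα hβ hγ s2 (fun g' hg' => hUW (Submodule.subset_span ⟨g', hg', rfl⟩)) hg
  obtain ⟨W', hWW, hW', hUW'⟩ := peel W (UQ fun p => p ≠ 0) M2 (Lm 0 (P3 γ))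
    (AP fun p => p ≠ 0)
    i3 (fun x hx i j => AP_comm (Q := fun p => p = 0) (by decide) hx (i4 i j)) o2 hW
    (by
      refine Submodule.span_le.mpr ?_
      rintro _ ⟨g, hg, rfl⟩
      exact f2 g (hg 0 (by decide)))
    (fun x hx u hu => UQ_AP (fun _ hp => hp) hx u hu)
  refine hWV (hWW (fill3 hγ hW' (fun g hg => hUW' (Submodule.subset_span ⟨g, ?_, rfl⟩))))
  intro p hp
  rw [not_not] at hp
  rw [hp, hg]

theorem Intw.assoc {n : ℕ} {X : Module.End Fq (WW n)} {A a b c d e f g h i : MM n}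
    (H : Intw X A (a * (b * (c * (d * (e * (f * (g * (h * (i * 1)))))))))) :
    Intw X A ((a * (b * (c * (d * e)))) * ((f * (g * h)) * i)) := by
  rw [← assoc9 a b c d e f g h i]
  exact H

theorem eqLocus_stab {n : ℕ} {X Y : Module.End Fq (WW n)} {A B : MM n} (hX : Intw X A B)
    (hY : Intw Y A B) (i j : Fin 7) (v : WW n) (hv : v ∈ LinearMap.eqLocus X Y) :
    B i j v ∈ LinearMap.eqLocus X Y := by
  have h1 := LinearMap.congr_fun (hX i j) v
  have h2 := LinearMap.congr_fun (hY i j) v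
  have h3 : X v = Y v := hv
  rw [Module.End.mul_apply, Module.End.mul_apply] at h1 h2
  rw [h3, h2] at h1
  exact h1.symm

theorem eq_of_intw {α β γ : Fq} (hα : α ≠ 0) (hβ : β ≠ 0) (hγ : γ ≠ 0) (h : α * β = -q ^ 2)
    {X Y : Module.End Fq (WW 9)} {A : MM 9}
    (hX : Intw X A (Lm 8 (P1 α β) * (Lm 7 (P2 α β) * (Lm 6 (P3 γ) * (Lm 5 (P2 α β) *
      (Lm 4 (P1 α β) * (Lm 3 (P2 α β) * (Lm 2 (P3 γ) * (Lm 1 (P2 α β) *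
      (Lm 0 (P3 γ) * 1))))))))))
    (hY : Intw Y A (Lm 8 (P1 α β) * (Lm 7 (P2 α β) * (Lm 6 (P3 γ) * (Lm 5 (P2 α β) *
      (Lm 4 (P1 α β) * (Lm 3 (P2 α β) * (Lm 2 (P3 γ) * (Lm 1 (P2 α β) *
      (Lm 0 (P3 γ) * 1))))))))))
    (hv : X (bs 0) = Y (bs 0)) : X = Y := by
  apply ext_bs
  intro f
  have := cyclic hα hβ hγ h (V := LinearMap.eqLocus X Y) ?_ hv f
  · exact this
  · exact eqLocus_stab hX.assoc hY.assoc

theorem main_aux {α₂ β₂ α₃ : Fq} (hα₂ : α₂ ≠ 0) (hβ₂ : β₂ ≠ 0) (hαβ : α₂ * β₂ = -q ^ 2)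
    (hα₃ : α₃ ≠ 0) {Ξ} (hΞ : IsNormalizedIntertwiner α₂ β₂ α₃ Ξ) :
    let S := fun p1 p2 p3 : Fin 9 => (Op ![p1, p2, p3] S3 : Module.End Fq (WW 9))
    let J := fun p1 p2 p3 p4 : Fin 9 => (Op ![p1, p2, p3, p4] (J4 Ξ) : Module.End Fq (WW 9))
    S 3 4 5 * S 3 7 8 * J 2 4 6 8 * S 1 5 8 * S 1 4 7 * J 0 5 6 7 * J 0 1 2 3
      = J 0 1 2 3 * J 0 5 6 7 * S 1 4 7 * S 1 5 8 * J 2 4 6 8 * S 3 7 8 * S 3 4 5 := by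
  intro S J
  have hac := fun (p r : Fin 9) (h : p ≠ r) => Lm_P1_P3_comm α₂ β₂ α₃ p r h
  have hS : ∀ p1 p2 p3 : Fin 9, [p1, p2, p3].Nodup → _ :=
    fun p1 p2 p3 hn => isS_of (γ := α₃) hα₂ hβ₂ hαβ hn
  have hJ : ∀ p1 p2 p3 p4 : Fin 9, [p1, p2, p3, p4].Nodup → _ :=
    fun p1 p2 p3 p4 hn => isJ_of hΞ hn
  have hL := chainL hac (hS 3 4 5 (by decide)) (hS 3 7 8 (by decide)) (hJ 2 4 6 8 (by decide))
    (hS 1 5 8 (by decide)) (hS 1 4 7 (by decide)) (hJ 0 5 6 7 (by decide)) (hJ 0 1 2 3 (by decide))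
  have hR := chainR hac (hS 3 4 5 (by decide)) (hS 3 7 8 (by decide)) (hJ 2 4 6 8 (by decide))
    (hS 1 5 8 (by decide)) (hS 1 4 7 (by decide)) (hJ 0 5 6 7 (by decide)) (hJ 0 1 2 3 (by decide))
  have vS : ∀ p1 p2 p3, S p1 p2 p3 (bs 0) = bs 0 := fun p1 p2 p3 => Op_vac _ _ S3_vac
  have vJ : ∀ p1 p2 p3 p4, J p1 p2 p3 p4 (bs 0) = bs 0 :=
    fun p1 p2 p3 p4 => Op_vac _ _ (J4_vac' hΞ)
  refine eq_of_intw hα₂ hβ₂ hα₃ hαβ hL hR ?_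
  simp only [Module.End.mul_apply, vS, vJ]

theorem final {α₂ β₂ α₃ : Fq} (hα₂ : α₂ ≠ 0) (hβ₂ : β₂ ≠ 0) (hαβ : α₂ * β₂ = -q ^ 2)
    (hα₃ : α₃ ≠ 0) {Ξ} (hΞ : IsNormalizedIntertwiner α₂ β₂ α₃ Ξ)
    {Jc : ℕ → ℕ → ℕ → ℕ → ℕ → ℕ → ℕ → ℕ → Fq}
    (hJ : ∀ i j k l : ℕ,
      Ξ (ket l ⊗ₜ[Fq] (ket k ⊗ₜ[Fq] (ket j ⊗ₜ[Fq] ket i)))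
        = ∑ᶠ a : ℕ, ∑ᶠ b : ℕ, ∑ᶠ c : ℕ, ∑ᶠ d : ℕ,
          Jc a b c d i j k l • (ket a ⊗ₜ[Fq] (ket b ⊗ₜ[Fq] (ket c ⊗ₜ[Fq] ket d)))) :
    S9 3 4 5 ∘ₗ S9 3 7 8 ∘ₗ J9 Jc 2 4 6 8 ∘ₗ S9 1 5 8 ∘ₗ S9 1 4 7 ∘ₗ J9 Jc 0 5 6 7 ∘ₗ
        J9 Jc 0 1 2 3
      = J9 Jc 0 1 2 3 ∘ₗ J9 Jc 0 5 6 7 ∘ₗ S9 1 4 7 ∘ₗ S9 1 5 8 ∘ₗ J9 Jc 2 4 6 8 ∘ₗ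
        S9 3 7 8 ∘ₗ S9 3 4 5 := by
  have h := main_aux hα₂ hβ₂ hαβ hα₃ hΞ
  simp only [mul_assoc] at h
  rw [S9_eq (by decide), S9_eq (by decide), S9_eq (by decide), S9_eq (by decide),
    J9_eq hJ (by decide), J9_eq hJ (by decide), J9_eq hJ (by decide)]
  exact h

/-- Main result: the 3D reflection equation
𝒮₄₅₆ 𝒮₄₈₉ 𝒥₃₅₇₉ 𝒮₂₆₉ 𝒮₂₅₈ 𝒥₁₆₇₈ 𝒥₁₂₃₄ = 𝒥₁₂₃₄ 𝒥₁₆₇₈ 𝒮₂₅₈ 𝒮₂₆₉ 𝒥₃₅₇₉ 𝒮₄₈₉ 𝒮₄₅₆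
on F^{⊗9} (positions written 0-based). -/
theorem threeD_reflection_equation
    (α₂ β₂ α₃ : Fq) (hα₂ : α₂ ≠ 0) (hβ₂ : β₂ ≠ 0) (hαβ : α₂ * β₂ = -q ^ 2) (hα₃ : α₃ ≠ 0)
    (Ξ : F ⊗[Fq] (F ⊗[Fq] (F ⊗[Fq] F)) →ₗ[Fq] F ⊗[Fq] (F ⊗[Fq] (F ⊗[Fq] F)))
    (hΞ : IsNormalizedIntertwiner α₂ β₂ α₃ Ξ)
    (Jc : ℕ → ℕ → ℕ → ℕ → ℕ → ℕ → ℕ → ℕ → Fq)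
    (hJ : ∀ i j k l : ℕ,
      Ξ (ket l ⊗ₜ[Fq] (ket k ⊗ₜ[Fq] (ket j ⊗ₜ[Fq] ket i)))
        = ∑ᶠ a : ℕ, ∑ᶠ b : ℕ, ∑ᶠ c : ℕ, ∑ᶠ d : ℕ,
            Jc a b c d i j k l • (ket a ⊗ₜ[Fq] (ket b ⊗ₜ[Fq] (ket c ⊗ₜ[Fq] ket d)))) :
    S9 3 4 5 ∘ₗ S9 3 7 8 ∘ₗ J9 Jc 2 4 6 8 ∘ₗ S9 1 5 8 ∘ₗ S9 1 4 7 ∘ₗ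
        J9 Jc 0 5 6 7 ∘ₗ J9 Jc 0 1 2 3
      = J9 Jc 0 1 2 3 ∘ₗ J9 Jc 0 5 6 7 ∘ₗ S9 1 4 7 ∘ₗ S9 1 5 8 ∘ₗ
          J9 Jc 2 4 6 8 ∘ₗ S9 3 7 8 ∘ₗ S9 3 4 5 := by
  exact final hα₂ hβ₂ hαβ hα₃ hΞ hJ
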